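/- arXiv:1608.04183 — 2 statements merged into one kernel-verified Lean document; each statement's English description precedes it below -/
import Mathlib

section
/- Fix an algebraic closure Ω of the field ℚ_2 of 2-adic numbers. The set of ℚ_2-isomorphism classes of primitive extensions E ⊆ Ω of ℚ_2 with [E : ℚ_2] = 4 has exactly four elements. -/
/-!
In characteristic zero a primitive quartic extension `L` of `K` is generated by a root `t` of some
`X⁴ + pX² + qX + r` whose cubic resolvent is irreducible. A root `z = (t + t')²` of this resolvent
has norm `q²` and is not a square in the cubic field `M = K(z)`; conversely every nonsquare `z ∈ M`
with `K(z) = M` and square norm arises in this way. Two extensions with resolvent roots `z` and `z'`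
are isomorphic exactly when `z'` is, after conjugation, a square multiple of `z` in `M`. Thus the
isomorphism classes correspond to the orbits of the nontrivial square classes of square norm in the
cubic extensions of `K`.

Over `ℚ_2`, Cardano-type substitutions and Hensel's lemma show that a cubic extension is generated
either by a cube root of `2` or by a root of `X³ - 3X + 1`. Units of their rings of integers that
agree modulo `8` have the same square class, so a computation modulo `8` finds three nontrivial
square classes of square norm in each field. The field of `∛2` has no automorphism and yields three
extensions; the automorphisms of the cyclic field permute its three classes and leave a single
extension.
-/

namespace PrimitiveQuartic

open IntermediateField Module Polynomial

section SimpleExtension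

variable {K Ω : Type*} [Field K] [Field Ω] [Algebra K Ω]

theorem isIntegral_of_natDegree_minpoly_ne_zero {t : Ω} (h : (minpoly K t).natDegree ≠ 0) :
    IsIntegral K t :=
  minpoly.ne_zero_iff.1 fun h₀ => h (by rw [h₀, natDegree_zero])

theorem exists_aeval_eq_of_mem_adjoin {t x : Ω} (ht : IsIntegral K t) (hx : x ∈ K⟮t⟯) :
    ∃ f : K[X], f.natDegree < (minpoly K t).natDegree ∧ aeval t f = x := by
  obtain ⟨f, rfl⟩ : ∃ f : K[X], aeval t f = x := by
    rwa [← mem_toSubalgebra, adjoin_simple_toSubalgebra_of_isAlgebraic ht.isAlgebraic,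
      Algebra.adjoin_singleton_eq_range_aeval] at hx
  exact ⟨f %ₘ minpoly K t,
    natDegree_modByMonic_lt _ (minpoly.monic ht) (minpoly.ne_one K t),
    aeval_modByMonic_eq_self_of_root (minpoly.aeval K t)⟩

theorem finrank_dvd_finrank_of_le {F L : IntermediateField K Ω} (h : F ≤ L) :
    finrank K F ∣ finrank K L :=
  ⟨_, (finrank_bot_mul_relfinrank h).symm⟩

theorem isAtom_of_finrank_prime {L : IntermediateField K Ω} (h : (finrank K L).Prime) :
    IsAtom L := by
  have : FiniteDimensional K L := finite_of_finrank_pos h.pos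
  refine ⟨fun hL => h.ne_one (finrank_eq_one_iff.2 hL), fun F hF => ?_⟩
  refine finrank_eq_one_iff.1 (((Nat.dvd_prime h).1 (finrank_dvd_finrank_of_le hF.le)).resolve_right
    fun h' => hF.ne (eq_of_le_of_finrank_eq hF.le h'))

theorem adjoin_simple_eq_of_isAtom {L : IntermediateField K Ω} (hL : IsAtom L) {x : Ω}
    (hx : x ∈ L) (hx' : x ∉ (⊥ : IntermediateField K Ω)) : K⟮x⟯ = L :=
  (hL.le_iff.1 (adjoin_simple_le_iff.2 hx)).resolve_left
    fun h => hx' (adjoin_simple_eq_bot_iff.1 h)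

theorem natDegree_minpoly_of_le_adjoin {F : IntermediateField K Ω} {t : Ω}
    (ht : IsIntegral K t) (hF : F ≤ K⟮t⟯) : (minpoly F t).natDegree = F.relfinrank K⟮t⟯ := by
  rw [relfinrank_eq_finrank_of_le hF, extendScalars_adjoin hF, adjoin.finrank ht.tower_top]

theorem exists_aroots_eq_pair [IsAlgClosed Ω] {g : K[X]} (hg : g.Monic) (hg₂ : g.natDegree = 2)
    {t : Ω} (ht : aeval t g = 0) :
    ∃ t', g.aroots Ω = {t, t'} ∧ t + t' = algebraMap K Ω (-g.coeff 1) := by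
  obtain ⟨u, hu⟩ := Multiset.exists_cons_of_mem ((mem_aroots.2 ⟨hg.ne_zero, ht⟩))
  have hcard : (g.aroots Ω).card = 2 := by rw [IsAlgClosed.card_aroots_eq_natDegree, hg₂]
  obtain ⟨t', rfl⟩ := Multiset.card_eq_one.1 (by simpa [hu] using hcard : u.card = 1)
  have hsplit : (g.map (algebraMap K Ω)).Splits := IsAlgClosed.splits _
  have hsum := hsplit.nextCoeff_eq_neg_sum_roots_of_monic (hg.map _)
  rw [← aroots_def, hu, nextCoeff_of_natDegree_pos (by simp [hg₂]), natDegree_map, hg₂,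
    coeff_map] at hsum
  simp only [Multiset.sum_cons, Multiset.sum_singleton, Nat.add_one_sub_one] at hsum
  exact ⟨t', hu, by rw [map_neg, hsum, neg_neg]⟩

theorem exists_add_mem_of_relfinrank_eq_two [IsAlgClosed Ω] {F : IntermediateField K Ω} {t : Ω}
    (ht : IsIntegral K t) (hF : F ≤ K⟮t⟯) (h₂ : F.relfinrank K⟮t⟯ = 2) :
    ∃ t', {t, t'} ≤ (minpoly K t).aroots Ω ∧ t + t' ∈ F := by
  obtain ⟨t', hroots, hsum⟩ := exists_aroots_eq_pair (minpoly.monic ht.tower_top)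
    (natDegree_minpoly_of_le_adjoin ht hF ▸ h₂) (minpoly.aeval F t)
  refine ⟨t', ?_, hsum ▸ SetLike.coe_mem (-(minpoly F t).coeff 1)⟩
  have hdvd : (minpoly F t).map (algebraMap F Ω) ∣ (minpoly K t).map (algebraMap K Ω) := by
    rw [IsScalarTower.algebraMap_eq K F Ω, ← Polynomial.map_map]
    exact Polynomial.map_dvd _ (minpoly.dvd_map_of_isScalarTower K F t)
  exact hroots ▸ roots.le_of_dvd ((minpoly.monic ht).map _).ne_zero hdvd

end SimpleExtension

/-! ### Resolvent roots of primitive quartic extensions -/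

section Quartic

variable {K : Type*} [Field K]

/-- The depressed quartic `X⁴ + pX² + qX + r`; in characteristic zero every quartic extension is
generated by a root of one of these. -/
noncomputable def depressedQuartic (p q r : K) : K[X] :=
  X ^ 4 + C p * X ^ 2 + C q * X + C r

/-- The cubic resolvent of `depressedQuartic p q r` whose roots are the squares
`(tᵢ + tⱼ)²` of the sums of two distinct roots of the quartic. -/
noncomputable def resolventCubic (p q r : K) : K[X] :=
  X ^ 3 + C (2 * p) * X ^ 2 + C (p ^ 2 - 4 * r) * X - C (q ^ 2)

theorem natDegree_depressedQuartic (p q r : K) : (depressedQuartic p q r).natDegree = 4 := by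
  unfold depressedQuartic; compute_degree!

theorem monic_depressedQuartic (p q r : K) : (depressedQuartic p q r).Monic := by
  unfold depressedQuartic; monicity!

theorem natDegree_resolventCubic (p q r : K) : (resolventCubic p q r).natDegree = 3 := by
  unfold resolventCubic; compute_degree!

theorem monic_resolventCubic (p q r : K) : (resolventCubic p q r).Monic := by
  unfold resolventCubic; monicity!

theorem resolventCubic_inj [CharZero K] {p q r p' q' r' : K}
    (h : resolventCubic p q r = resolventCubic p' q' r') : p = p' ∧ q ^ 2 = q' ^ 2 ∧ r = r' := by
  have hcoeff (n : ℕ) := congrArg (coeff · n) h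
  have h₂ := hcoeff 2
  have h₁ := hcoeff 1
  have h₀ := hcoeff 0
  simp only [resolventCubic, coeff_add, coeff_sub, coeff_C_mul, coeff_X_pow, coeff_X, coeff_C]
    at h₀ h₁ h₂
  norm_num at h₀ h₁ h₂
  obtain rfl := h₂
  exact ⟨rfl, h₀, by simpa using h₁⟩

variable {Ω : Type*} [Field Ω] [Algebra K Ω]

theorem aeval_depressedQuartic (p q r : K) (t : Ω) :
    aeval t (depressedQuartic p q r) =
      t ^ 4 + algebraMap K Ω p * t ^ 2 + algebraMap K Ω q * t + algebraMap K Ω r := by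
  simp [depressedQuartic]

theorem aeval_resolventCubic (p q r : K) (z : Ω) :
    aeval z (resolventCubic p q r) =
      z ^ 3 + 2 * algebraMap K Ω p * z ^ 2
        + (algebraMap K Ω p ^ 2 - 4 * algebraMap K Ω r) * z - algebraMap K Ω q ^ 2 := by
  simp [resolventCubic, map_ofNat]

theorem minpoly_of_aeval_depressedQuartic {p q r : K} {t : Ω}
    (hf : Irreducible (depressedQuartic p q r)) (ht : aeval t (depressedQuartic p q r) = 0) :
    minpoly K t = depressedQuartic p q r :=
  (minpoly.eq_of_irreducible_of_monic hf ht (monic_depressedQuartic p q r)).symm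

theorem depressedQuartic_vieta {p q r : K} {t₁ t₂ t₃ t₄ : Ω}
    (h : (depressedQuartic p q r).aroots Ω = {t₁, t₂, t₃, t₄}) :
    t₄ = -(t₁ + t₂ + t₃) ∧
      algebraMap K Ω p = t₁ * t₂ + t₁ * t₃ + t₂ * t₃ - (t₁ + t₂ + t₃) ^ 2 ∧
      algebraMap K Ω q = (t₁ + t₂) * (t₁ + t₃) * (t₂ + t₃) ∧
      algebraMap K Ω r = -(t₁ * t₂ * t₃ * (t₁ + t₂ + t₃)) := by
  have hprod := prod_multiset_X_sub_C_of_monic_of_roots_card_eq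
    ((monic_depressedQuartic p q r).map (algebraMap K Ω))
    (by rw [natDegree_map, natDegree_depressedQuartic]; exact congrArg Multiset.card h)
  have hexpand : X ^ 4 + C (algebraMap K Ω p) * X ^ 2 + C (algebraMap K Ω q) * X
        + C (algebraMap K Ω r)
      = X ^ 4 + C (-(t₁ + t₂ + t₃ + t₄)) * X ^ 3
        + C (t₁ * t₂ + t₁ * t₃ + t₂ * t₃ + (t₁ + t₂ + t₃) * t₄) * X ^ 2
        + C (-(t₁ * t₂ * t₃ + (t₁ * t₂ + t₁ * t₃ + t₂ * t₃) * t₄)) * X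
        + C (t₁ * t₂ * t₃ * t₄) := by
    rw [show ((depressedQuartic p q r).map (algebraMap K Ω)).roots = {t₁, t₂, t₃, t₄} from h]
      at hprod
    simp only [depressedQuartic, Polynomial.map_add, Polynomial.map_mul, Polynomial.map_pow,
      map_X, map_C, Multiset.insert_eq_cons, Multiset.map_cons, Multiset.map_singleton,
      Multiset.prod_cons, Multiset.prod_singleton] at hprod
    rw [← hprod]
    simp only [C_add, C_mul, C_neg]
    ring
  have hcoeff (n : ℕ) := congrArg (coeff · n) hexpand
  have h₃ := hcoeff 3
  have h₂ := hcoeff 2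
  have h₁ := hcoeff 1
  have h₀ := hcoeff 0
  simp only [coeff_add, coeff_C_mul, coeff_X_pow, coeff_X, coeff_C] at h₀ h₁ h₂ h₃
  norm_num at h₀ h₁ h₂ h₃
  obtain rfl : t₄ = -(t₁ + t₂ + t₃) := by linear_combination h₃
  refine ⟨rfl, ?_, ?_, ?_⟩
  · linear_combination h₂
  · linear_combination h₁
  · linear_combination h₀

theorem aeval_resolventCubic_eq {p q r : K} {t₁ t₂ t₃ t₄ : Ω}
    (h : (depressedQuartic p q r).aroots Ω = {t₁, t₂, t₃, t₄}) (z : Ω) :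
    aeval z (resolventCubic p q r) =
      (z - (t₁ + t₂) ^ 2) * (z - (t₁ + t₃) ^ 2) * (z - (t₁ + t₄) ^ 2) := by
  obtain ⟨rfl, hp, hq, hr⟩ := depressedQuartic_vieta h
  rw [aeval_resolventCubic, hp, hq, hr]
  ring

theorem add_mul_eq_of_aroots {p q r : K} {t₁ t₂ t₃ t₄ : Ω}
    (h : (depressedQuartic p q r).aroots Ω = {t₁, t₂, t₃, t₄}) :
    (t₁ + t₂) * (2 * t₁ ^ 2 + algebraMap K Ω p + (t₁ + t₂) ^ 2) =
      2 * (t₁ + t₂) ^ 2 * t₁ - algebraMap K Ω q := by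
  obtain ⟨-, hp, hq, -⟩ := depressedQuartic_vieta h
  rw [hp, hq]
  ring

section Roots

variable {p q r : K} {t z : Ω}

theorem mem_aroots_depressedQuartic :
    t ∈ (depressedQuartic p q r).aroots Ω ↔ aeval t (depressedQuartic p q r) = 0 := by
  rw [mem_aroots, and_iff_right (monic_depressedQuartic p q r).ne_zero]

variable [IsAlgClosed Ω]

theorem exists_aroots_depressedQuartic_eq_of_le {t₁ t₂ : Ω}
    (h : {t₁, t₂} ≤ (depressedQuartic p q r).aroots Ω) :
    ∃ t₃ t₄, (depressedQuartic p q r).aroots Ω = {t₁, t₂, t₃, t₄} := by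
  obtain ⟨u, hu⟩ := Multiset.le_iff_exists_add.1 h
  have hcard : ((depressedQuartic p q r).aroots Ω).card = 4 := by
    rw [IsAlgClosed.card_aroots_eq_natDegree, natDegree_depressedQuartic]
  rw [hu, Multiset.card_add, Multiset.card_pair] at hcard
  obtain ⟨t₃, t₄, rfl⟩ := Multiset.card_eq_two.1 (by lia : u.card = 2)
  exact ⟨t₃, t₄, hu⟩

theorem exists_aroots_depressedQuartic_eq (ht : aeval t (depressedQuartic p q r) = 0) :
    ∃ t₂ t₃ t₄, (depressedQuartic p q r).aroots Ω = {t, t₂, t₃, t₄} := by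
  obtain ⟨u, hu⟩ := Multiset.exists_cons_of_mem (mem_aroots_depressedQuartic.2 ht)
  have hcard : ((depressedQuartic p q r).aroots Ω).card = 4 := by
    rw [IsAlgClosed.card_aroots_eq_natDegree, natDegree_depressedQuartic]
  rw [hu, Multiset.card_cons] at hcard
  obtain ⟨t₂, t₃, t₄, rfl⟩ := Multiset.card_eq_three.1 (by lia : u.card = 3)
  exact ⟨t₂, t₃, t₄, hu⟩

theorem exists_aroots_eq_of_aeval_resolventCubic (ht : aeval t (depressedQuartic p q r) = 0)
    (hz : aeval z (resolventCubic p q r) = 0) :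
    ∃ t₂ t₃ t₄, (depressedQuartic p q r).aroots Ω = {t, t₂, t₃, t₄} ∧ z = (t + t₂) ^ 2 := by
  obtain ⟨t₂, t₃, t₄, h⟩ := exists_aroots_depressedQuartic_eq ht
  simp only [aeval_resolventCubic_eq h, mul_eq_zero, sub_eq_zero] at hz
  rcases hz with (hz | hz) | hz
  · exact ⟨t₂, t₃, t₄, h, hz⟩
  · exact ⟨t₃, t₂, t₄, by rw [h]; exact congrArg (t ::ₘ ·) (Multiset.cons_swap ..), hz⟩
  · exact ⟨t₄, t₂, t₃, by rw [h]; exact congrArg (t ::ₘ ·) (Multiset.coe_eq_coe.2 <| by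
      exact (List.perm_append_comm (l₁ := [t₂, t₃]) (l₂ := [t₄]))), hz⟩

end Roots

section Primitive

variable {p q r : K} {t : Ω}

theorem mem_bot_of_isAtom_of_natDegree_lt {L : IntermediateField K Ω} (hL : IsAtom L)
    {x : Ω} (hx : x ∈ L) {g : K[X]} (hg : g ≠ 0) (hgL : g.natDegree < finrank K L)
    (hgx : aeval x g = 0) : x ∈ (⊥ : IntermediateField K Ω) := by
  by_contra hx'
  have h_int : IsIntegral K x := isAlgebraic_iff_isIntegral.1 ⟨g, hg, hgx⟩
  rw [← adjoin_simple_eq_of_isAtom hL hx hx', adjoin.finrank h_int] at hgL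
  exact hgL.not_ge (natDegree_le_of_dvd (minpoly.dvd K x hgx) hg)

theorem isIntegral_of_aeval_depressedQuartic (ht : aeval t (depressedQuartic p q r) = 0) :
    IsIntegral K t :=
  ⟨_, monic_depressedQuartic p q r, by rwa [← aeval_def]⟩

theorem finrank_adjoin_depressedQuartic (hf : Irreducible (depressedQuartic p q r))
    (ht : aeval t (depressedQuartic p q r) = 0) : finrank K K⟮t⟯ = 4 := by
  rw [adjoin.finrank (isIntegral_of_aeval_depressedQuartic ht),
    minpoly_of_aeval_depressedQuartic hf ht, natDegree_depressedQuartic]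

theorem natDegree_minpoly_of_aeval_resolventCubic {z : Ω} (hR : Irreducible (resolventCubic p q r))
    (hz : aeval z (resolventCubic p q r) = 0) : (minpoly K z).natDegree = 3 := by
  rw [← minpoly.eq_of_irreducible_of_monic hR hz (monic_resolventCubic p q r),
    natDegree_resolventCubic]

theorem isAtom_adjoin_of_irreducible_resolventCubic [IsAlgClosed Ω]
    (hf : Irreducible (depressedQuartic p q r)) (ht : aeval t (depressedQuartic p q r) = 0)
    (hR : Irreducible (resolventCubic p q r)) : IsAtom K⟮t⟯ := by
  have h_int := isIntegral_of_aeval_depressedQuartic ht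
  have h₄ := finrank_adjoin_depressedQuartic hf ht
  have : FiniteDimensional K K⟮t⟯ := adjoin.finiteDimensional h_int
  refine ⟨fun h => by simp [finrank_eq_one_iff.2 h] at h₄, fun F hF => ?_⟩
  by_contra hbot
  have hdeg := finrank_bot_mul_relfinrank hF.le
  have hF₁ : finrank K F ≠ 1 := fun h => hbot (finrank_eq_one_iff.1 h)
  have hF₄ : finrank K F ≠ 4 := fun h => hF.ne (eq_of_le_of_finrank_eq hF.le (h.trans h₄.symm))
  have hF₂ : finrank K F = 2 := by
    have := Nat.le_of_dvd (by norm_num) (Dvd.intro _ (hdeg.trans h₄))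
    interval_cases finrank K F <;> lia
  obtain ⟨t', hle, hsum⟩ := exists_add_mem_of_relfinrank_eq_two h_int hF.le (by lia)
  rw [minpoly_of_aeval_depressedQuartic hf ht] at hle
  obtain ⟨t₃, t₄, h⟩ := exists_aroots_depressedQuartic_eq_of_le hle
  -- The square of `t + t'` is a root of the resolvent in the quadratic field `F`.
  have hz : aeval ((t + t') ^ 2) (resolventCubic p q r) = 0 := by
    simp [aeval_resolventCubic_eq h]
  have h₃ := natDegree_minpoly_of_aeval_resolventCubic hR hz
  have := finrank_dvd_finrank_of_le (adjoin_simple_le_iff.2 (pow_mem hsum 2))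
  rw [adjoin.finrank (isIntegral_of_natDegree_minpoly_ne_zero (by lia)), h₃] at this
  lia

theorem quadratic_ne_zero (hf : Irreducible (depressedQuartic p q r))
    (ht : aeval t (depressedQuartic p q r) = 0) {a : K} (ha : a ≠ 0) (b c : K) :
    algebraMap K Ω a * t ^ 2 + algebraMap K Ω b * t + algebraMap K Ω c ≠ 0 := fun h => by
  have hdvd := minpoly.dvd K t (p := C a * X ^ 2 + C b * X + C c) (by simpa using h)
  have hdeg : (C a * X ^ 2 + C b * X + C c).natDegree = 2 := by compute_degree!
  have := natDegree_le_of_dvd hdvd (ne_zero_of_natDegree_gt (n := 0) (by lia))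
  rw [minpoly_of_aeval_depressedQuartic hf ht, natDegree_depressedQuartic] at this
  lia

theorem aeval_algebraMap_resolventCubic_ne_zero [CharZero K] [IsAlgClosed Ω]
    (hf : Irreducible (depressedQuartic p q r)) (ht : aeval t (depressedQuartic p q r) = 0)
    (hL : IsAtom K⟮t⟯) (z : K) : aeval (algebraMap K Ω z) (resolventCubic p q r) ≠ 0 := fun hz => by
  have htL : t ∈ K⟮t⟯ := mem_adjoin_simple_self K t
  obtain ⟨t₂, t₃, t₄, h, hz⟩ := exists_aroots_eq_of_aeval_resolventCubic ht hz
  have hw := add_mul_eq_of_aroots h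
  rw [← hz] at hw
  generalize t + t₂ = w at hw hz
  have hden : 2 * t ^ 2 + algebraMap K Ω p + algebraMap K Ω z ≠ 0 := by
    have := quadratic_ne_zero hf ht two_ne_zero 0 (p + z)
    simpa [map_ofNat, add_assoc] using this
  have hwL : w ∈ K⟮t⟯ := by
    rw [eq_div_of_mul_eq hden hw]
    have hK (a : K) : algebraMap K Ω a ∈ K⟮t⟯ := IntermediateField.algebraMap_mem _ a
    exact div_mem (sub_mem (mul_mem (mul_mem (ofNat_mem _ 2) (hK z)) htL) (hK q))
      (add_mem (add_mem (mul_mem (ofNat_mem _ 2) (pow_mem htL 2)) (hK p)) (hK z))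
  have hquad {x : Ω} (hx : x ∈ K⟮t⟯) (a b : K) (h : aeval x (X ^ 2 + C a * X + C b) = 0) :
      ∃ v, algebraMap K Ω v = x := by
    have hdeg : (X ^ 2 + C a * X + C b : K[X]).natDegree = 2 := by compute_degree!
    have h₄ := finrank_adjoin_depressedQuartic hf ht
    exact mem_bot.1 (mem_bot_of_isAtom_of_natDegree_lt hL hx
      (ne_zero_of_natDegree_gt (n := 0) (by lia)) (by lia) h)
  obtain ⟨v, rfl⟩ := hquad hwL 0 (-z) (by simp [hz])
  rcases eq_or_ne v 0 with rfl | hv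
  · have hq : algebraMap K Ω q = 0 := by
      rw [hz, map_zero] at hw
      linear_combination hw
    obtain ⟨u, hu⟩ := hquad (pow_mem htL 2) p r (by
      simp only [aeval_depressedQuartic, map_add, map_mul, map_pow, aeval_X, aeval_C] at ht ⊢
      linear_combination ht - t * hq)
    refine quadratic_ne_zero hf ht one_ne_zero 0 (-u) ?_
    simp [hu]
  · refine quadratic_ne_zero hf ht (mul_ne_zero two_ne_zero hv) (-(2 * z)) (v * (p + z) + q) ?_
    simp only [map_mul, map_add, map_neg, map_ofNat]
    linear_combination hw

theorem irreducible_resolventCubic_of_isAtom [CharZero K] [IsAlgClosed Ω]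
    (hf : Irreducible (depressedQuartic p q r)) (ht : aeval t (depressedQuartic p q r) = 0)
    (hL : IsAtom K⟮t⟯) : Irreducible (resolventCubic p q r) := by
  rw [(monic_resolventCubic p q r).irreducible_iff_roots_eq_zero_of_degree_le_three
    (by simp [natDegree_resolventCubic]) (natDegree_resolventCubic p q r).le]
  refine Multiset.eq_zero_of_forall_notMem fun z hz => ?_
  refine aeval_algebraMap_resolventCubic_ne_zero hf ht hL z ?_
  rw [aeval_algebraMap_apply, coe_aeval_eq_eval, isRoot_of_mem_roots hz, map_zero]

theorem irreducible_depressedQuartic_of_finrank (ht : aeval t (depressedQuartic p q r) = 0)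
    (h₄ : finrank K K⟮t⟯ = 4) : Irreducible (depressedQuartic p q r) := by
  have h_int := isIntegral_of_aeval_depressedQuartic ht
  rw [adjoin.finrank h_int] at h₄
  rw [eq_of_monic_of_dvd_of_natDegree_le (minpoly.monic h_int) (monic_depressedQuartic p q r)
    (minpoly.dvd K t ht) (by rw [natDegree_depressedQuartic, h₄])]
  exact minpoly.irreducible h_int

theorem exists_irreducible_depressedQuartic [CharZero K] {L : IntermediateField K Ω}
    (hL : IsAtom L) (h₄ : finrank K L = 4) : ∃ (p q r : K) (t : Ω),
      Irreducible (depressedQuartic p q r) ∧ aeval t (depressedQuartic p q r) = 0 ∧ K⟮t⟯ = L := by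
  obtain ⟨x, hxL, hx⟩ := SetLike.exists_of_lt hL.bot_lt
  obtain rfl := adjoin_simple_eq_of_isAtom hL hxL hx
  have : FiniteDimensional K K⟮x⟯ := finite_of_finrank_eq_succ h₄
  have h_int : IsIntegral K x := (AdjoinSimple.isIntegral_gen K x).1 (IsIntegral.of_finite K _)
  have hx₀ := minpoly.aeval K x
  have hlead : (minpoly K x).coeff 4 = 1 := by
    have := (minpoly.monic h_int).coeff_natDegree
    rwa [← adjoin.finrank h_int, h₄] at this
  rw [aeval_eq_sum_range, ← adjoin.finrank h_int, h₄] at hx₀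
  generalize minpoly K x = g at hx₀ hlead
  set m : K := -(g.coeff 3 / 4) with hm
  have hshift : K⟮x - algebraMap K Ω m⟯ = K⟮x⟯ := by
    have := adjoin_simple_eq_of_isAtom hL
      (sub_mem hxL (IntermediateField.algebraMap_mem _ m)) fun h => hx ?_
    · exact this
    · simpa using add_mem h (IntermediateField.algebraMap_mem _ m)
  have ht : aeval (x - algebraMap K Ω m) (depressedQuartic (g.coeff 2 - 6 * m ^ 2)
      (g.coeff 1 + 2 * m * g.coeff 2 - 8 * m ^ 3)
      (g.coeff 0 + m * g.coeff 1 + m ^ 2 * g.coeff 2 - 3 * m ^ 4)) = 0 := by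
    simp only [Finset.sum_range_succ, Finset.sum_range_zero, hlead, Algebra.smul_def,
      show g.coeff 3 = -(4 * m) by rw [hm]; ring, map_neg, map_mul, map_ofNat, map_one] at hx₀
    simp only [aeval_depressedQuartic, map_add, map_sub, map_mul, map_pow, map_ofNat]
    linear_combination hx₀
  exact ⟨_, _, _, _, irreducible_depressedQuartic_of_finrank ht (hshift ▸ h₄), ht, hshift⟩

end Primitive

section ChangeOfGenerator

theorem aroots_minpoly_eq_map [CharZero K] [IsAlgClosed Ω] {t : Ω} (ht : IsIntegral K t)
    {f : K[X]} (hf : K⟮aeval t f⟯ = K⟮t⟯) :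
    (minpoly K (aeval t f)).aroots Ω = ((minpoly K t).aroots Ω).map (aeval · f) := by
  have hx : IsIntegral K (aeval t f) :=
    adjoin_le_integralClosure ht (aeval_mem_adjoin_singleton K t)
  obtain ⟨g, -, hg⟩ := exists_aeval_eq_of_mem_adjoin hx (hf ▸ mem_adjoin_simple_self K t)
  have hconj {t' : Ω} (ht' : t' ∈ (minpoly K t).aroots Ω) (P : K[X]) (hP : aeval t P = 0) :
      aeval t' P = 0 :=
    aeval_eq_zero_of_dvd_aeval_eq_zero (minpoly.dvd K t hP) (mem_aroots.1 ht').2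
  have hinv {t' : Ω} (ht' : t' ∈ (minpoly K t).aroots Ω) : aeval (aeval t' f) g = t' := by
    have := hconj ht' (g.comp f - X) (by simp [aeval_comp, hg])
    simpa [aeval_comp, sub_eq_zero] using this
  have hnodup : ((minpoly K t).aroots Ω).Nodup :=
    (nodup_aroots_iff_of_splits (minpoly.ne_zero ht) (IsAlgClosed.splits _)).2
      (minpoly.irreducible ht).separable
  refine (Multiset.eq_of_le_of_card_le ?_ ?_).symm
  · refine (Multiset.le_iff_subset (hnodup.map_on fun a ha b hb hab => ?_)).2 ?_
    · rw [← hinv ha, hab, hinv hb]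
    · intro y hy
      obtain ⟨t', ht', rfl⟩ := Multiset.mem_map.1 hy
      refine mem_aroots.2 ⟨minpoly.ne_zero hx, ?_⟩
      have := hconj ht' ((minpoly K (aeval t f)).comp f) (by simp [aeval_comp])
      simpa [aeval_comp] using this
  · rw [Multiset.card_map, IsAlgClosed.card_aroots_eq_natDegree,
      IsAlgClosed.card_aroots_eq_natDegree, ← adjoin.finrank hx, ← adjoin.finrank ht, hf]

end ChangeOfGenerator

section ResolventRoot

variable {L L' : IntermediateField K Ω} {z z' : Ω}

/-- `z` is a root of the (irreducible) cubic resolvent of an irreducible depressed quartic which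
has a root generating `L`. -/
def IsResolventRoot (L : IntermediateField K Ω) (z : Ω) : Prop :=
  ∃ (p q r : K) (t : Ω), Irreducible (depressedQuartic p q r) ∧
    aeval t (depressedQuartic p q r) = 0 ∧ K⟮t⟯ = L ∧
    Irreducible (resolventCubic p q r) ∧ aeval z (resolventCubic p q r) = 0

theorem exists_isResolventRoot [CharZero K] [IsAlgClosed Ω] (hL : IsAtom L)
    (h₄ : finrank K L = 4) : ∃ z, IsResolventRoot L z := by
  obtain ⟨p, q, r, t, hf, ht, rfl⟩ := exists_irreducible_depressedQuartic hL h₄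
  obtain ⟨z, hz⟩ := IsAlgClosed.exists_aeval_eq_zero Ω (resolventCubic p q r)
    (by simp [degree_eq_natDegree (monic_resolventCubic p q r).ne_zero, natDegree_resolventCubic])
  exact ⟨z, p, q, r, t, hf, ht, rfl, irreducible_resolventCubic_of_isAtom hf ht hL, hz⟩

namespace IsResolventRoot

theorem finrank_eq_four (h : IsResolventRoot L z) : finrank K L = 4 := by
  obtain ⟨p, q, r, t, hf, ht, rfl, -⟩ := h
  exact finrank_adjoin_depressedQuartic hf ht

theorem isAtom [IsAlgClosed Ω] (h : IsResolventRoot L z) : IsAtom L := by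
  obtain ⟨p, q, r, t, hf, ht, rfl, hR, -⟩ := h
  exact isAtom_adjoin_of_irreducible_resolventCubic hf ht hR

theorem exists_minpoly_eq (h : IsResolventRoot L z) :
    ∃ p q r : K, minpoly K z = resolventCubic p q r := by
  obtain ⟨p, q, r, t, -, -, -, hR, hz⟩ := h
  exact ⟨p, q, r, (minpoly.eq_of_irreducible_of_monic hR hz (monic_resolventCubic p q r)).symm⟩

theorem natDegree_minpoly (h : IsResolventRoot L z) : (minpoly K z).natDegree = 3 := by
  obtain ⟨p, q, r, h⟩ := h.exists_minpoly_eq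
  rw [h, natDegree_resolventCubic]

theorem of_isConjRoot (h : IsResolventRoot L z) (hz : IsConjRoot K z z') :
    IsResolventRoot L z' := by
  obtain ⟨p, q, r, t, hf, ht, rfl, hR, hz₀⟩ := h
  refine ⟨p, q, r, t, hf, ht, rfl, hR, ?_⟩
  have := hz.aeval_eq_zero
  rwa [← minpoly.eq_of_irreducible_of_monic hR hz₀ (monic_resolventCubic p q r)] at this

theorem congr (h : IsResolventRoot L z) (e : L ≃ₐ[K] L') : IsResolventRoot L' z := by
  obtain ⟨p, q, r, t, hf, ht, rfl, hR, hz⟩ := h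
  set t' : Ω := ((e ⟨t, mem_adjoin_simple_self K t⟩ : L') : Ω)
  have hroot : aeval t' (depressedQuartic p q r) = 0 := by
    have hmin : minpoly K t' = minpoly K t :=
      (minpoly.algHom_eq (L'.val.comp e.toAlgHom) (L'.val.comp e.toAlgHom).injective _).trans
        (minpoly.algHom_eq K⟮t⟯.val K⟮t⟯.val.injective _).symm
    rw [← minpoly_of_aeval_depressedQuartic hf ht, ← hmin, minpoly.aeval]
  have h₄ := finrank_adjoin_depressedQuartic hf hroot
  have hL' : finrank K L' = 4 :=
    e.toLinearEquiv.finrank_eq.symm.trans (finrank_adjoin_depressedQuartic hf ht)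
  have : FiniteDimensional K L' := finite_of_finrank_eq_succ hL'
  exact ⟨p, q, r, t', hf, hroot, eq_of_le_of_finrank_eq (adjoin_simple_le_iff.2 (SetLike.coe_mem _))
    (h₄.trans hL'.symm), hR, hz⟩

theorem nonempty_algEquiv [CharZero K] (h : IsResolventRoot L z) (h' : IsResolventRoot L' z) :
    Nonempty (L ≃ₐ[K] L') := by
  obtain ⟨p, q, r, t, hf, ht, rfl, hR, hz⟩ := h
  obtain ⟨p', q', r', t', hf', ht', rfl, hR', hz'⟩ := h'
  have heq : resolventCubic p q r = resolventCubic p' q' r' := by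
    rw [minpoly.eq_of_irreducible_of_monic hR hz (monic_resolventCubic p q r),
      minpoly.eq_of_irreducible_of_monic hR' hz' (monic_resolventCubic p' q' r')]
  obtain ⟨rfl, hq, rfl⟩ := resolventCubic_inj heq
  wlog hqq : q = q' generalizing q' t'
  · have hneg : q = -q' := (sq_eq_sq_iff_eq_or_eq_neg.1 hq).resolve_left hqq
    have hadj : K⟮-t'⟯ = K⟮t'⟯ := le_antisymm
      (adjoin_simple_le_iff.2 (neg_mem (mem_adjoin_simple_self K t')))
      (adjoin_simple_le_iff.2 (by simpa using neg_mem (mem_adjoin_simple_self K (-t'))))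
    obtain ⟨e⟩ := this (-q') (-t') (by rw [neg_sq, hq]) (hneg ▸ hf)
      (by simpa [aeval_depressedQuartic, Even.neg_pow (by decide : Even 4)] using ht')
      (hneg ▸ hR) (hneg ▸ hz) (by rw [← hneg]) hneg
    exact ⟨e.trans (equivOfEq hadj)⟩
  subst hqq
  exact ⟨minpoly.algEquiv (isIntegral_of_aeval_depressedQuartic ht).isAlgebraic
    ((minpoly_of_aeval_depressedQuartic hf ht).trans
      (minpoly_of_aeval_depressedQuartic hf ht').symm)⟩

end IsResolventRoot

end ResolventRoot

theorem ne_zero_of_aeval_resolventCubic {p q r : K} {z : Ω}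
    (hR : Irreducible (resolventCubic p q r)) (hz : aeval z (resolventCubic p q r) = 0) :
    z ≠ 0 := by
  rintro rfl
  simpa using natDegree_minpoly_of_aeval_resolventCubic hR hz

section PairSums

variable {p q r : K} {t₁ t₂ t₃ t₄ : Ω}

theorem sum_aeval_of_aroots (h : (depressedQuartic p q r).aroots Ω = {t₁, t₂, t₃, t₄})
    {f : K[X]} (hf : f.natDegree < 4) :
    aeval t₁ f + aeval t₂ f + aeval t₃ f + aeval t₄ f =
      algebraMap K Ω (4 * f.coeff 0 - 2 * p * f.coeff 2 - 3 * q * f.coeff 3) := by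
  obtain ⟨rfl, hp, hq, -⟩ := depressedQuartic_vieta h
  simp only [aeval_eq_sum_range' hf, Finset.sum_range_succ, Finset.sum_range_zero,
    Algebra.smul_def, map_sub, map_mul, map_ofNat, hp, hq]
  ring

theorem two_mul_aeval_add_aeval (h : (depressedQuartic p q r).aroots Ω = {t₁, t₂, t₃, t₄})
    {f : K[X]} (hf : f.natDegree < 4)
    (h₀ : 4 * f.coeff 0 - 2 * p * f.coeff 2 - 3 * q * f.coeff 3 = 0) :
    2 * (t₁ + t₂) ^ 2 * (aeval t₁ f + aeval t₂ f) =
      (t₁ + t₂) * (algebraMap K Ω (-(2 * q * f.coeff 2))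
        + algebraMap K Ω (2 * f.coeff 1 - 3 * p * f.coeff 3) * (t₁ + t₂) ^ 2
        - algebraMap K Ω (f.coeff 3) * ((t₁ + t₂) ^ 2) ^ 2) := by
  obtain ⟨rfl, hp, hq, -⟩ := depressedQuartic_vieta h
  replace h₀ := congrArg (algebraMap K Ω) h₀
  simp only [map_sub, map_mul, map_ofNat, map_zero, hp, hq] at h₀
  simp only [aeval_eq_sum_range' hf, Finset.sum_range_succ, Finset.sum_range_zero,
    Algebra.smul_def, map_sub, map_neg, map_mul, map_ofNat, hp, hq]
  linear_combination (t₁ + t₂) ^ 2 * h₀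

theorem exists_aeval_add_aeval_eq_mul [CharZero K] (hq : q ≠ 0)
    (h : (depressedQuartic p q r).aroots Ω = {t₁, t₂, t₃, t₄}) (hw : t₁ + t₂ ≠ 0)
    (hz : (minpoly K ((t₁ + t₂) ^ 2)).natDegree = 3) {s : Ω} (hs : s ∈ K⟮(t₁ + t₂) ^ 2⟯) :
    ∃ f : K[X], aeval t₁ f + aeval t₂ f = (t₁ + t₂) * s ∧
      aeval t₁ f + aeval t₂ f + aeval t₃ f + aeval t₄ f = 0 := by
  have : CharZero Ω := charZero_of_injective_algebraMap (algebraMap K Ω).injective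
  obtain ⟨g, hg, hgs⟩ := exists_aeval_eq_of_mem_adjoin
    (isIntegral_of_natDegree_minpoly_ne_zero (by lia))
    (mul_mem (mem_adjoin_simple_self K ((t₁ + t₂) ^ 2)) hs)
  rw [hz] at hg
  rw [aeval_eq_sum_range' hg] at hgs
  simp only [Finset.sum_range_succ, Finset.sum_range_zero, Algebra.smul_def] at hgs
  -- The coefficients are forced by `two_mul_aeval_add_aeval`; `c₀` makes the trace vanish.
  let c₂ := -(g.coeff 0 / q)
  let c₃ := -(2 * g.coeff 2)
  let c₀ := (2 * p * c₂ + 3 * q * c₃) / 4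
  obtain ⟨f, hf, h₀, h₁, h₂, h₃⟩ : ∃ f : K[X], f.natDegree < 4 ∧ f.coeff 0 = c₀ ∧
      f.coeff 1 = g.coeff 1 - 3 * p * g.coeff 2 ∧ f.coeff 2 = c₂ ∧ f.coeff 3 = c₃ :=
    ⟨C c₀ + C (g.coeff 1 - 3 * p * g.coeff 2) * X + C c₂ * X ^ 2 + C c₃ * X ^ 3,
      by compute_degree!, by simp, by simp, by simp, by simp [-map_mul, -map_neg]⟩
  have htrace : 4 * f.coeff 0 - 2 * p * f.coeff 2 - 3 * q * f.coeff 3 = 0 := by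
    rw [h₀, h₂, h₃]; ring
  refine ⟨f, ?_, by rw [sum_aeval_of_aroots h hf, htrace, map_zero]⟩
  have hsum := two_mul_aeval_add_aeval h hf htrace
  rw [show 2 * q * f.coeff 2 = -2 * g.coeff 0 by simp only [h₂, c₂]; field_simp,
    show 2 * f.coeff 1 - 3 * p * f.coeff 3 = 2 * g.coeff 1 by simp only [h₁, h₃, c₃]; ring,
    h₃] at hsum
  refine mul_left_cancel₀ (mul_ne_zero two_ne_zero (pow_ne_zero 2 hw)) (hsum.trans ?_)
  simp only [map_neg, map_mul, map_ofNat, c₃]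
  linear_combination 2 * (t₁ + t₂) * hgs

theorem exists_add_eq_mul_of_aeval_eq [CharZero K]
    (h : (depressedQuartic p q r).aroots Ω = {t₁, t₂, t₃, t₄}) (hw : t₁ + t₂ ≠ 0)
    {f : K[X]} (hf : f.natDegree < 4)
    (h₀ : aeval t₁ f + aeval t₂ f + aeval t₃ f + aeval t₄ f = 0) :
    ∃ s ∈ K⟮(t₁ + t₂) ^ 2⟯, aeval t₁ f + aeval t₂ f = (t₁ + t₂) * s := by
  have : CharZero Ω := charZero_of_injective_algebraMap (algebraMap K Ω).injective
  rw [sum_aeval_of_aroots h hf, map_eq_zero] at h₀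
  have hz := mem_adjoin_simple_self K ((t₁ + t₂) ^ 2)
  have hK (a : K) : algebraMap K Ω a ∈ K⟮(t₁ + t₂) ^ 2⟯ := IntermediateField.algebraMap_mem _ a
  obtain ⟨b, hb, hsum⟩ : ∃ b ∈ K⟮(t₁ + t₂) ^ 2⟯,
      2 * (t₁ + t₂) ^ 2 * (aeval t₁ f + aeval t₂ f) = (t₁ + t₂) * b := by
    refine ⟨_, ?_, two_mul_aeval_add_aeval h hf h₀⟩
    exact sub_mem (add_mem (hK _) (mul_mem (hK _) hz)) (mul_mem (hK _) (pow_mem hz 2))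
  refine ⟨b / (2 * (t₁ + t₂) ^ 2), div_mem hb (mul_mem (ofNat_mem _ 2) hz), ?_⟩
  rw [mul_div_assoc', eq_div_iff (mul_ne_zero two_ne_zero (pow_ne_zero 2 hw)), ← hsum, mul_comm]

theorem aeval_notMem_bot_of_sum_eq_zero [CharZero K] (hf : Irreducible (depressedQuartic p q r))
    (h : (depressedQuartic p q r).aroots Ω = {t₁, t₂, t₃, t₄}) {f : K[X]}
    (hsum : aeval t₁ f + aeval t₂ f + aeval t₃ f + aeval t₄ f = 0)
    (hpair : aeval t₁ f + aeval t₂ f ≠ 0) : aeval t₁ f ∉ (⊥ : IntermediateField K Ω) :=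
  fun hbot => by
  have : CharZero Ω := charZero_of_injective_algebraMap (algebraMap K Ω).injective
  have hroot {t : Ω} (ht : t ∈ ({t₁, t₂, t₃, t₄} : Multiset Ω)) :
      aeval t (depressedQuartic p q r) = 0 := mem_aroots_depressedQuartic.1 (h ▸ ht)
  obtain ⟨v, hv⟩ := mem_bot.1 hbot
  have hdvd : depressedQuartic p q r ∣ f - C v := by
    rw [← minpoly_of_aeval_depressedQuartic hf (hroot (t := t₁) (by simp))]
    exact minpoly.dvd K t₁ (by simp [hv])
  have hconst {t : Ω} (ht : t ∈ ({t₁, t₂, t₃, t₄} : Multiset Ω)) :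
      aeval t f = algebraMap K Ω v := by
    simpa [sub_eq_zero] using aeval_eq_zero_of_dvd_aeval_eq_zero hdvd (hroot ht)
  rw [hconst (t := t₁) (by simp), hconst (t := t₂) (by simp)] at hpair hsum
  rw [hconst (t := t₃) (by simp), hconst (t := t₄) (by simp)] at hsum
  exact hpair (by linear_combination hsum / 2)

end PairSums

theorem eq_depressedQuartic {g : K[X]} (hg : g.Monic) (h₄ : g.natDegree = 4)
    (h₃ : g.coeff 3 = 0) : g = depressedQuartic (g.coeff 2) (g.coeff 1) (g.coeff 0) := by
  have hlead : g.coeff 4 = 1 := h₄ ▸ hg.coeff_natDegree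
  conv_lhs => rw [g.as_sum_range_C_mul_X_pow' (n := 5) (by lia)]
  simp only [Finset.sum_range_succ, Finset.sum_range_zero, h₃, hlead, depressedQuartic, C_0, C_1]
  ring

theorem exists_minpoly_eq_depressedQuartic [IsAlgClosed Ω] {x x₂ x₃ x₄ : Ω}
    (h : (minpoly K x).aroots Ω = {x, x₂, x₃, x₄}) (h₀ : x + x₂ + x₃ + x₄ = 0) :
    ∃ p q r, minpoly K x = depressedQuartic p q r := by
  have h₄ : (minpoly K x).natDegree = 4 := by
    rw [← IsAlgClosed.card_aroots_eq_natDegree (B := Ω), h]; rfl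
  have h_int := isIntegral_of_natDegree_minpoly_ne_zero (K := K) (t := x) (by lia)
  refine ⟨_, _, _, eq_depressedQuartic (minpoly.monic h_int) h₄ ?_⟩
  have hsum := (IsAlgClosed.splits ((minpoly K x).map (algebraMap K Ω))
    ).nextCoeff_eq_neg_sum_roots_of_monic ((minpoly.monic h_int).map _)
  rw [← aroots_def, h, nextCoeff_of_natDegree_pos (by simp [h₄]), natDegree_map, h₄, coeff_map]
    at hsum
  simp only [Multiset.insert_eq_cons, Multiset.sum_cons, Multiset.sum_singleton] at hsum
  rw [← map_eq_zero (algebraMap K Ω), hsum]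
  linear_combination -h₀

section ResolventRoot
variable {L L' : IntermediateField K Ω} {z z' : Ω}

namespace IsResolventRoot

theorem ne_zero (h : IsResolventRoot L z) : z ≠ 0 := by
  obtain ⟨p, q, r, t, -, -, -, hR, hz⟩ := h
  exact ne_zero_of_aeval_resolventCubic hR hz

theorem ne_one (h : IsResolventRoot L z) : z ≠ 1 := by
  rintro rfl
  have := h.natDegree_minpoly
  rw [minpoly.one, ← C_1, natDegree_X_sub_C] at this
  omega

theorem mul_sq [CharZero K] [IsAlgClosed Ω] (h : IsResolventRoot L z) {s : Ω} (hs : s ∈ K⟮z⟯)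
    (hs₀ : s ≠ 0) : IsResolventRoot L (z * s ^ 2) := by
  have hz₀ := h.ne_zero
  have hz₃ := h.natDegree_minpoly
  have hL := h.isAtom
  obtain ⟨p, q, r, t, hf, ht, rfl, hR, hz⟩ := h
  have hq : q ≠ 0 := by
    rintro rfl
    exact ne_zero_of_aeval_resolventCubic hR (z := (0 : Ω)) (by simp [aeval_resolventCubic]) rfl
  obtain ⟨t₂, t₃, t₄, hroots, rfl⟩ := exists_aroots_eq_of_aeval_resolventCubic ht hz
  have hw : t + t₂ ≠ 0 := fun h => hz₀ (by rw [h, zero_pow two_ne_zero])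
  obtain ⟨f, hpair, hsum⟩ := exists_aeval_add_aeval_eq_mul hq hroots hw hz₃ hs
  have hx := aeval_notMem_bot_of_sum_eq_zero hf hroots hsum (hpair ▸ mul_ne_zero hw hs₀)
  have hadj := adjoin_simple_eq_of_isAtom hL
    (algebra_adjoin_le_adjoin K _ (aeval_mem_adjoin_singleton K t)) hx
  have hxroots := aroots_minpoly_eq_map (isIntegral_of_aeval_depressedQuartic ht) hadj
  rw [minpoly_of_aeval_depressedQuartic hf ht, hroots] at hxroots
  obtain ⟨p', q', r', hmin⟩ := exists_minpoly_eq_depressedQuartic hxroots hsum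
  have ht' : aeval (aeval t f) (depressedQuartic p' q' r') = 0 := hmin ▸ minpoly.aeval K _
  have hf' := irreducible_depressedQuartic_of_finrank ht'
    (hadj ▸ finrank_adjoin_depressedQuartic hf ht)
  rw [← hadj] at hL
  refine ⟨p', q', r', _, hf', ht', hadj, irreducible_resolventCubic_of_isAtom hf' ht' hL, ?_⟩
  rw [hmin] at hxroots
  rw [aeval_resolventCubic_eq hxroots, ← mul_pow, ← hpair, sub_self, zero_mul, zero_mul]

theorem exists_isConjRoot [CharZero K] [IsAlgClosed Ω] (h : IsResolventRoot L z)
    (h' : IsResolventRoot L z') : ∃ z₂, IsConjRoot K z z₂ ∧ ∃ s ∈ K⟮z₂⟯, z' = z₂ * s ^ 2 := by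
  obtain ⟨p, q, r, t, hf, ht, rfl, hR, hz⟩ := h
  obtain ⟨p', q', r', t', hf', ht', hadj, -, hz'⟩ := h'
  have h_int := isIntegral_of_aeval_depressedQuartic ht
  obtain ⟨f, hdeg, rfl⟩ := exists_aeval_eq_of_mem_adjoin h_int
    (hadj ▸ mem_adjoin_simple_self K t')
  have hmap := aroots_minpoly_eq_map h_int hadj
  rw [minpoly_of_aeval_depressedQuartic hf ht] at hmap hdeg
  rw [minpoly_of_aeval_depressedQuartic hf' ht'] at hmap
  rw [natDegree_depressedQuartic] at hdeg
  obtain ⟨a, ha⟩ := Multiset.exists_cons_of_mem (mem_aroots_depressedQuartic.2 ht)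
  obtain ⟨u₂, u₃, u₄, hu, rfl⟩ := exists_aroots_eq_of_aeval_resolventCubic ht' hz'
  have hu₂ : u₂ ∈ a.map (aeval · f) := by
    have := hu.symm.trans hmap
    rw [ha, Multiset.map_cons, Multiset.insert_eq_cons, Multiset.cons_inj_right] at this
    simp [← this]
  obtain ⟨t₂, ht₂, rfl⟩ := Multiset.mem_map.1 hu₂
  obtain ⟨t₃, t₄, hroots⟩ := exists_aroots_depressedQuartic_eq_of_le (t₁ := t) (t₂ := t₂)
    (ha ▸ Multiset.cons_le_cons t (Multiset.singleton_le.2 ht₂))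
  have hz₂ : aeval ((t + t₂) ^ 2) (resolventCubic p q r) = 0 := by
    simp [aeval_resolventCubic_eq hroots]
  have hw : t + t₂ ≠ 0 := fun h => ne_zero_of_aeval_resolventCubic hR hz₂ (by simp [h])
  have hsum : aeval t f + aeval t₂ f + aeval t₃ f + aeval t₄ f = 0 := by
    have := congrArg Multiset.sum (hmap.symm.trans hu)
    simp only [hroots, Multiset.insert_eq_cons, Multiset.map_cons, Multiset.map_singleton,
      Multiset.sum_cons, Multiset.sum_singleton] at this
    linear_combination this + (depressedQuartic_vieta hu).1
  obtain ⟨s, hs, hadd⟩ := exists_add_eq_mul_of_aeval_eq hroots hw hdeg hsum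
  refine ⟨_, ?_, s, hs, by rw [hadd, mul_pow]⟩
  have hmonic := monic_resolventCubic p q r
  exact (minpoly.eq_of_irreducible_of_monic hR hz hmonic).symm.trans
    (minpoly.eq_of_irreducible_of_monic hR hz₂ hmonic)

end IsResolventRoot

end ResolventRoot

section OfResolvent

variable {p q r : K} {z : Ω} [IsAlgClosed Ω]

theorem aeval_algebraMap_depressedQuartic_ne_zero (hR : Irreducible (resolventCubic p q r))
    (hz : aeval z (resolventCubic p q r) = 0) (hsq : ∀ w ∈ K⟮z⟯, w ^ 2 ≠ z) (v : K) :
    aeval (algebraMap K Ω v) (depressedQuartic p q r) ≠ 0 :=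
  fun hv => by
  have hz₃ := natDegree_minpoly_of_aeval_resolventCubic hR hz
  obtain ⟨t₂, t₃, t₄, hroots, hzw⟩ := exists_aroots_eq_of_aeval_resolventCubic hv hz
  have hw := add_mul_eq_of_aroots hroots
  rw [← hzw] at hw
  have hden : 2 * algebraMap K Ω v ^ 2 + algebraMap K Ω p + z ≠ 0 := fun h => by
    have hzv : z = algebraMap K Ω (-(2 * v ^ 2 + p)) := by
      simp only [map_neg, map_add, map_mul, map_pow, map_ofNat]
      linear_combination h
    rw [hzv, minpoly.eq_X_sub_C, natDegree_X_sub_C] at hz₃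
    lia
  refine hsq _ ?_ hzw.symm
  rw [eq_div_of_mul_eq hden hw]
  have hK (a : K) : algebraMap K Ω a ∈ K⟮z⟯ := IntermediateField.algebraMap_mem _ a
  have hzK := mem_adjoin_simple_self K z
  exact div_mem (sub_mem (mul_mem (mul_mem (ofNat_mem _ 2) hzK) (hK v)) (hK q))
    (add_mem (add_mem (mul_mem (ofNat_mem _ 2) (pow_mem (hK v) 2)) (hK p)) hzK)

theorem not_dvd_depressedQuartic_of_natDegree_eq_two (hR : Irreducible (resolventCubic p q r))
    {g : K[X]} (hg : g.Monic) (hg₂ : g.natDegree = 2) : ¬ g ∣ depressedQuartic p q r :=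
  fun hdvd => by
  obtain ⟨t, ht⟩ := IsAlgClosed.exists_aeval_eq_zero (AlgebraicClosure K) g
    (by rw [degree_eq_natDegree hg.ne_zero, hg₂]; exact two_ne_zero)
  obtain ⟨t', hpair, hsum⟩ := exists_aroots_eq_pair hg hg₂ ht
  have hle : {t, t'} ≤ (depressedQuartic p q r).aroots (AlgebraicClosure K) :=
    hpair ▸ roots.le_of_dvd ((monic_depressedQuartic p q r).map _).ne_zero
      (Polynomial.map_dvd _ hdvd)
  obtain ⟨t₃, t₄, hroots⟩ := exists_aroots_depressedQuartic_eq_of_le hle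
  have h₃ := natDegree_minpoly_of_aeval_resolventCubic hR
    (z := (t + t') ^ 2) (by simp [aeval_resolventCubic_eq hroots])
  rw [hsum, ← map_pow, minpoly.eq_X_sub_C, natDegree_X_sub_C] at h₃
  lia

theorem exists_isResolventRoot_of_forall_sq_ne [CharZero K]
    (hR : Irreducible (resolventCubic p q r)) (hz : aeval z (resolventCubic p q r) = 0)
    (hsq : ∀ w ∈ K⟮z⟯, w ^ 2 ≠ z) : ∃ L : IntermediateField K Ω, IsResolventRoot L z := by
  obtain ⟨t, ht⟩ := IsAlgClosed.exists_aeval_eq_zero Ω (depressedQuartic p q r)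
    (by simp [degree_eq_natDegree (monic_depressedQuartic p q r).ne_zero,
      natDegree_depressedQuartic])
  refine ⟨K⟮t⟯, p, q, r, t, ?_, ht, rfl, hR, hz⟩
  have hmonic := monic_depressedQuartic p q r
  refine hmonic.irreducible_iff_natDegree'.2 ⟨fun h => ?_, ?_⟩
  · simpa [h] using natDegree_depressedQuartic p q r
  intro f g _ hg hfg hdeg
  have hdvd : g ∣ depressedQuartic p q r := Dvd.intro_left f hfg
  rw [natDegree_depressedQuartic, Finset.mem_Ioc] at hdeg
  obtain hg₁ | hg₂ : g.natDegree = 1 ∨ g.natDegree = 2 := by lia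
  · obtain ⟨v, hv⟩ := exists_root_of_degree_eq_one
      (by rw [degree_eq_natDegree hg.ne_zero, hg₁]; rfl : g.degree = 1)
    refine aeval_algebraMap_depressedQuartic_ne_zero hR hz hsq v ?_
    rw [aeval_algebraMap_apply, coe_aeval_eq_eval, hv.dvd hdvd, map_zero]
  · exact not_dvd_depressedQuartic_of_natDegree_eq_two hR hg hg₂ hdvd

end OfResolvent

end Quartic

/-! ### Cubic algebras in coordinates -/

/-- The algebra `R[T] / (T³ - A T - B)` in the basis `1, T, T²`. Explicit coordinates make it a
decidable finite ring over `ZMod 8`. -/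
@[ext]
structure CubicAlgebra {R : Type*} (A B : R) where
  /-- The coordinate along `1`. -/
  x₁ : R
  /-- The coordinate along `T`. -/
  x₂ : R
  /-- The coordinate along `T²`. -/
  x₃ : R

namespace CubicAlgebra

section Ring

variable {R : Type*} [CommRing R] {A B : R}

instance [DecidableEq R] : DecidableEq (CubicAlgebra A B) := fun _ _ =>
  decidable_of_iff _ CubicAlgebra.ext_iff.symm

instance [Fintype R] : Fintype (CubicAlgebra A B) :=
  .ofEquiv (R × R × R)
    ⟨fun p => ⟨p.1, p.2.1, p.2.2⟩, fun x => ⟨x.x₁, x.x₂, x.x₃⟩, fun _ => rfl, fun _ => rfl⟩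

instance : Zero (CubicAlgebra A B) := ⟨⟨0, 0, 0⟩⟩
instance : One (CubicAlgebra A B) := ⟨⟨1, 0, 0⟩⟩
instance : Add (CubicAlgebra A B) := ⟨fun x y => ⟨x.x₁ + y.x₁, x.x₂ + y.x₂, x.x₃ + y.x₃⟩⟩
instance : Neg (CubicAlgebra A B) := ⟨fun x => ⟨-x.x₁, -x.x₂, -x.x₃⟩⟩
instance : SMul R (CubicAlgebra A B) := ⟨fun r x => ⟨r * x.x₁, r * x.x₂, r * x.x₃⟩⟩
instance : Mul (CubicAlgebra A B) := ⟨fun x y =>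
  ⟨x.x₁ * y.x₁ + B * (x.x₂ * y.x₃ + x.x₃ * y.x₂),
    x.x₁ * y.x₂ + x.x₂ * y.x₁ + A * (x.x₂ * y.x₃ + x.x₃ * y.x₂) + B * x.x₃ * y.x₃,
    x.x₁ * y.x₃ + x.x₂ * y.x₂ + x.x₃ * y.x₁ + A * x.x₃ * y.x₃⟩⟩

theorem zero_def : (0 : CubicAlgebra A B) = ⟨0, 0, 0⟩ := rfl
theorem one_def : (1 : CubicAlgebra A B) = ⟨1, 0, 0⟩ := rfl
theorem add_def (x y : CubicAlgebra A B) :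
    x + y = ⟨x.x₁ + y.x₁, x.x₂ + y.x₂, x.x₃ + y.x₃⟩ := rfl
theorem neg_def (x : CubicAlgebra A B) : -x = ⟨-x.x₁, -x.x₂, -x.x₃⟩ := rfl
theorem smul_def (r : R) (x : CubicAlgebra A B) :
    r • x = ⟨r * x.x₁, r * x.x₂, r * x.x₃⟩ := rfl
theorem mul_def (x y : CubicAlgebra A B) : x * y =
    ⟨x.x₁ * y.x₁ + B * (x.x₂ * y.x₃ + x.x₃ * y.x₂),
      x.x₁ * y.x₂ + x.x₂ * y.x₁ + A * (x.x₂ * y.x₃ + x.x₃ * y.x₂) + B * x.x₃ * y.x₃,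
      x.x₁ * y.x₃ + x.x₂ * y.x₂ + x.x₃ * y.x₁ + A * x.x₃ * y.x₃⟩ := rfl

instance : CommRing (CubicAlgebra A B) where
  add_assoc _ _ _ := by ext <;> exact add_assoc _ _ _
  zero_add _ := by ext <;> exact zero_add _
  add_zero _ := by ext <;> exact add_zero _
  add_comm _ _ := by ext <;> exact add_comm _ _
  neg_add_cancel _ := by ext <;> exact neg_add_cancel _
  mul_assoc _ _ _ := by ext <;> simp only [mul_def] <;> ring
  one_mul _ := by ext <;> simp [mul_def, one_def]
  mul_one _ := by ext <;> simp [mul_def, one_def]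
  left_distrib _ _ _ := by ext <;> simp only [mul_def, add_def] <;> ring
  right_distrib _ _ _ := by ext <;> simp only [mul_def, add_def] <;> ring
  zero_mul _ := by ext <;> simp [mul_def, zero_def]
  mul_zero _ := by ext <;> simp [mul_def, zero_def]
  mul_comm _ _ := by ext <;> simp only [mul_def] <;> ring
  nsmul := nsmulRec
  zsmul := zsmulRec

theorem sub_def (x y : CubicAlgebra A B) :
    x - y = ⟨x.x₁ - y.x₁, x.x₂ - y.x₂, x.x₃ - y.x₃⟩ := by
  simp [sub_eq_add_neg, add_def, neg_def]

instance : Algebra R (CubicAlgebra A B) where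
  algebraMap :=
    { toFun r := ⟨r, 0, 0⟩
      map_one' := rfl
      map_zero' := rfl
      map_mul' _ _ := by simp [mul_def]
      map_add' _ _ := by simp [add_def] }
  commutes' _ _ := mul_comm _ _
  smul_def' _ _ := by simp [smul_def, mul_def]

theorem algebraMap_def (r : R) : algebraMap R (CubicAlgebra A B) r = ⟨r, 0, 0⟩ := rfl

/-- The class of `T`. -/
def root : CubicAlgebra A B := ⟨0, 1, 0⟩

theorem root_cube : (root : CubicAlgebra A B) ^ 3 = algebraMap R _ A * root + algebraMap R _ B := by
  ext <;> simp [root, pow_succ, mul_def, add_def, algebraMap_def]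

theorem algebraMap_dvd_iff {r : R} {x : CubicAlgebra A B} :
    algebraMap R (CubicAlgebra A B) r ∣ x ↔ r ∣ x.x₁ ∧ r ∣ x.x₂ ∧ r ∣ x.x₃ := by
  constructor
  · rintro ⟨y, rfl⟩
    simp [mul_def, algebraMap_def]
  · rintro ⟨⟨a, ha⟩, ⟨b, hb⟩, ⟨c, hc⟩⟩
    exact ⟨⟨a, b, c⟩, by ext <;> simp [ha, hb, hc, mul_def, algebraMap_def]⟩

/-- The norm `CubicAlgebra A B → R`, the determinant of multiplication by `x` in the basis
`1, T, T²`. -/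
def norm : CubicAlgebra A B →* R where
  toFun x := x.x₁ * ((x.x₁ + A * x.x₃) ^ 2 - x.x₂ * (A * x.x₂ + B * x.x₃))
    - x.x₂ * (B * x.x₃ * (x.x₁ + A * x.x₃) - B * x.x₂ ^ 2)
    + x.x₃ * (B * x.x₃ * (A * x.x₂ + B * x.x₃) - B * x.x₂ * (x.x₁ + A * x.x₃))
  map_one' := by simp [one_def]
  map_mul' x y := by
    simp only [mul_def]
    ring

theorem norm_apply (x : CubicAlgebra A B) : norm x =
    x.x₁ * ((x.x₁ + A * x.x₃) ^ 2 - x.x₂ * (A * x.x₂ + B * x.x₃))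
      - x.x₂ * (B * x.x₃ * (x.x₁ + A * x.x₃) - B * x.x₂ ^ 2)
      + x.x₃ * (B * x.x₃ * (A * x.x₂ + B * x.x₃) - B * x.x₂ * (x.x₁ + A * x.x₃)) := rfl

theorem norm_algebraMap (r : R) : norm (algebraMap R (CubicAlgebra A B) r) = r ^ 3 := by
  simp only [norm_apply, algebraMap_def]
  ring

-- Cayley–Hamilton for multiplication by `x`.
theorem exists_cube_add_eq_norm (x : CubicAlgebra A B) :
    ∃ a b : R, x ^ 3 + a • x ^ 2 + b • x = algebraMap R _ (norm x) := by
  refine ⟨-(3 * x.x₁ + 2 * A * x.x₃), 2 * x.x₁ * (x.x₁ + A * x.x₃) + (x.x₁ + A * x.x₃) ^ 2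
    - 3 * B * x.x₂ * x.x₃ - A * x.x₂ ^ 2, ?_⟩
  ext <;> simp only [norm_apply, pow_succ, pow_zero, one_mul, add_def, smul_def, mul_def,
    algebraMap_def] <;> ring

theorem isUnit_iff_isUnit_norm {x : CubicAlgebra A B} : IsUnit x ↔ IsUnit (norm x) := by
  refine ⟨fun h => h.map norm, fun h => ?_⟩
  obtain ⟨a, b, hx⟩ := exists_cube_add_eq_norm x
  refine isUnit_of_dvd_unit ⟨x ^ 2 + a • x + b • 1, ?_⟩ (h.map (algebraMap R (CubicAlgebra A B)))
  rw [← hx, mul_add, mul_add, mul_smul_comm, mul_smul_comm, mul_one, pow_succ' x 2, sq]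

/-- The reduction map induced by a homomorphism `φ` of coefficient rings. -/
def map {S : Type*} [CommRing S] (φ : R →+* S) {A' B' : S} (hA : φ A = A') (hB : φ B = B') :
    CubicAlgebra A B →+* CubicAlgebra A' B' where
  toFun x := ⟨φ x.x₁, φ x.x₂, φ x.x₃⟩
  map_one' := by simp [one_def]
  map_zero' := by simp [zero_def]
  map_mul' x y := by simp [mul_def, ← hA, ← hB]
  map_add' x y := by simp [add_def]

theorem map_apply {S : Type*} [CommRing S] (φ : R →+* S) {A' B' : S} (hA : φ A = A')
    (hB : φ B = B') (x : CubicAlgebra A B) : map φ hA hB x = ⟨φ x.x₁, φ x.x₂, φ x.x₃⟩ := rfl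

theorem norm_map {S : Type*} [CommRing S] (φ : R →+* S) {A' B' : S} (hA : φ A = A')
    (hB : φ B = B') (x : CubicAlgebra A B) : norm (map φ hA hB x) = φ (norm x) := by
  simp [norm_apply, map_apply, ← hA, ← hB]

/-- The evaluation at a root `T` of `X³ - A X - B`. -/
def lift {S : Type*} [CommRing S] [Algebra R S] (T : S)
    (hT : T ^ 3 = algebraMap R S A * T + algebraMap R S B) : CubicAlgebra A B →ₐ[R] S where
  toFun x := algebraMap R S x.x₁ + algebraMap R S x.x₂ * T + algebraMap R S x.x₃ * T ^ 2
  map_one' := by simp [one_def]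
  map_zero' := by simp [zero_def]
  map_mul' x y := by
    simp only [mul_def, map_add, map_mul]
    linear_combination (-algebraMap R S x.x₂ * algebraMap R S y.x₃
      - algebraMap R S x.x₃ * algebraMap R S y.x₂
      - algebraMap R S x.x₃ * algebraMap R S y.x₃ * T) * hT
  map_add' x y := by
    simp only [add_def, map_add]
    ring
  commutes' r := by simp [algebraMap_def]

theorem lift_apply {S : Type*} [CommRing S] [Algebra R S] {T : S}
    (hT : T ^ 3 = algebraMap R S A * T + algebraMap R S B) (x : CubicAlgebra A B) :
    lift T hT x =
      algebraMap R S x.x₁ + algebraMap R S x.x₂ * T + algebraMap R S x.x₃ * T ^ 2 := rfl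

end Ring

section Adic

variable {R : Type*} [CommRing R] {A B a : R}

theorem sModEq_span_pow_iff {S : Type*} [CommRing S] {a x y : S} {n : ℕ} :
    x ≡ y [SMOD (Ideal.span {a} ^ n • ⊤ : Submodule S S)] ↔ a ^ n ∣ x - y := by
  rw [SModEq.sub_mem, smul_eq_mul, Ideal.mul_top, Ideal.span_singleton_pow,
    Ideal.mem_span_singleton]

theorem sModEq_iff {x y : CubicAlgebra A B} {n : ℕ} :
    x ≡ y [SMOD (Ideal.span {algebraMap R (CubicAlgebra A B) a} ^ n • ⊤ :
        Submodule (CubicAlgebra A B) (CubicAlgebra A B))] ↔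
      x.x₁ ≡ y.x₁ [SMOD (Ideal.span {a} ^ n • ⊤ : Submodule R R)] ∧
      x.x₂ ≡ y.x₂ [SMOD (Ideal.span {a} ^ n • ⊤ : Submodule R R)] ∧
      x.x₃ ≡ y.x₃ [SMOD (Ideal.span {a} ^ n • ⊤ : Submodule R R)] := by
  simp only [sModEq_span_pow_iff, ← map_pow, algebraMap_dvd_iff, sub_def]

instance [h : IsAdicComplete (Ideal.span {a}) R] :
    IsAdicComplete (Ideal.span {algebraMap R (CubicAlgebra A B) a}) (CubicAlgebra A B) where
  haus' x hx := by
    ext <;> refine h.haus' _ fun n => ?_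
    exacts [(sModEq_iff.1 (hx n)).1, (sModEq_iff.1 (hx n)).2.1, (sModEq_iff.1 (hx n)).2.2]
  prec' f hf := by
    obtain ⟨l₁, h₁⟩ := h.prec' (fun n => (f n).x₁) fun hmn => (sModEq_iff.1 (hf hmn)).1
    obtain ⟨l₂, h₂⟩ := h.prec' (fun n => (f n).x₂) fun hmn => (sModEq_iff.1 (hf hmn)).2.1
    obtain ⟨l₃, h₃⟩ := h.prec' (fun n => (f n).x₃) fun hmn => (sModEq_iff.1 (hf hmn)).2.2
    exact ⟨⟨l₁, l₂, l₃⟩, fun n => sModEq_iff.2 ⟨h₁ n, h₂ n, h₃ n⟩⟩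

end Adic

end CubicAlgebra

section CubicField

variable {K Ω : Type*} [Field K] [Field Ω] [Algebra K Ω]

theorem eq_zero_of_natDegree_minpoly_eq_three {T : Ω} (hd : (minpoly K T).natDegree = 3)
    {a b c : K}
    (h : algebraMap K Ω a + algebraMap K Ω b * T + algebraMap K Ω c * T ^ 2 = 0) :
    a = 0 ∧ b = 0 ∧ c = 0 := by
  by_contra hne
  have hf : (C c * X ^ 2 + C b * X + C a : K[X]) ≠ 0 := fun hf => hne
    ⟨by simpa using congr_arg (coeff · 0) hf, by simpa [coeff_X] using congr_arg (coeff · 1) hf,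
      by simpa [coeff_X, coeff_C] using congr_arg (coeff · 2) hf⟩
  have hle := natDegree_le_of_dvd (minpoly.dvd K T (by
    simp only [map_add, map_mul, map_pow, aeval_C, aeval_X]
    linear_combination h)) hf
  have := natDegree_quadratic_le (a := c) (b := b) (c := a)
  omega

theorem isAtom_adjoin_of_natDegree_minpoly_eq_three {T : Ω} (hd : (minpoly K T).natDegree = 3) :
    IsAtom K⟮T⟯ := by
  refine isAtom_of_finrank_prime ?_
  rw [adjoin.finrank (isIntegral_of_natDegree_minpoly_ne_zero (by omega)), hd]
  exact Nat.prime_three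

theorem natDegree_minpoly_of_mem_adjoin {T w : Ω} (hd : (minpoly K T).natDegree = 3)
    (hw : w ∈ K⟮T⟯) (hbot : w ∉ (⊥ : IntermediateField K Ω)) :
    (minpoly K w).natDegree = 3 := by
  have hT : IsIntegral K T := isIntegral_of_natDegree_minpoly_ne_zero (by omega)
  have := adjoin.finiteDimensional hT
  have hw' : IsIntegral K w := (isIntegral_iff (x := (⟨w, hw⟩ : K⟮T⟯))).1 (.of_finite K _)
  rw [← adjoin.finrank hw', ← hd, ← adjoin.finrank hT,
    adjoin_simple_eq_of_isAtom (isAtom_adjoin_of_natDegree_minpoly_eq_three hd) hw hbot]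

theorem adjoin_eq_of_natDegree_minpoly_eq_three {T w : Ω} (hT : (minpoly K T).natDegree = 3)
    (hw : (minpoly K w).natDegree = 3) (h : w ∈ K⟮T⟯) : K⟮w⟯ = K⟮T⟯ := by
  refine adjoin_simple_eq_of_isAtom (isAtom_adjoin_of_natDegree_minpoly_eq_three hT) h ?_
  intro hbot
  obtain ⟨k, rfl⟩ := mem_bot.1 hbot
  rw [minpoly.eq_X_sub_C, natDegree_X_sub_C] at hw
  omega

theorem exists_mem_adjoin_cube_add_mul_add_eq_zero (h₃ : (3 : K) ≠ 0) {z : Ω}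
    (hz : (minpoly K z).natDegree = 3) :
    ∃ y ∈ K⟮z⟯, (minpoly K y).natDegree = 3 ∧
      ∃ P Q : K, y ^ 3 + algebraMap K Ω P * y + algebraMap K Ω Q = 0 := by
  obtain ⟨a, b, c, hroot⟩ : ∃ a b c : K, z ^ 3 + algebraMap K Ω (3 * a) * z ^ 2
      + algebraMap K Ω b * z + algebraMap K Ω c = 0 := by
    have hmonic := minpoly.monic (isIntegral_of_natDegree_minpoly_ne_zero (hz ▸ three_ne_zero))
    have hlead : (minpoly K z).coeff 3 = 1 := hz ▸ hmonic
    have hroot := minpoly.aeval K z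
    rw [aeval_eq_sum_range, hz] at hroot
    simp only [Finset.sum_range_succ, Finset.sum_range_zero, hlead, Algebra.smul_def,
      map_one] at hroot
    refine ⟨(minpoly K z).coeff 2 / 3, (minpoly K z).coeff 1, (minpoly K z).coeff 0, ?_⟩
    rw [mul_div_cancel₀ _ h₃]
    linear_combination hroot
  have hmem : z + algebraMap K Ω a ∈ K⟮z⟯ :=
    add_mem (mem_adjoin_simple_self _ z) (IntermediateField.algebraMap_mem _ _)
  refine ⟨_, hmem, natDegree_minpoly_of_mem_adjoin hz hmem fun hbot => ?_,
    b - 3 * a ^ 2, c - a * b + 2 * a ^ 3, ?_⟩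
  · obtain ⟨k, hk⟩ := mem_bot.1 hbot
    exact one_ne_zero (eq_zero_of_natDegree_minpoly_eq_three hz (a := a - k) (b := 1) (c := 0) (by
      rw [map_sub, map_one, map_zero]
      linear_combination -hk)).2.1
  · simp only [map_sub, map_add, map_mul, map_pow, map_ofNat] at hroot ⊢
    linear_combination hroot

variable {R : Type*} [CommRing R] [Algebra R K] [Algebra R Ω]
  [IsScalarTower R K Ω] {A B : R} {T : Ω} {hT : T ^ 3 = algebraMap R Ω A * T + algebraMap R Ω B}

namespace CubicAlgebra

theorem lift_mem_adjoin (x : CubicAlgebra A B) : lift T hT x ∈ K⟮T⟯ := by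
  have hmem : T ∈ K⟮T⟯ := mem_adjoin_simple_self K T
  simp only [lift_apply, IsScalarTower.algebraMap_apply R K Ω]
  exact add_mem (add_mem (IntermediateField.algebraMap_mem _ _)
    (mul_mem (IntermediateField.algebraMap_mem _ _) hmem))
    (mul_mem (IntermediateField.algebraMap_mem _ _) (pow_mem hmem 2))

theorem exists_minpoly_lift_eq {x : CubicAlgebra A B}
    (hx : (minpoly K (lift T hT x)).natDegree = 3) :
    ∃ a b : K, minpoly K (lift T hT x)
      = X ^ 3 + C a * X ^ 2 + C b * X - C (algebraMap R K (norm x)) := by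
  obtain ⟨a, b, h⟩ := exists_cube_add_eq_norm x
  refine ⟨algebraMap R K a, algebraMap R K b,
    (eq_of_monic_of_dvd_of_natDegree_le (minpoly.monic ?_) (by monicity!) (minpoly.dvd K _ ?_)
      ?_).symm⟩
  · exact isIntegral_of_natDegree_minpoly_ne_zero (by omega)
  · have := congr_arg (lift T hT) h
    simp only [Algebra.smul_def, map_add, map_mul, map_pow, AlgHom.commutes] at this
    simp only [map_sub, map_add, map_mul, map_pow, aeval_X, aeval_C,
      ← IsScalarTower.algebraMap_apply R K Ω]
    linear_combination this
  · rw [hx]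
    compute_degree

theorem norm_ne_zero_of_isResolventRoot {L : IntermediateField K Ω} {x : CubicAlgebra A B}
    (h : IsResolventRoot L (lift T hT x)) : norm x ≠ 0 := fun h₀ => by
  obtain ⟨a, b, hx⟩ := exists_minpoly_lift_eq h.natDegree_minpoly
  refine minpoly.coeff_zero_ne_zero (isIntegral_of_natDegree_minpoly_ne_zero (K := K) ?_)
    h.ne_zero ?_
  · rw [h.natDegree_minpoly]
    exact three_ne_zero
  · simp [hx, h₀]

theorem exists_isResolventRoot_lift [CharZero K] [IsAlgClosed Ω] {x : CubicAlgebra A B}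
    (hx : (minpoly K (lift T hT x)).natDegree = 3) {q : R} (hq : norm x = q ^ 2)
    (hsq : ∀ w ∈ K⟮lift T hT x⟯, w ^ 2 ≠ lift T hT x) :
    ∃ L : IntermediateField K Ω, IsResolventRoot L (lift T hT x) := by
  obtain ⟨a, b, h⟩ := exists_minpoly_lift_eq hx
  have hR : minpoly K (lift T hT x)
      = resolventCubic (a / 2) (algebraMap R K q) ((a ^ 2 / 4 - b) / 4) := by
    rw [h, hq, resolventCubic, map_pow, show 2 * (a / 2) = a by ring,
      show (a / 2) ^ 2 - 4 * ((a ^ 2 / 4 - b) / 4) = b by ring]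
  exact exists_isResolventRoot_of_forall_sq_ne
    (hR ▸ minpoly.irreducible (isIntegral_of_natDegree_minpoly_ne_zero (by omega)))
    (hR ▸ minpoly.aeval K _) hsq

section Conjugation

variable {T' : Ω}

theorem minpoly_eq_of_natDegree_eq_three (hd : (minpoly K T).natDegree = 3)
    (hT : T ^ 3 = algebraMap R Ω A * T + algebraMap R Ω B) :
    minpoly K T = X ^ 3 - C (algebraMap R K A) * X - C (algebraMap R K B) := by
  refine (eq_of_monic_of_dvd_of_natDegree_le (minpoly.monic ?_) (by monicity!)
    (minpoly.dvd K T ?_) ?_).symm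
  · exact isIntegral_of_natDegree_minpoly_ne_zero (by omega)
  · simp [hT, ← IsScalarTower.algebraMap_apply R K Ω]
  · rw [hd]
    compute_degree

variable [Normal K Ω]

theorem isConjRoot_lift (hd : (minpoly K T).natDegree = 3) (hd' : (minpoly K T').natDegree = 3)
    {hT : T ^ 3 = algebraMap R Ω A * T + algebraMap R Ω B}
    {hT' : T' ^ 3 = algebraMap R Ω A * T' + algebraMap R Ω B} (x : CubicAlgebra A B) :
    IsConjRoot K (lift T hT x) (lift T' hT' x) := by
  have hconj : IsConjRoot K T T' := by
    rw [IsConjRoot, minpoly_eq_of_natDegree_eq_three hd hT,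
      minpoly_eq_of_natDegree_eq_three hd' hT']
  obtain ⟨σ, rfl⟩ := isConjRoot_iff_exists_algEquiv.1 hconj
  refine isConjRoot_iff_exists_algEquiv.2 ⟨σ, ?_⟩
  simp [lift_apply, IsScalarTower.algebraMap_apply R K Ω]

theorem exists_eq_lift_of_isConjRoot {hT : T ^ 3 = algebraMap R Ω A * T + algebraMap R Ω B}
    {x : CubicAlgebra A B} {z : Ω} (h : IsConjRoot K (lift T hT x) z) :
    ∃ T' hT', IsConjRoot K T T' ∧ z = lift T' hT' x := by
  obtain ⟨σ, rfl⟩ := isConjRoot_iff_exists_algEquiv.1 h.symm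
  refine ⟨σ T, ?_, isConjRoot_iff_exists_algEquiv.2 ⟨σ.symm, σ.symm_apply_apply T⟩, ?_⟩
  · rw [← map_pow, hT]
    simp [IsScalarTower.algebraMap_apply R K Ω]
  · simp [lift_apply, IsScalarTower.algebraMap_apply R K Ω]

theorem exists_lift_eq_lift_mul_sq [CharZero K] [IsAlgClosed Ω]
    (hd : (minpoly K T).natDegree = 3)
    {hT : T ^ 3 = algebraMap R Ω A * T + algebraMap R Ω B} {A' B' : R} {S : Ω}
    (hdS : (minpoly K S).natDegree = 3)
    {hS : S ^ 3 = algebraMap R Ω A' * S + algebraMap R Ω B'} {x : CubicAlgebra A B}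
    {y : CubicAlgebra A' B'} {L : IntermediateField K Ω} (h : IsResolventRoot L (lift T hT x))
    (h' : IsResolventRoot L (lift S hS y)) :
    ∃ T' hT', S ∈ K⟮T'⟯ ∧
      ∃ s ∈ K⟮T'⟯, lift S hS y = lift T' hT' x * s ^ 2 := by
  obtain ⟨z, hz, s, hs, hys⟩ := h.exists_isConjRoot h'
  have hzr := h.of_isConjRoot hz
  obtain ⟨T', hT', hconj, rfl⟩ := exists_eq_lift_of_isConjRoot hz
  have hd' : (minpoly K T').natDegree = 3 := hconj ▸ hd
  rw [adjoin_eq_of_natDegree_minpoly_eq_three hd' hzr.natDegree_minpoly (lift_mem_adjoin x)] at hs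
  refine ⟨T', hT', ?_, s, hs, hys⟩
  rw [← adjoin_simple_le_iff, ← adjoin_eq_of_natDegree_minpoly_eq_three hdS h'.natDegree_minpoly
    (lift_mem_adjoin y), adjoin_simple_le_iff, hys]
  exact mul_mem (lift_mem_adjoin x) (pow_mem hs 2)

end Conjugation

variable [IsFractionRing R K]

theorem lift_injective (hd : (minpoly K T).natDegree = 3) :
    Function.Injective (lift (A := A) (B := B) T hT) := by
  refine (injective_iff_map_eq_zero _).2 fun x hx => ?_
  simp only [lift_apply, IsScalarTower.algebraMap_apply R K Ω] at hx
  obtain ⟨h₁, h₂, h₃⟩ := eq_zero_of_natDegree_minpoly_eq_three hd hx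
  ext
  exacts [IsFractionRing.injective R K (h₁.trans (map_zero _).symm),
    IsFractionRing.injective R K (h₂.trans (map_zero _).symm),
    IsFractionRing.injective R K (h₃.trans (map_zero _).symm)]

theorem natDegree_minpoly_lift (hd : (minpoly K T).natDegree = 3) {x : CubicAlgebra A B}
    (hx : x.x₂ ≠ 0 ∨ x.x₃ ≠ 0) : (minpoly K (lift T hT x)).natDegree = 3 := by
  refine natDegree_minpoly_of_mem_adjoin hd (lift_mem_adjoin x) fun hbot => ?_
  obtain ⟨k, hk⟩ := mem_bot.1 hbot
  have h : algebraMap K Ω (algebraMap R K x.x₁ - k) + algebraMap K Ω (algebraMap R K x.x₂) * T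
      + algebraMap K Ω (algebraMap R K x.x₃) * T ^ 2 = 0 := by
    rw [lift_apply] at hk
    rw [map_sub]
    simp only [← IsScalarTower.algebraMap_apply R K Ω]
    linear_combination -hk
  obtain ⟨-, h₂, h₃⟩ := eq_zero_of_natDegree_minpoly_eq_three hd h
  exact hx.elim (· (IsFractionRing.injective R K (h₂.trans (map_zero _).symm)))
    (· (IsFractionRing.injective R K (h₃.trans (map_zero _).symm)))

theorem exists_norm_eq_sq_of_isResolventRoot [IsIntegrallyClosed R] {L : IntermediateField K Ω}
    {x : CubicAlgebra A B} (h : IsResolventRoot L (lift T hT x)) : ∃ q : R, norm x = q ^ 2 := by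
  obtain ⟨p, q, r, hz⟩ := h.exists_minpoly_eq
  obtain ⟨a, b, hx⟩ := exists_minpoly_lift_eq h.natDegree_minpoly
  have hq : q ^ 2 = algebraMap R K (norm x) := by
    have := congr_arg (eval 0) (hz.symm.trans hx)
    simpa [resolventCubic] using this
  obtain ⟨s, rfl⟩ := IsIntegrallyClosed.exists_algebraMap_eq_of_isIntegral_pow (R := R) two_pos
    (hq ▸ isIntegral_algebraMap)
  exact ⟨s, IsFractionRing.injective R K (by rw [← hq, map_pow])⟩

end CubicAlgebra

end CubicField

/-! ### Cubic extensions of `ℚ_[2]` -/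

section Hensel

theorem exists_eval_eq_zero_of_dvd {S : Type*} [CommRing S] {a : S}
    [IsAdicComplete (Ideal.span {a}) S] {f : S[X]} (hf : f.Monic) {x₀ d : S}
    (hx₀ : a ∣ f.eval x₀) (hd : a ∣ f.derivative.eval x₀ * d - 1) : ∃ x, f.eval x = 0 := by
  have hunit : IsUnit (Ideal.Quotient.mk (Ideal.span {a}) (f.derivative.eval x₀)) := by
    refine .of_mul_eq_one (Ideal.Quotient.mk _ d) ?_
    rw [← map_mul, ← map_one (Ideal.Quotient.mk _), Ideal.Quotient.mk_eq_mk_iff_sub_mem]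
    exact Ideal.mem_span_singleton.2 hd
  obtain ⟨x, hx, -⟩ := HenselianRing.is_henselian f hf x₀ (Ideal.mem_span_singleton.2 hx₀) hunit
  exact ⟨x, hx⟩

end Hensel

section TwoAdic

instance : IsAdicComplete (Ideal.span {(2 : ℤ_[2])}) ℤ_[2] := by
  have : IsAdicComplete (IsLocalRing.maximalIdeal ℤ_[2]) ℤ_[2] := inferInstance
  rwa [PadicInt.maximalIdeal_eq_span_p, Nat.cast_ofNat] at this

theorem irreducible_two : Irreducible (2 : ℤ_[2]) := PadicInt.irreducible_p (p := 2)

theorem isUnit_iff_not_two_dvd {x : ℤ_[2]} : IsUnit x ↔ ¬ 2 ∣ x := by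
  rw [← not_iff_not, not_not, PadicInt.not_isUnit_iff, PadicInt.norm_lt_one_iff_dvd,
    Nat.cast_ofNat]

theorem two_dvd_or_two_dvd_sub_one (x : ℤ_[2]) : 2 ∣ x ∨ 2 ∣ x - 1 := by
  obtain ⟨n, hn, hx⟩ := PadicInt.exists_mem_range x
  rw [PadicInt.maximalIdeal_eq_span_p, Ideal.mem_span_singleton, Nat.cast_ofNat] at hx
  interval_cases n
  exacts [.inl (by simpa using hx), .inr (by simpa using hx)]

theorem exists_cube_eq_of_isUnit {u : ℤ_[2]} (hu : IsUnit u) : ∃ v : ℤ_[2], v ^ 3 = u := by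
  have hu' := (two_dvd_or_two_dvd_sub_one u).resolve_left (isUnit_iff_not_two_dvd.1 hu)
  obtain ⟨v, hv⟩ := exists_eval_eq_zero_of_dvd (a := 2) (f := X ^ 3 - C u) (by monicity!)
    (x₀ := 1) (d := 1) (by simpa [← dvd_neg (b := u - 1)] using hu')
    ⟨1, by norm_num⟩
  exact ⟨v, by simpa [sub_eq_zero] using hv⟩

theorem exists_cube_sub_three_mul_eq {t : ℤ_[2]} (ht : 2 ∣ t) :
    ∃ v : ℤ_[2], v ^ 3 - 3 * v = t := by
  obtain ⟨v, hv⟩ := exists_eval_eq_zero_of_dvd (a := 2) (f := X ^ 3 - C 3 * X - C t)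
    (by monicity!) (x₀ := 0) (d := 1) (by simpa using ht)
    ⟨-2, by norm_num⟩
  exact ⟨v, by simpa [sub_eq_zero] using hv⟩

theorem exists_sq_sub_self_eq {t : ℤ_[2]} (ht : 2 ∣ t) : ∃ v : ℤ_[2], v ^ 2 - v = t := by
  obtain ⟨v, hv⟩ := exists_eval_eq_zero_of_dvd (a := 2) (f := X ^ 2 - X - C t)
    (by monicity!) (x₀ := 0) (d := -1) (by simpa using ht)
    ⟨0, by simp⟩
  exact ⟨v, by simpa [sub_eq_zero] using hv⟩

theorem exists_integer_mul_eq {c : ℚ_[2]} (hc : c ≠ 0) :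
    ∃ a b : ℤ_[2], a ≠ 0 ∧ b ≠ 0 ∧
      c * algebraMap ℤ_[2] ℚ_[2] b = algebraMap ℤ_[2] ℚ_[2] a := by
  obtain ⟨a, b, hb, rfl⟩ := IsFractionRing.div_surjective (A := ℤ_[2]) c
  have hb₀ : algebraMap ℤ_[2] ℚ_[2] b ≠ 0 := by
    simpa using nonZeroDivisors.ne_zero hb
  refine ⟨a, b, ?_, nonZeroDivisors.ne_zero hb, div_mul_cancel₀ _ hb₀⟩
  rintro rfl
  simp at hc

theorem exists_mul_cube_eq_two_pow {c : ℚ_[2]} (hc : c ≠ 0) :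
    ∃ k : ℚ_[2], k ≠ 0 ∧ ∃ i < 3, c * k ^ 3 = 2 ^ i := by
  obtain ⟨a, b, ha, hb, hab⟩ := exists_integer_mul_eq hc
  obtain ⟨n, u, hu⟩ := IsDiscreteValuationRing.eq_unit_mul_pow_irreducible
    (mul_ne_zero ha (pow_ne_zero 2 hb)) irreducible_two
  obtain ⟨v, hv⟩ := exists_cube_eq_of_isUnit u.isUnit
  set φ := algebraMap ℤ_[2] ℚ_[2]
  have hb' : φ b ≠ 0 := by simpa [φ] using hb
  have hv' : φ v ≠ 0 := by
    have : v ≠ 0 := by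
      rintro rfl
      exact u.ne_zero (by rw [← hv, zero_pow three_ne_zero])
    simpa [φ] using this
  have h : c * φ b ^ 3 = φ v ^ 3 * 2 ^ (3 * (n / 3) + n % 3) := by
    have := congr_arg φ hu
    rw [← hv] at this
    simp only [map_mul, map_pow, map_ofNat] at this
    rw [Nat.div_add_mod]
    linear_combination φ b ^ 2 * hab + this
  refine ⟨φ b / (φ v * 2 ^ (n / 3)), by simp [hb', hv'], n % 3, Nat.mod_lt _ three_pos, ?_⟩
  rw [div_pow, ← mul_div_assoc, h, pow_add, pow_mul']
  field_simp

theorem eq_algebraMap_or_mul_eq_one (t : ℚ_[2]) :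
    (∃ t₀, t = algebraMap ℤ_[2] ℚ_[2] t₀) ∨ ∃ e, t * algebraMap ℤ_[2] ℚ_[2] (2 * e) = 1 := by
  rcases le_or_gt ‖t‖ 1 with ht | ht
  · exact .inl ⟨⟨t, ht⟩, rfl⟩
  · right
    have hinv : ‖t⁻¹‖ < 1 := by
      rw [norm_inv]
      exact inv_lt_one_of_one_lt₀ ht
    have ht₀ : t ≠ 0 := norm_pos_iff.1 (one_pos.trans ht)
    obtain ⟨e, he⟩ := (PadicInt.norm_lt_one_iff_dvd (⟨t⁻¹, hinv.le⟩ : ℤ_[2])).1 hinv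
    refine ⟨e, ?_⟩
    rw [Nat.cast_ofNat] at he
    rw [← he]
    exact mul_inv_cancel₀ ht₀

variable {Ω : Type*} [Field Ω] [Algebra ℚ_[2] Ω]

theorem exists_mem_adjoin_cube_eq_two {y : Ω} (hy : (minpoly ℚ_[2] y).natDegree = 3) {c : ℚ_[2]}
    (hc : y ^ 3 = algebraMap ℚ_[2] Ω c) : ∃ w ∈ ℚ_[2]⟮y⟯, w ^ 3 = 2 := by
  have hy₀ : c ≠ 0 := by
    rintro rfl
    have := eq_zero_of_natDegree_minpoly_eq_three hy (a := 0) (b := 1) (c := 0) (by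
      simpa using hc)
    exact one_ne_zero this.2.1
  obtain ⟨k, hk, i, hi, h⟩ := exists_mul_cube_eq_two_pow hy₀
  have hw : algebraMap _ Ω k * y ∈ ℚ_[2]⟮y⟯ :=
    mul_mem (IntermediateField.algebraMap_mem _ _) (mem_adjoin_simple_self _ y)
  have hw₃ : (algebraMap _ Ω k * y) ^ 3 = 2 ^ i := by
    rw [mul_pow, hc, ← map_pow, ← map_mul, mul_comm, h, map_pow, map_ofNat]
  interval_cases i
  · exfalso
    rw [← sub_eq_zero, show (algebraMap _ Ω k * y) ^ 3 - 2 ^ 0 = (algebraMap _ Ω k * y - 1) *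
      ((algebraMap _ Ω k * y) ^ 2 + algebraMap _ Ω k * y + 1) by ring, mul_eq_zero] at hw₃
    refine hk ?_
    rcases hw₃ with h | h
    · exact (eq_zero_of_natDegree_minpoly_eq_three hy (a := -1) (b := k) (c := 0) (by
        simp only [map_neg, map_one, map_zero]
        linear_combination h)).2.1
    · exact (eq_zero_of_natDegree_minpoly_eq_three hy (a := 1) (b := k) (c := k ^ 2) (by
        simp only [map_pow, map_one]
        linear_combination h)).2.1
  · exact ⟨_, hw, by simpa using hw₃⟩
  · have : CharZero Ω := charZero_of_injective_algebraMap (algebraMap ℚ_[2] Ω).injective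
    refine ⟨(algebraMap _ Ω k * y) ^ 2 / 2, div_mem (pow_mem hw 2) (ofNat_mem _ 2), ?_⟩
    field_simp
    linear_combination ((algebraMap _ Ω k * y) ^ 3 + 4) * hw₃

theorem exists_mem_adjoin_cube_eq_three_mul_sub_one [Algebra ℤ_[2] Ω]
    [IsScalarTower ℤ_[2] ℚ_[2] Ω] {T : Ω} {t : ℤ_[2]}
    (ht : 2 ∣ t - 1) (hT : T ^ 3 = algebraMap ℤ_[2] Ω 3 * T + algebraMap ℤ_[2] Ω t) :
    ∃ w ∈ ℚ_[2]⟮T⟯, w ^ 3 = 3 * w - 1 := by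
  obtain ⟨s, hs⟩ := ht
  obtain rfl : t = 2 * s + 1 := by linear_combination hs
  have hroot := CubicAlgebra.root_cube (A := (3 : ℤ_[2])) (B := 2 * s + 1)
  simp only [map_add, map_mul, map_ofNat, map_one] at hroot
  obtain ⟨w, hw⟩ := exists_eval_eq_zero_of_dvd
    (a := algebraMap ℤ_[2] (CubicAlgebra 3 (2 * s + 1)) 2) (f := X ^ 3 - 3 * X - 1) (by monicity!)
    (x₀ := .root) (d := .root)
    ⟨algebraMap _ _ s, by
      simp only [eval_sub, eval_pow, eval_X, eval_mul, eval_ofNat, eval_one, map_ofNat]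
      linear_combination hroot⟩
    ⟨3 * .root + 1 + 3 * algebraMap _ _ s, by
      simp only [derivative_sub, derivative_X_pow, derivative_mul, derivative_ofNat, derivative_X,
        derivative_one, eval_sub, eval_mul, eval_add, eval_C, eval_pow, eval_X, eval_ofNat,
        eval_zero, eval_one, map_ofNat]
      push_cast
      linear_combination 3 * hroot⟩
  refine ⟨-CubicAlgebra.lift T hT w, neg_mem (CubicAlgebra.lift_mem_adjoin w), ?_⟩
  have := congr_arg (CubicAlgebra.lift T hT) hw
  simp only [eval_sub, eval_pow, eval_X, eval_mul, eval_ofNat, eval_one, map_sub, map_pow,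
    map_mul, map_ofNat, map_one, map_zero] at this
  linear_combination -this

theorem exists_mem_adjoin_cube_eq_two_of_mul_eq_one {T : Ω} (hd : (minpoly ℚ_[2] T).natDegree = 3)
    {t : ℚ_[2]} (hT : T ^ 3 = 3 * T + algebraMap ℚ_[2] Ω t) {e : ℤ_[2]}
    (ht : t * algebraMap ℤ_[2] ℚ_[2] (2 * e) = 1) :
    ∃ w ∈ ℚ_[2]⟮T⟯, w ^ 3 = 2 := by
  obtain ⟨v, hv⟩ := exists_sq_sub_self_eq (t := -(2 * e) ^ 2)
    (dvd_neg.2 ((dvd_mul_right 2 e).trans (dvd_pow_self _ two_ne_zero)))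
  set l := t * algebraMap ℤ_[2] ℚ_[2] v
  have hl : l ^ 2 - t * l + 1 = 0 := by
    have h := congr_arg (algebraMap ℤ_[2] ℚ_[2]) hv
    rw [map_sub, map_neg, map_pow, map_pow] at h
    linear_combination t ^ 2 * h - (t * algebraMap ℤ_[2] ℚ_[2] (2 * e) + 1) * ht
  have hlΩ := congr_arg (algebraMap ℚ_[2] Ω) hl
  simp only [map_add, map_sub, map_mul, map_pow, map_one, map_zero] at hlΩ
  have hne : T ^ 2 - 1 ≠ 0 := fun h =>
    one_ne_zero (eq_zero_of_natDegree_minpoly_eq_three hd (a := -1) (b := 0) (c := 1) (by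
      simp only [map_neg, map_one, map_zero]
      linear_combination h)).2.2
  set r := (algebraMap _ Ω l + T) / (T ^ 2 - 1) with hr_def
  have hr : r ^ 3 = algebraMap ℚ_[2] Ω l := by
    rw [hr_def]
    field_simp
    linear_combination (1 - algebraMap _ Ω l * (algebraMap _ Ω t + T ^ 3)) * hT
      + (3 * T + algebraMap _ Ω t + algebraMap _ Ω l) * hlΩ
  have hmem : r ∈ ℚ_[2]⟮T⟯ := by
    have hmem : T ∈ ℚ_[2]⟮T⟯ := mem_adjoin_simple_self _ T
    exact div_mem (add_mem (IntermediateField.algebraMap_mem _ _) hmem)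
      (sub_mem (pow_mem hmem 2) (one_mem _))
  have hd' := natDegree_minpoly_of_mem_adjoin hd hmem fun hbot => by
    obtain ⟨k, hk⟩ := mem_bot.1 hbot
    rw [hr_def, eq_div_iff hne] at hk
    exact one_ne_zero (eq_zero_of_natDegree_minpoly_eq_three hd (a := l + k) (b := 1) (c := -k) (by
      simp only [map_neg, map_one, map_add]
      linear_combination -hk)).2.1
  obtain ⟨w, hw, hw₃⟩ := exists_mem_adjoin_cube_eq_two hd' hr
  exact ⟨w, adjoin_simple_le_iff.2 hmem hw, hw₃⟩

theorem exists_mem_adjoin_of_cube_eq_three_mul_add [Algebra ℤ_[2] Ω]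
    [IsScalarTower ℤ_[2] ℚ_[2] Ω] {T : Ω} (hd : (minpoly ℚ_[2] T).natDegree = 3) {t : ℚ_[2]}
    (hT : T ^ 3 = 3 * T + algebraMap ℚ_[2] Ω t) :
    ∃ w ∈ ℚ_[2]⟮T⟯, w ^ 3 = 2 ∨ w ^ 3 = 3 * w - 1 := by
  rcases eq_algebraMap_or_mul_eq_one t with ⟨t, rfl⟩ | ⟨e, he⟩
  · rcases two_dvd_or_two_dvd_sub_one t with ht | ht
    · exfalso
      obtain ⟨v, rfl⟩ := exists_cube_sub_three_mul_eq ht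
      set k := algebraMap ℤ_[2] ℚ_[2] v
      have hfac : (T - algebraMap _ Ω k) *
          (T ^ 2 + algebraMap _ Ω k * T + algebraMap _ Ω (k ^ 2 - 3)) = 0 := by
        simp only [map_sub, map_mul, map_pow, map_ofNat] at hT ⊢
        linear_combination hT
      rcases mul_eq_zero.1 hfac with h | h
      · exact one_ne_zero (eq_zero_of_natDegree_minpoly_eq_three hd (a := -k) (b := 1) (c := 0) (by
          simp only [map_neg, map_one, map_zero]
          linear_combination h)).2.1
      · exact one_ne_zero (eq_zero_of_natDegree_minpoly_eq_three hd (a := k ^ 2 - 3) (b := k)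
          (c := 1) (by
            rw [map_one]
            linear_combination h)).2.2
    · rw [← IsScalarTower.algebraMap_apply] at hT
      obtain ⟨w, hw, hw₃⟩ :=
        exists_mem_adjoin_cube_eq_three_mul_sub_one ht (T := T) (by rwa [map_ofNat])
      exact ⟨w, hw, .inr hw₃⟩
  · obtain ⟨w, hw, hw₃⟩ := exists_mem_adjoin_cube_eq_two_of_mul_eq_one hd hT he
    exact ⟨w, hw, .inl hw₃⟩

theorem exists_mem_adjoin_of_natDegree_minpoly_eq_three [Algebra ℤ_[2] Ω]
    [IsScalarTower ℤ_[2] ℚ_[2] Ω] {z : Ω} (hz : (minpoly ℚ_[2] z).natDegree = 3) :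
    ∃ w ∈ ℚ_[2]⟮z⟯, w ^ 3 = 2 ∨ w ^ 3 = 3 * w - 1 := by
  obtain ⟨y, hy, hd, P, Q, hPQ⟩ := exists_mem_adjoin_cube_add_mul_add_eq_zero three_ne_zero hz
  suffices ∃ w ∈ ℚ_[2]⟮y⟯, w ^ 3 = 2 ∨ w ^ 3 = 3 * w - 1 by
    obtain ⟨w, hw, h⟩ := this
    exact ⟨w, adjoin_simple_le_iff.2 hy hw, h⟩
  by_cases hP : P = 0
  · subst hP
    obtain ⟨w, hw, hw₃⟩ := exists_mem_adjoin_cube_eq_two hd (c := -Q) (by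
      rw [map_zero] at hPQ
      rw [map_neg]
      linear_combination hPQ)
    exact ⟨w, hw, .inl hw₃⟩
  -- The substitution `T = -3 y² / P - 2` normalizes the linear coefficient to `-3`.
  set T := algebraMap _ Ω (-3 / P) * y ^ 2 - 2 with hT_def
  have hmem : T ∈ ℚ_[2]⟮y⟯ :=
    sub_mem (mul_mem (IntermediateField.algebraMap_mem _ _)
      (pow_mem (mem_adjoin_simple_self _ y) 2)) (ofNat_mem _ 2)
  have hd' := natDegree_minpoly_of_mem_adjoin hd hmem fun hbot => by
    obtain ⟨k, hk⟩ := mem_bot.1 hbot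
    have := eq_zero_of_natDegree_minpoly_eq_three hd (a := -2 - k) (b := 0) (c := -3 / P) (by
      simp only [map_sub, map_neg, map_ofNat, map_zero]
      linear_combination -hk)
    simpa [hP] using this.2.2
  have hT : T ^ 3 = 3 * T + algebraMap _ Ω (-27 * Q ^ 2 / P ^ 3 - 2) := by
    have hP' : algebraMap _ Ω P ≠ 0 := by simpa using hP
    simp only [hT_def, map_sub, map_mul, map_div₀, map_neg, map_pow, map_ofNat]
    field_simp
    linear_combination (27 * (algebraMap _ Ω Q - y ^ 3 - algebraMap _ Ω P * y)) * hPQ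
  obtain ⟨w, hw, h⟩ := exists_mem_adjoin_of_cube_eq_three_mul_add hd' hT
  exact ⟨w, adjoin_simple_le_iff.2 hmem hw, h⟩

end TwoAdic

/-! ### Square classes modulo `8` -/

namespace CubicAlgebra

section Reduction

variable {A B : ℤ_[2]} {A' B' : ZMod (2 ^ 3)} (hA : PadicInt.toZModPow 3 A = A')
  (hB : PadicInt.toZModPow 3 B = B')

/-- The reduction map modulo `8`, through which square classes of units are computed. -/
noncomputable def reduce : CubicAlgebra A B →+* CubicAlgebra A' B' :=
  map (PadicInt.toZModPow 3) hA hB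

theorem norm_reduce (x : CubicAlgebra A B) :
    norm (reduce hA hB x) = PadicInt.toZModPow 3 (norm x) :=
  norm_map _ hA hB x

theorem reduce_surjective : Function.Surjective (reduce hA hB) := fun x => by
  obtain ⟨a, ha⟩ := ZMod.ringHom_surjective (PadicInt.toZModPow (p := 2) 3) x.x₁
  obtain ⟨b, hb⟩ := ZMod.ringHom_surjective (PadicInt.toZModPow (p := 2) 3) x.x₂
  obtain ⟨c, hc⟩ := ZMod.ringHom_surjective (PadicInt.toZModPow (p := 2) 3) x.x₃
  exact ⟨⟨a, b, c⟩, CubicAlgebra.ext ha hb hc⟩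

theorem toZModPow_three_eq_zero_iff {a : ℤ_[2]} : PadicInt.toZModPow 3 a = 0 ↔ 8 ∣ a := by
  rw [← RingHom.mem_ker, PadicInt.ker_toZModPow, Ideal.mem_span_singleton]
  norm_num

theorem reduce_eq_zero_iff {x : CubicAlgebra A B} : reduce hA hB x = 0 ↔ 8 ∣ x := by
  rw [← map_ofNat (algebraMap ℤ_[2] (CubicAlgebra A B)) 8, algebraMap_dvd_iff, reduce, map_apply,
    CubicAlgebra.ext_iff]
  simp only [zero_def, toZModPow_three_eq_zero_iff]

theorem two_dvd_iff_four_mul_reduce_eq_zero {x : CubicAlgebra A B} :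
    2 ∣ x ↔ 4 * reduce hA hB x = 0 := by
  have h₈ : (8 : ℤ_[2]) = 4 * 2 := by norm_num
  have h₄ : (4 : ℤ_[2]) ≠ 0 := by norm_num
  rw [← map_ofNat (reduce hA hB) 4, ← map_mul, reduce_eq_zero_iff,
    ← map_ofNat (algebraMap ℤ_[2] (CubicAlgebra A B)) 8,
    ← map_ofNat (algebraMap ℤ_[2] (CubicAlgebra A B)) 4,
    ← map_ofNat (algebraMap ℤ_[2] (CubicAlgebra A B)) 2, algebraMap_dvd_iff, ← Algebra.smul_def,
    algebraMap_dvd_iff, h₈]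
  simp only [smul_def, mul_dvd_mul_iff_left h₄]

include hA hB in
theorem two_dvd_of_two_pow_dvd_pow {n k : ℕ} (hk : 3 ≤ k + n)
    (hn : ∀ x : CubicAlgebra A' B', 2 ^ k * x ^ n = 0 → 4 * x = 0) {x : CubicAlgebra A B}
    (hx : 2 ^ n ∣ x ^ n) : 2 ∣ x := by
  rw [two_dvd_iff_four_mul_reduce_eq_zero hA hB]
  refine hn _ ?_
  rw [← map_pow, ← map_ofNat (reduce hA hB) 2, ← map_pow, ← map_mul, reduce_eq_zero_iff]
  have h := (pow_dvd_pow 2 hk).trans (pow_add (2 : CubicAlgebra A B) k n ▸ mul_dvd_mul_left _ hx)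
  rwa [show (8 : CubicAlgebra A B) = 2 ^ 3 by norm_num]

theorem isUnit_of_isUnit_reduce {x : CubicAlgebra A B} (h : IsUnit (reduce hA hB x)) :
    IsUnit x := by
  rw [isUnit_iff_isUnit_norm, isUnit_iff_not_two_dvd]
  rintro ⟨a, ha⟩
  have h₈ : IsUnit (PadicInt.toZModPow 3 (2 * a)) := ha ▸ norm_reduce hA hB x ▸ h.map norm
  rw [map_mul, map_ofNat] at h₈
  exact absurd (isUnit_of_mul_isUnit_left h₈) (by decide +kernel)

theorem exists_sq_eq_one_add_eight_mul (w : CubicAlgebra A B) :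
    ∃ y, IsUnit y ∧ y ^ 2 = 1 + 8 * w := by
  obtain ⟨x, hx⟩ := exists_eval_eq_zero_of_dvd (a := algebraMap ℤ_[2] (CubicAlgebra A B) 2)
    (f := X ^ 2 + X - C (2 * w)) (by monicity!) (x₀ := 0) (d := 1)
    ⟨-w, by simp [map_ofNat]⟩ ⟨0, by simp⟩
  simp only [eval_sub, eval_add, eval_pow, eval_X, eval_C] at hx
  have hy : (1 + 2 * x) ^ 2 = 1 + 8 * w := by linear_combination 4 * hx
  refine ⟨1 + 2 * x, ?_, hy⟩
  rw [← isUnit_pow_iff two_ne_zero, hy]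
  refine isUnit_of_isUnit_reduce rfl rfl ?_
  rw [map_add, map_one, (reduce_eq_zero_iff _ _).2 (dvd_mul_right 8 w), add_zero]
  exact isUnit_one

theorem exists_eq_mul_sq_of_reduce_eq {u v : CubicAlgebra A B} (hv : IsUnit (reduce hA hB v))
    (h : reduce hA hB u = reduce hA hB v) : ∃ y, IsUnit y ∧ u = v * y ^ 2 := by
  obtain ⟨v, rfl⟩ := isUnit_of_isUnit_reduce hA hB hv
  obtain ⟨w, hw⟩ := (reduce_eq_zero_iff hA hB).1 ((map_sub _ _ _).trans (sub_eq_zero.2 h))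
  obtain ⟨y, hy, hy₂⟩ := exists_sq_eq_one_add_eight_mul (w * (↑v⁻¹ : CubicAlgebra A B))
  refine ⟨y, hy, ?_⟩
  rw [hy₂]
  linear_combination hw - 8 * w * v.mul_inv

theorem exists_eq_mul_sq_of_reduce_mul_sq_eq {u v : CubicAlgebra A B}
    (hv : IsUnit (reduce hA hB v)) {t : CubicAlgebra A' B'}
    (h : reduce hA hB u * t ^ 2 = reduce hA hB v) : ∃ y, u = v * y ^ 2 := by
  obtain ⟨t, rfl⟩ := reduce_surjective hA hB t
  obtain ⟨y, hy, h'⟩ := exists_eq_mul_sq_of_reduce_eq hA hB hv (u := u * t ^ 2) (by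
    rwa [map_mul, map_pow])
  have ht : IsUnit t := (isUnit_pow_iff two_ne_zero).1 (isUnit_of_mul_isUnit_right
    (h' ▸ (isUnit_of_isUnit_reduce hA hB hv).mul (hy.pow 2)))
  obtain ⟨t, rfl⟩ := ht
  refine ⟨y * ↑t⁻¹, ?_⟩
  linear_combination (↑t⁻¹ : CubicAlgebra A B) ^ 2 * h' - u * (1 + t * ↑t⁻¹) * t.mul_inv

end Reduction

section Uniformizer

variable {A B : ℤ_[2]} {ϖ : CubicAlgebra A B} {m : ℕ}

theorem exists_eq_pow_mul_isUnit (hϖ : ∀ x : CubicAlgebra A B, 2 ∣ norm x → ϖ ∣ x)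
    (hm : ¬ IsUnit (norm ϖ)) {x : CubicAlgebra A B} (hx : norm x ≠ 0) :
    ∃ n u, IsUnit u ∧ x = ϖ ^ n * u := by
  have hfin : FiniteMultiplicity ϖ x := by
    obtain ⟨n, hn⟩ := FiniteMultiplicity.of_not_isUnit hm hx
    exact ⟨n, fun h => hn (map_pow norm ϖ _ ▸ map_dvd norm h)⟩
  obtain ⟨u, hu, hndvd⟩ := hfin.exists_eq_pow_mul_and_not_dvd
  exact ⟨_, u, isUnit_iff_isUnit_norm.2 (isUnit_iff_not_two_dvd.2 (mt (hϖ u) hndvd)), hu⟩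

theorem toZModPow_norm_eq_one_of_isUnit {u : CubicAlgebra A B} {q : ℤ_[2]} (hu : IsUnit u)
    (hq : norm u = q ^ 2) :
    PadicInt.toZModPow 3 (norm u) = 1 := by
  have hunit : IsUnit (PadicInt.toZModPow 3 q) :=
    ((isUnit_pow_iff two_ne_zero).1 (hq ▸ hu.map norm)).map _
  rw [hq, map_pow]
  revert hunit
  generalize PadicInt.toZModPow 3 q = a
  revert a
  decide +kernel

theorem exists_eq_mul_sq_of_norm_eq_sq (hϖ : ∀ x : CubicAlgebra A B, 2 ∣ norm x → ϖ ∣ x)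
    (hm : norm ϖ = 2 ^ m) (hodd : Odd m) {x : CubicAlgebra A B} (hx : norm x ≠ 0) {q : ℤ_[2]}
    (hq : norm x = q ^ 2) :
    ∃ u t, x = u * t ^ 2 ∧ PadicInt.toZModPow 3 (norm u) = 1 := by
  obtain ⟨n, u, hu, rfl⟩ := exists_eq_pow_mul_isUnit hϖ (by
    rw [hm, isUnit_pow_iff hodd.pos.ne']
    exact irreducible_two.not_isUnit) hx
  have hq₀ : q ≠ 0 := by
    rintro rfl
    exact hx (by simpa using hq)
  obtain ⟨k, v, rfl⟩ := IsDiscreteValuationRing.eq_unit_mul_pow_irreducible hq₀ irreducible_two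
  obtain ⟨w, hw⟩ := hu.map norm
  have hval : m * n = k * 2 :=
    IsDiscreteValuationRing.unit_mul_pow_congr_pow irreducible_two irreducible_two w (v ^ 2) _ _ (by
      rw [map_mul, map_pow, hm, ← hw] at hq
      push_cast
      rw [pow_mul, pow_mul]
      linear_combination hq)
  obtain ⟨j, rfl⟩ : Even n := by
    have : Even (m * n) := ⟨k, by omega⟩
    exact (Nat.even_mul.1 this).resolve_left (Nat.not_even_iff_odd.2 hodd)
  refine ⟨u, ϖ ^ j, by ring, toZModPow_norm_eq_one_of_isUnit hu (q := v) ?_⟩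
  have h₂ : (2 : ℤ_[2]) ^ (k * 2) ≠ 0 := pow_ne_zero _ two_ne_zero
  refine mul_left_cancel₀ h₂ ?_
  rw [map_mul, map_pow, hm, ← pow_mul, hval] at hq
  rw [hq]
  ring

end Uniformizer

section IntegralClosure

variable {Ω : Type*} [Field Ω] [Algebra ℚ_[2] Ω] [Algebra ℤ_[2] Ω] [IsScalarTower ℤ_[2] ℚ_[2] Ω]
  {A B : ℤ_[2]} {T : Ω} {hT : T ^ 3 = algebraMap ℤ_[2] Ω A * T + algebraMap ℤ_[2] Ω B}

theorem exists_two_pow_mul_eq_algebraMap (c : ℚ_[2]) :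
    ∃ k : ℕ, ∃ a : ℤ_[2], 2 ^ k * c = algebraMap ℤ_[2] ℚ_[2] a := by
  rcases eq_or_ne c 0 with rfl | hc
  · exact ⟨0, 0, by simp⟩
  obtain ⟨a, b, -, hb, hab⟩ := exists_integer_mul_eq hc
  obtain ⟨k, u, rfl⟩ := IsDiscreteValuationRing.eq_unit_mul_pow_irreducible hb irreducible_two
  refine ⟨k, a * ↑u⁻¹, ?_⟩
  have hu := congr_arg (algebraMap ℤ_[2] ℚ_[2]) u.mul_inv
  simp only [map_mul, map_pow, map_ofNat, map_one] at hab hu ⊢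
  linear_combination algebraMap ℤ_[2] ℚ_[2] ↑u⁻¹ * hab - 2 ^ k * c * hu

theorem exists_two_pow_mul_eq_lift {y : Ω} (hy : y ∈ ℚ_[2]⟮T⟯) :
    ∃ k : ℕ, ∃ x, 2 ^ k * y = lift T hT x := by
  have h_int : IsIntegral ℚ_[2] T :=
    ⟨X ^ 3 - C (algebraMap ℤ_[2] ℚ_[2] A) * X - C (algebraMap ℤ_[2] ℚ_[2] B), by monicity!, by
      simp [hT, IsScalarTower.algebraMap_apply ℤ_[2] ℚ_[2] Ω]⟩
  rw [← mem_toSubalgebra, adjoin_simple_toSubalgebra_of_isAlgebraic h_int.isAlgebraic] at hy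
  induction hy using Algebra.adjoin_induction with
  | mem y hy =>
    obtain rfl := hy
    exact ⟨0, root, by simp [lift_apply, root]⟩
  | algebraMap c =>
    obtain ⟨k, a, ha⟩ := exists_two_pow_mul_eq_algebraMap c
    refine ⟨k, algebraMap _ _ a, ?_⟩
    rw [AlgHom.commutes, IsScalarTower.algebraMap_apply ℤ_[2] ℚ_[2], ← ha, map_mul, map_pow,
      map_ofNat]
  | add y y' _ _ h h' =>
    obtain ⟨k, x, hx⟩ := h
    obtain ⟨k', x', hx'⟩ := h'
    refine ⟨k + k', 2 ^ k' * x + 2 ^ k * x', ?_⟩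
    simp only [map_add, map_mul, map_pow, map_ofNat, ← hx, ← hx']
    ring
  | mul y y' _ _ h h' =>
    obtain ⟨k, x, hx⟩ := h
    obtain ⟨k', x', hx'⟩ := h'
    refine ⟨k + k', x * x', ?_⟩
    rw [map_mul, ← hx, ← hx']
    ring

theorem exists_pow_eq_of_pow_eq_lift (hd : (minpoly ℚ_[2] T).natDegree = 3) {n : ℕ}
    (hn : ∀ x : CubicAlgebra A B, 2 ^ n ∣ x ^ n → 2 ∣ x) {y : Ω} (hy : y ∈ ℚ_[2]⟮T⟯)
    {c : CubicAlgebra A B} (h : y ^ n = lift T hT c) : ∃ x, x ^ n = c := by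
  have hinj := lift_injective (hT := hT) hd
  have : CharZero Ω := charZero_of_injective_algebraMap (algebraMap ℚ_[2] Ω).injective
  obtain ⟨k, x, hx⟩ := exists_two_pow_mul_eq_lift (hT := hT) hy
  induction k generalizing x with
  | zero =>
    rw [pow_zero, one_mul] at hx
    exact ⟨x, hinj (by rw [map_pow, ← hx, h])⟩
  | succ k ih =>
    have hpow : x ^ n = 2 ^ n * ((2 ^ k) ^ n * c) := hinj (by
      simp only [map_pow, map_mul, map_ofNat, ← hx, ← h]
      ring)
    obtain ⟨x', rfl⟩ := hn x ⟨_, hpow⟩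
    refine ih x' (mul_left_cancel₀ two_ne_zero ?_)
    rw [← mul_assoc, ← pow_succ', hx, map_mul, map_ofNat]

theorem pow_ne_lift_of_reduce (hd : (minpoly ℚ_[2] T).natDegree = 3) {A' B' : ZMod (2 ^ 3)}
    (hA : PadicInt.toZModPow 3 A = A') (hB : PadicInt.toZModPow 3 B = B') {n k : ℕ}
    (hk : 3 ≤ k + n) (hn : ∀ x : CubicAlgebra A' B', 2 ^ k * x ^ n = 0 → 4 * x = 0)
    {c : CubicAlgebra A B} (hc : ∀ x, x ^ n ≠ reduce hA hB c) {y : Ω} (hy : y ∈ ℚ_[2]⟮T⟯) :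
    y ^ n ≠ lift T hT c := fun h => by
  obtain ⟨x, rfl⟩ :=
    exists_pow_eq_of_pow_eq_lift hd (fun _ => two_dvd_of_two_pow_dvd_pow hA hB hk hn) hy h
  exact hc _ (map_pow _ x n).symm

end IntegralClosure

end CubicAlgebra

section SquareClass

variable {Ω : Type*} [Field Ω] [Algebra ℚ_[2] Ω] [Algebra ℤ_[2] Ω] [IsScalarTower ℤ_[2] ℚ_[2] Ω]
  {A B : ℤ_[2]} {T : Ω} {hT : T ^ 3 = algebraMap ℤ_[2] Ω A * T + algebraMap ℤ_[2] Ω B}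

theorem natDegree_minpoly_eq_three_of_forall_cube_ne {A' B' : ZMod (2 ^ 3)}
    (hA : PadicInt.toZModPow 3 A = A') (hB : PadicInt.toZModPow 3 B = B')
    (h : ∀ t : ZMod (2 ^ 3), t ^ 3 ≠ A' * t + B')
    (hT : T ^ 3 = algebraMap ℤ_[2] Ω A * T + algebraMap ℤ_[2] Ω B) :
    (minpoly ℚ_[2] T).natDegree = 3 := by
  have hdeg : (X ^ 3 - C A * X - C B).natDegree = 3 := by compute_degree!
  have hmonic : (X ^ 3 - C A * X - C B).Monic := by monicity!
  have hirr : Irreducible (X ^ 3 - C A * X - C B) := by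
    rw [hmonic.irreducible_iff_roots_eq_zero_of_degree_le_three (by omega) (by omega),
      Multiset.eq_zero_iff_forall_notMem]
    intro t ht
    refine h (PadicInt.toZModPow 3 t) ?_
    have := congr_arg (PadicInt.toZModPow 3) (isRoot_of_mem_roots ht)
    simp only [eval_sub, eval_pow, eval_mul, eval_X, eval_C, map_sub, map_pow, map_mul, hA, hB,
      map_zero] at this
    linear_combination this
  rw [← minpoly.eq_of_irreducible_of_monic
    ((hmonic.irreducible_iff_irreducible_map_fraction_map (K := ℚ_[2])).1 hirr) (x := T) (by
      simp [hT, IsScalarTower.algebraMap_apply ℤ_[2] ℚ_[2] Ω]) (hmonic.map _),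
    hmonic.natDegree_map, hdeg]

namespace CubicAlgebra

theorem adjoin_lift_eq (hd : (minpoly ℚ_[2] T).natDegree = 3) {L : IntermediateField ℚ_[2] Ω}
    {x : CubicAlgebra A B} (h : IsResolventRoot L (lift T hT x)) :
    ℚ_[2]⟮lift T hT x⟯ = ℚ_[2]⟮T⟯ :=
  adjoin_eq_of_natDegree_minpoly_eq_three hd h.natDegree_minpoly (lift_mem_adjoin x)

variable [IsAlgClosed Ω]

theorem isResolventRoot_lift_of_mul_sq (hd : (minpoly ℚ_[2] T).natDegree = 3)
    {L : IntermediateField ℚ_[2] Ω} {x t : CubicAlgebra A B}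
    (h : IsResolventRoot L (lift T hT (x * t ^ 2))) : IsResolventRoot L (lift T hT x) := by
  have ht : lift T hT t ≠ 0 := fun ht => h.ne_zero (by rw [map_mul, map_pow, ht]; ring)
  have := h.mul_sq (s := (lift T hT t)⁻¹) (by
    rw [adjoin_lift_eq hd h]
    exact inv_mem (lift_mem_adjoin t)) (inv_ne_zero ht)
  rwa [map_mul, map_pow, inv_pow, mul_inv_cancel_right₀ (pow_ne_zero 2 ht)] at this

theorem exists_isResolventRoot_lift_of_mem_adjoin (hd : (minpoly ℚ_[2] T).natDegree = 3)
    {ϖ : CubicAlgebra A B} {m : ℕ} (hϖ : ∀ x : CubicAlgebra A B, 2 ∣ norm x → ϖ ∣ x)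
    (hm : norm ϖ = 2 ^ m) (hodd : Odd m) {L : IntermediateField ℚ_[2] Ω} {z : Ω}
    (h : IsResolventRoot L z) (hz : z ∈ ℚ_[2]⟮T⟯) :
    ∃ u : CubicAlgebra A B, PadicInt.toZModPow 3 (norm u) = 1 ∧
      IsResolventRoot L (lift T hT u) := by
  have : CharZero Ω := charZero_of_injective_algebraMap (algebraMap ℚ_[2] Ω).injective
  obtain ⟨k, x, hx⟩ := exists_two_pow_mul_eq_lift (hT := hT) hz
  have h' : IsResolventRoot L (lift T hT (2 ^ k * x)) := by
    have := h.mul_sq (s := 2 ^ k) (pow_mem (ofNat_mem _ 2) k) (pow_ne_zero k two_ne_zero)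
    rwa [map_mul, map_pow, map_ofNat, ← hx, show 2 ^ k * (2 ^ k * z) = z * (2 ^ k) ^ 2 by ring]
  obtain ⟨q, hq⟩ := exists_norm_eq_sq_of_isResolventRoot h'
  obtain ⟨u, t, hut, hu⟩ := exists_eq_mul_sq_of_norm_eq_sq hϖ hm hodd
    (norm_ne_zero_of_isResolventRoot h') hq
  exact ⟨u, hu, isResolventRoot_lift_of_mul_sq hd (hut ▸ h')⟩

theorem isResolventRoot_lift_of_reduce_mul_sq_eq (hd : (minpoly ℚ_[2] T).natDegree = 3)
    {A' B' : ZMod (2 ^ 3)} (hA : PadicInt.toZModPow 3 A = A') (hB : PadicInt.toZModPow 3 B = B')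
    {L : IntermediateField ℚ_[2] Ω} {u v : CubicAlgebra A B} (h : IsResolventRoot L (lift T hT u))
    (hv : IsUnit (reduce hA hB v)) {t : CubicAlgebra A' B'}
    (huv : reduce hA hB u * t ^ 2 = reduce hA hB v) : IsResolventRoot L (lift T hT v) := by
  obtain ⟨y, rfl⟩ := exists_eq_mul_sq_of_reduce_mul_sq_eq hA hB hv huv
  exact isResolventRoot_lift_of_mul_sq hd h

theorem exists_isResolventRoot_lift_of_forall_sq_ne (hd : (minpoly ℚ_[2] T).natDegree = 3)
    {A' B' : ZMod (2 ^ 3)} (hA : PadicInt.toZModPow 3 A = A') (hB : PadicInt.toZModPow 3 B = B')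
    (hn : ∀ x : CubicAlgebra A' B', 2 ^ 1 * x ^ 2 = 0 → 4 * x = 0) {x : CubicAlgebra A B}
    (hx : x.x₂ ≠ 0 ∨ x.x₃ ≠ 0) {q : ℤ_[2]} (hq : norm x = q ^ 2)
    (hne : ∀ t, t ^ 2 ≠ reduce hA hB x) :
    ∃ L : IntermediateField ℚ_[2] Ω, IsResolventRoot L (lift T hT x) := by
  have hdx := natDegree_minpoly_lift (hT := hT) hd hx
  refine exists_isResolventRoot_lift hdx hq fun w hw => ?_
  rw [adjoin_eq_of_natDegree_minpoly_eq_three hd hdx (lift_mem_adjoin x)] at hw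
  exact pow_ne_lift_of_reduce hd hA hB (by omega) hn hne hw

end CubicAlgebra

end SquareClass

namespace CubicAlgebra

/-- Representatives in `R[∛2]` of the nontrivial square classes of units of square norm, for
`R = ℤ_[2]` and `R = ZMod 8`. -/
def pureUnit {R : Type*} [CommRing R] : Fin 3 → CubicAlgebra (0 : R) 2 :=
  ![⟨-1, 1, 0⟩, ⟨1, 2, -1⟩, ⟨3, 1, 2⟩]

/-- The three roots of `X³ - 3X + 1` in the cyclic cubic algebra that it defines. -/
def cyclicRoot {R : Type*} [CommRing R] : Fin 3 → CubicAlgebra (3 : R) (-1) :=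
  ![⟨0, 1, 0⟩, ⟨-2, 0, 1⟩, ⟨2, -1, -1⟩]

theorem cyclicRoot_cube {R : Type*} [CommRing R] (i : Fin 3) :
    (cyclicRoot i : CubicAlgebra (3 : R) (-1)) ^ 3 = algebraMap R _ 3 * cyclicRoot i - 1 := by
  fin_cases i <;> ext <;> simp [cyclicRoot, pow_succ, mul_def, sub_def, one_def,
    algebraMap_def] <;> ring

theorem norm_pureUnit (i : Fin 3) : ∃ q : ℤ_[2], norm (pureUnit i) = q ^ 2 := by
  refine ⟨![1, 5, 5] i, ?_⟩
  fin_cases i <;> norm_num [norm_apply, pureUnit]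

theorem norm_pureRoot : norm (root : CubicAlgebra (0 : ℤ_[2]) 2) = 2 ^ 1 := by
  simp [norm_apply, root]

theorem norm_neg_cyclicRoot_zero :
    norm (-cyclicRoot 0 : CubicAlgebra (3 : ℤ_[2]) (-1)) = 1 ^ 2 := by
  norm_num [norm_apply, cyclicRoot, neg_def]

theorem root_dvd_of_two_dvd_norm {x : CubicAlgebra (0 : ℤ_[2]) 2} (hx : 2 ∣ norm x) :
    root ∣ x := by
  have h : 2 ∣ x.x₁ ^ 3 := by
    refine (dvd_add_left (a := 2) (b := x.x₁ ^ 3) ⟨x.x₂ ^ 3 + 2 * x.x₃ ^ 3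
      - 3 * x.x₁ * x.x₂ * x.x₃, rfl⟩).1 ?_
    convert hx using 1
    rw [norm_apply]
    ring
  obtain ⟨c, hc⟩ := irreducible_two.prime.dvd_of_dvd_pow h
  exact ⟨⟨x.x₂, x.x₃, c⟩, by ext <;> simp [root, mul_def, hc]⟩

/-! ### Computations modulo `8` -/

theorem pure_four_mul_eq_zero : ∀ x : CubicAlgebra (0 : ZMod (2 ^ 3)) 2,
    2 ^ 1 * x ^ 2 = 0 → 4 * x = 0 := by
  decide +kernel

theorem pure_exists_mul_sq_eq : ∀ u : CubicAlgebra (0 : ZMod (2 ^ 3)) 2, norm u = 1 →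
    ∃ b c, u * ⟨1, b, c⟩ ^ 2 = 1 ∨ ∃ i, u * ⟨1, b, c⟩ ^ 2 = pureUnit i := by
  decide +kernel

theorem sq_ne_pureUnit : ∀ (t : CubicAlgebra (0 : ZMod (2 ^ 3)) 2) (i : Fin 3),
    t ^ 2 ≠ pureUnit i := by
  decide +kernel

theorem sq_ne_pureUnit_mul_pureUnit : ∀ (t : CubicAlgebra (0 : ZMod (2 ^ 3)) 2) (i j : Fin 3),
    i ≠ j → t ^ 2 ≠ pureUnit i * pureUnit j := by
  decide +kernel

theorem isUnit_pureUnit (i : Fin 3) :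
    IsUnit (pureUnit i : CubicAlgebra (0 : ZMod (2 ^ 3)) 2) := by
  rw [isUnit_iff_isUnit_norm]
  revert i
  decide +kernel

theorem sq_ne_neg_three : ∀ t : CubicAlgebra (0 : ZMod (2 ^ 3)) 2, t ^ 2 ≠ -3 := by
  decide +kernel

theorem cyclic_four_mul_eq_zero : ∀ x : CubicAlgebra (3 : ZMod (2 ^ 3)) (-1),
    2 ^ 1 * x ^ 2 = 0 → 4 * x = 0 := by
  decide +kernel

theorem cyclic_four_mul_eq_zero_of_cube : ∀ x : CubicAlgebra (3 : ZMod (2 ^ 3)) (-1),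
    2 ^ 0 * x ^ 3 = 0 → 4 * x = 0 := by
  decide +kernel

theorem cyclic_four_mul_eq_zero_of_norm : ∀ x : CubicAlgebra (3 : ZMod (2 ^ 3)) (-1),
    4 * norm x = 0 → 4 * x = 0 := by
  decide +kernel

theorem cyclic_four_mul_pow_seven : ∀ u : CubicAlgebra (3 : ZMod (2 ^ 3)) (-1), norm u = 1 →
    4 * u ^ 7 = 4 := by
  decide +kernel

theorem cyclic_exists_mul_sq_eq_of_four_mul_eq : ∀ u : CubicAlgebra (3 : ZMod (2 ^ 3)) (-1),
    4 * u = 4 → norm u = 1 → ∃ t, u * t ^ 2 = 1 ∨ ∃ i, u * t ^ 2 = -cyclicRoot i := by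
  decide +kernel

-- The residue field has `8` elements, so `u * (u ^ 3) ^ 2 = u ^ 7` is `1` modulo `2`.
theorem cyclic_exists_mul_sq_eq {u : CubicAlgebra (3 : ZMod (2 ^ 3)) (-1)} (hu : norm u = 1) :
    ∃ t, u * t ^ 2 = 1 ∨ ∃ i, u * t ^ 2 = -cyclicRoot i := by
  obtain ⟨t, ht⟩ := cyclic_exists_mul_sq_eq_of_four_mul_eq (u ^ 7) (cyclic_four_mul_pow_seven u hu)
    (by rw [map_pow, hu, one_pow])
  exact ⟨u ^ 3 * t, by rwa [show u * (u ^ 3 * t) ^ 2 = u ^ 7 * t ^ 2 by ring]⟩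

theorem isUnit_neg_cyclicRoot (i : Fin 3) :
    IsUnit (-cyclicRoot i : CubicAlgebra (3 : ZMod (2 ^ 3)) (-1)) := by
  rw [isUnit_iff_isUnit_norm]
  revert i
  decide +kernel

theorem sq_ne_neg_cyclicRoot_zero : ∀ t : CubicAlgebra (3 : ZMod (2 ^ 3)) (-1),
    t ^ 2 ≠ -cyclicRoot 0 := by
  decide +kernel

theorem cyclic_cube_ne_two : ∀ t : CubicAlgebra (3 : ZMod (2 ^ 3)) (-1), t ^ 3 ≠ 2 := by
  decide +kernel

theorem toZModPow_neg_one : PadicInt.toZModPow (p := 2) 3 (-1) = -1 := by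
  rw [map_neg, map_one]

theorem reduce_pureUnit (i : Fin 3) :
    reduce (map_zero _) (map_ofNat _ 2) (pureUnit i) = pureUnit i := by
  fin_cases i <;> simp [reduce, map_apply, pureUnit, map_ofNat]

theorem reduce_cyclicRoot (i : Fin 3) :
    reduce (map_ofNat _ 3) toZModPow_neg_one (cyclicRoot i) = cyclicRoot i := by
  fin_cases i <;> simp [reduce, map_apply, cyclicRoot, map_ofNat]

theorem two_dvd_of_two_dvd_norm {x : CubicAlgebra (3 : ℤ_[2]) (-1)} (hx : 2 ∣ norm x) :
    2 ∣ x := by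
  rw [two_dvd_iff_four_mul_reduce_eq_zero (map_ofNat _ 3) toZModPow_neg_one]
  refine cyclic_four_mul_eq_zero_of_norm _ ?_
  obtain ⟨a, ha⟩ := hx
  rw [norm_reduce, ha, map_mul, map_ofNat, ← mul_assoc, show (4 * 2 : ZMod (2 ^ 3)) = 0 by decide,
    zero_mul]

theorem norm_two {R : Type*} [CommRing R] {A B : R} : norm (2 : CubicAlgebra A B) = 2 ^ 3 := by
  rw [← map_ofNat (algebraMap R (CubicAlgebra A B)) 2, norm_algebraMap]

end CubicAlgebra

/-! ### The four classes -/

section Classification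

open CubicAlgebra

variable {Ω : Type*} [Field Ω] [Algebra ℤ_[2] Ω] {P S : Ω}

theorem pure_relation (hP : P ^ 3 = 2) :
    P ^ 3 = algebraMap ℤ_[2] Ω 0 * P + algebraMap ℤ_[2] Ω 2 := by
  rw [hP, map_zero, zero_mul, zero_add, map_ofNat]

theorem cyclic_relation (hS : S ^ 3 = 3 * S - 1) :
    S ^ 3 = algebraMap ℤ_[2] Ω 3 * S + algebraMap ℤ_[2] Ω (-1) := by
  rw [hS, map_neg, map_one, map_ofNat, sub_eq_add_neg]

/-- The resolvent roots that represent the four classes of primitive quartic extensions: `-S` for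
a root `S` of `X³ - 3X + 1`, and three units of `ℚ_[2]⟮P⟯` for a cube root `P` of `2`. -/
noncomputable def representative (hP : P ^ 3 = 2) (S : Ω) : Fin 4 → Ω :=
  Fin.cons (-S) fun i => lift P (pure_relation hP) (pureUnit i)

theorem representative_zero (hP : P ^ 3 = 2) (S : Ω) : representative hP S 0 = -S := rfl

theorem lift_neg_cyclicRoot_zero (hS : S ^ 3 = 3 * S - 1) :
    lift S (cyclic_relation hS) (-cyclicRoot 0) = -S := by
  simp [lift_apply, cyclicRoot, neg_def]

variable [Algebra ℚ_[2] Ω] [IsScalarTower ℤ_[2] ℚ_[2] Ω]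

theorem natDegree_minpoly_of_cube_eq_two (hP : P ^ 3 = 2) : (minpoly ℚ_[2] P).natDegree = 3 :=
  natDegree_minpoly_eq_three_of_forall_cube_ne (map_zero _) (map_ofNat _ 2) (by decide)
    (pure_relation hP)

theorem natDegree_minpoly_of_cube_eq_three_mul_sub_one (hS : S ^ 3 = 3 * S - 1) :
    (minpoly ℚ_[2] S).natDegree = 3 :=
  natDegree_minpoly_eq_three_of_forall_cube_ne (map_ofNat _ 3) toZModPow_neg_one (by decide)
    (cyclic_relation hS)

theorem cube_ne_two_of_mem_adjoin (hS : S ^ 3 = 3 * S - 1) {y : Ω} (hy : y ∈ ℚ_[2]⟮S⟯) :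
    y ^ 3 ≠ 2 := by
  have := pow_ne_lift_of_reduce (natDegree_minpoly_of_cube_eq_three_mul_sub_one hS)
    (map_ofNat _ 3) toZModPow_neg_one (hT := cyclic_relation hS) (n := 3) (k := 0) le_rfl
    cyclic_four_mul_eq_zero_of_cube (c := 2) (fun x => by
      rw [map_ofNat]
      exact cyclic_cube_ne_two x) hy
  rwa [map_ofNat] at this

theorem sq_ne_lift_of_mem_adjoin (hP : P ^ 3 = 2) {c : CubicAlgebra (0 : ℤ_[2]) 2}
    (hc : ∀ x, x ^ 2 ≠ reduce (map_zero _) (map_ofNat _ 2) c) {y : Ω} (hy : y ∈ ℚ_[2]⟮P⟯) :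
    y ^ 2 ≠ lift P (pure_relation hP) c :=
  pow_ne_lift_of_reduce (natDegree_minpoly_of_cube_eq_two hP) (map_zero _) (map_ofNat _ 2)
    (k := 1) le_rfl pure_four_mul_eq_zero hc hy

theorem eq_of_cube_eq_two_of_mem_adjoin (hP : P ^ 3 = 2) {y : Ω} (hy : y ∈ ℚ_[2]⟮P⟯)
    (hy₃ : y ^ 3 = 2) : y = P := by
  have : CharZero Ω := charZero_of_injective_algebraMap (algebraMap ℚ_[2] Ω).injective
  have hP₀ : P ≠ 0 := by
    rintro rfl
    norm_num at hP
  by_contra hne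
  have hquad : y ^ 2 + y * P + P ^ 2 = 0 :=
    mul_left_cancel₀ (sub_ne_zero.2 hne) (by linear_combination hy₃ - hP)
  have hmem : (2 * y + P) / P ∈ ℚ_[2]⟮P⟯ :=
    div_mem (add_mem (mul_mem (ofNat_mem _ 2) hy) (mem_adjoin_simple_self _ P))
      (mem_adjoin_simple_self _ P)
  refine sq_ne_lift_of_mem_adjoin hP (c := -3) (fun x => ?_) hmem ?_
  · rw [map_neg, map_ofNat]
    exact sq_ne_neg_three x
  · rw [map_neg, map_ofNat]
    field_simp
    linear_combination 4 * hquad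

variable [IsAlgClosed Ω]

theorem exists_isResolventRoot_pureUnit (hP : P ^ 3 = 2) (i : Fin 3) :
    ∃ L : IntermediateField ℚ_[2] Ω,
      IsResolventRoot L (lift P (pure_relation hP) (pureUnit i)) := by
  obtain ⟨q, hq⟩ := norm_pureUnit i
  refine exists_isResolventRoot_lift_of_forall_sq_ne (natDegree_minpoly_of_cube_eq_two hP)
    (map_zero _) (map_ofNat _ 2) pure_four_mul_eq_zero ?_ hq fun t => ?_
  · fin_cases i <;> simp [pureUnit]
  · rw [reduce_pureUnit]
    exact sq_ne_pureUnit t i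

theorem exists_isResolventRoot_neg_cyclicRoot (hS : S ^ 3 = 3 * S - 1) :
    ∃ L : IntermediateField ℚ_[2] Ω,
      IsResolventRoot L (lift S (cyclic_relation hS) (-cyclicRoot 0)) := by
  refine exists_isResolventRoot_lift_of_forall_sq_ne
    (natDegree_minpoly_of_cube_eq_three_mul_sub_one hS) (map_ofNat _ 3) toZModPow_neg_one
    cyclic_four_mul_eq_zero ?_ norm_neg_cyclicRoot_zero fun t => ?_
  · simp [cyclicRoot, neg_def]
  · rw [map_neg, reduce_cyclicRoot]
    exact sq_ne_neg_cyclicRoot_zero t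

theorem exists_isResolventRoot_pureUnit_of_mem_adjoin (hP : P ^ 3 = 2)
    {L : IntermediateField ℚ_[2] Ω} {z : Ω} (h : IsResolventRoot L z) (hz : z ∈ ℚ_[2]⟮P⟯) :
    ∃ i, IsResolventRoot L (lift P (pure_relation hP) (pureUnit i)) := by
  have hd := natDegree_minpoly_of_cube_eq_two hP
  obtain ⟨u, hu, hLu⟩ := exists_isResolventRoot_lift_of_mem_adjoin hd
    (hT := pure_relation hP) (fun _ => root_dvd_of_two_dvd_norm) norm_pureRoot odd_one h hz
  obtain ⟨b, c, ht | ⟨i, ht⟩⟩ := pure_exists_mul_sq_eq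
    (reduce (map_zero _) (map_ofNat _ 2) u) (by rw [norm_reduce, hu])
  · refine absurd (map_one _) (isResolventRoot_lift_of_reduce_mul_sq_eq hd _ _ hLu (v := 1) ?_
      (ht.trans (map_one _).symm)).ne_one
    rw [map_one]
    exact isUnit_one
  · exact ⟨i, isResolventRoot_lift_of_reduce_mul_sq_eq hd _ _ hLu
      (by rw [reduce_pureUnit]; exact isUnit_pureUnit i) (ht.trans (reduce_pureUnit i).symm)⟩

theorem exists_isResolventRoot_neg_cyclicRoot_of_mem_adjoin (hS : S ^ 3 = 3 * S - 1)
    {L : IntermediateField ℚ_[2] Ω} {z : Ω} (h : IsResolventRoot L z) (hz : z ∈ ℚ_[2]⟮S⟯) :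
    ∃ i, IsResolventRoot L (lift S (cyclic_relation hS) (-cyclicRoot i)) := by
  have hd := natDegree_minpoly_of_cube_eq_three_mul_sub_one hS
  obtain ⟨u, hu, hLu⟩ := exists_isResolventRoot_lift_of_mem_adjoin hd
    (hT := cyclic_relation hS) (fun _ => two_dvd_of_two_dvd_norm) norm_two (by decide) h hz
  obtain ⟨t, ht | ⟨i, ht⟩⟩ := cyclic_exists_mul_sq_eq
    (u := reduce (map_ofNat _ 3) toZModPow_neg_one u) (by rw [norm_reduce, hu])
  · refine absurd (map_one _) (isResolventRoot_lift_of_reduce_mul_sq_eq hd _ _ hLu (v := 1) ?_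
      (ht.trans (map_one _).symm)).ne_one
    rw [map_one]
    exact isUnit_one
  · have hred : reduce (map_ofNat _ 3) toZModPow_neg_one (-cyclicRoot i) = -cyclicRoot i := by
      rw [map_neg, reduce_cyclicRoot]
    exact ⟨i, isResolventRoot_lift_of_reduce_mul_sq_eq hd _ _ hLu
      (by rw [hred]; exact isUnit_neg_cyclicRoot i) (ht.trans hred.symm)⟩

theorem exists_isResolventRoot_representative (hP : P ^ 3 = 2) (hS : S ^ 3 = 3 * S - 1)
    (i : Fin 4) :
    ∃ L : IntermediateField ℚ_[2] Ω, IsResolventRoot L (representative hP S i) := by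
  cases i using Fin.cases with
  | zero =>
    rw [representative_zero, ← lift_neg_cyclicRoot_zero hS]
    exact exists_isResolventRoot_neg_cyclicRoot hS
  | succ i => exact exists_isResolventRoot_pureUnit hP i

variable [Normal ℚ_[2] Ω]

theorem exists_representative_isResolventRoot (hP : P ^ 3 = 2) (hS : S ^ 3 = 3 * S - 1)
    {L : IntermediateField ℚ_[2] Ω} {z : Ω} (h : IsResolventRoot L z) :
    ∃ i, IsResolventRoot L (representative hP S i) := by
  obtain ⟨w, hw, hw₃⟩ := exists_mem_adjoin_of_natDegree_minpoly_eq_three h.natDegree_minpoly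
  have hz (hd : (minpoly ℚ_[2] w).natDegree = 3) : z ∈ ℚ_[2]⟮w⟯ := by
    rw [adjoin_eq_of_natDegree_minpoly_eq_three h.natDegree_minpoly hd hw]
    exact mem_adjoin_simple_self _ z
  rcases hw₃ with hw₃ | hw₃
  · have hd := natDegree_minpoly_of_cube_eq_two hw₃
    obtain ⟨i, hi⟩ := exists_isResolventRoot_pureUnit_of_mem_adjoin hw₃ h (hz hd)
    exact ⟨i.succ, hi.of_isConjRoot
      (isConjRoot_lift hd (natDegree_minpoly_of_cube_eq_two hP) (pureUnit i))⟩
  · have hd := natDegree_minpoly_of_cube_eq_three_mul_sub_one hw₃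
    obtain ⟨i, hi⟩ := exists_isResolventRoot_neg_cyclicRoot_of_mem_adjoin hw₃ h (hz hd)
    have hT : lift w (cyclic_relation hw₃) (cyclicRoot i) ^ 3
        = 3 * lift w (cyclic_relation hw₃) (cyclicRoot i) - 1 := by
      rw [← map_pow, cyclicRoot_cube, map_sub, map_mul, map_one, AlgHom.commutes, map_ofNat]
    rw [map_neg, ← lift_neg_cyclicRoot_zero hT] at hi
    refine ⟨0, ?_⟩
    rw [representative_zero, ← lift_neg_cyclicRoot_zero hS]
    exact hi.of_isConjRoot (isConjRoot_lift
      (natDegree_minpoly_of_cube_eq_three_mul_sub_one hT)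
      (natDegree_minpoly_of_cube_eq_three_mul_sub_one hS) (-cyclicRoot 0))

theorem eq_of_isResolventRoot_pureUnit (hP : P ^ 3 = 2) {L : IntermediateField ℚ_[2] Ω}
    {i j : Fin 3} (hi : IsResolventRoot L (lift P (pure_relation hP) (pureUnit i)))
    (hj : IsResolventRoot L (lift P (pure_relation hP) (pureUnit j))) : i = j := by
  have hd := natDegree_minpoly_of_cube_eq_two hP
  obtain ⟨T, hT, hmem, s, hs, h⟩ := exists_lift_eq_lift_mul_sq hd hd hi hj
  have hT' : T ^ 3 = 2 := by rw [hT, map_zero, zero_mul, zero_add, map_ofNat]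
  obtain rfl := eq_of_cube_eq_two_of_mem_adjoin hT' hmem hP
  by_contra hne
  refine sq_ne_lift_of_mem_adjoin hP (c := pureUnit i * pureUnit j) (fun x => ?_)
    (mul_mem (lift_mem_adjoin (hT := hT) (pureUnit i)) hs) ?_
  · rw [map_mul, reduce_pureUnit, reduce_pureUnit]
    exact sq_ne_pureUnit_mul_pureUnit x i j hne
  · rw [map_mul, h]
    ring

theorem not_isResolventRoot_neg_and_pureUnit (hP : P ^ 3 = 2) (hS : S ^ 3 = 3 * S - 1)
    {L : IntermediateField ℚ_[2] Ω} (h : IsResolventRoot L (-S)) (i : Fin 3) :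
    ¬ IsResolventRoot L (lift P (pure_relation hP) (pureUnit i)) := fun hi => by
  rw [← lift_neg_cyclicRoot_zero hS] at h
  obtain ⟨T, hT, hmem, -⟩ := exists_lift_eq_lift_mul_sq
    (natDegree_minpoly_of_cube_eq_three_mul_sub_one hS) (natDegree_minpoly_of_cube_eq_two hP) h hi
  refine cube_ne_two_of_mem_adjoin (S := T) ?_ hmem hP
  rw [hT, map_neg, map_one, map_ofNat, sub_eq_add_neg]

theorem eq_of_isResolventRoot_representative (hP : P ^ 3 = 2) (hS : S ^ 3 = 3 * S - 1)
    {L : IntermediateField ℚ_[2] Ω} {i j : Fin 4}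
    (hi : IsResolventRoot L (representative hP S i))
    (hj : IsResolventRoot L (representative hP S j)) : i = j := by
  cases i using Fin.cases with
  | zero =>
    cases j using Fin.cases with
    | zero => rfl
    | succ j => exact absurd hj (not_isResolventRoot_neg_and_pureUnit hP hS hi j)
  | succ i =>
    cases j using Fin.cases with
    | zero => exact absurd hi (not_isResolventRoot_neg_and_pureUnit hP hS hj i)
    | succ j => exact congr_arg Fin.succ (eq_of_isResolventRoot_pureUnit hP hi hj)

theorem exists_cube_eq_three_mul_sub_one (k : Type*) [Field k] [IsAlgClosed k] :
    ∃ S : k, S ^ 3 = 3 * S - 1 := by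
  have hdeg : (X ^ 3 - 3 * X + 1 : k[X]).degree = 3 := by compute_degree!
  obtain ⟨S, hS⟩ := IsAlgClosed.exists_root _ (by rw [hdeg]; decide)
  refine ⟨S, ?_⟩
  simp only [IsRoot.def, eval_add, eval_sub, eval_pow, eval_mul, eval_X, eval_ofNat,
    eval_one] at hS
  linear_combination hS

end Classification

end PrimitiveQuartic

/-- The set of `ℚ_2`-isomorphism classes of primitive quartic extensions of `ℚ_2` inside
a fixed algebraic closure `Ω` has exactly four elements: there are four pairwise
non-isomorphic primitive quartic extensions such that every primitive quartic extension
is isomorphic (as a `ℚ_2`-algebra) to one of them. -/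
theorem stmt_16 (Ω : Type) [Field Ω] [Algebra ℚ_[2] Ω] [IsAlgClosure ℚ_[2] Ω] :
    ∃ E : Fin 4 → IntermediateField ℚ_[2] Ω,
      (∀ i, Module.finrank ℚ_[2] ↥(E i) = 4 ∧
        ∀ F : IntermediateField ℚ_[2] Ω, F ≤ E i → F = ⊥ ∨ F = E i) ∧
      (∀ i j, i ≠ j → IsEmpty (↥(E i) ≃ₐ[ℚ_[2]] ↥(E j))) ∧
      (∀ F : IntermediateField ℚ_[2] Ω, Module.finrank ℚ_[2] ↥F = 4 →
        (∀ F' : IntermediateField ℚ_[2] Ω, F' ≤ F → F' = ⊥ ∨ F' = F) →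
        ∃ i, Nonempty (↥F ≃ₐ[ℚ_[2]] ↥(E i))) := by
  let _ : Algebra ℤ_[2] Ω := ((algebraMap ℚ_[2] Ω).comp (algebraMap ℤ_[2] ℚ_[2])).toAlgebra
  have : IsScalarTower ℤ_[2] ℚ_[2] Ω := .of_algebraMap_eq fun _ => rfl
  have : IsAlgClosed Ω := IsAlgClosure.isAlgClosed ℚ_[2]
  obtain ⟨P, hP⟩ : ∃ P : Ω, P ^ 3 = 2 := IsAlgClosed.exists_pow_nat_eq 2 three_pos
  obtain ⟨S, hS⟩ := PrimitiveQuartic.exists_cube_eq_three_mul_sub_one Ω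
  choose E hE using PrimitiveQuartic.exists_isResolventRoot_representative hP hS
  refine ⟨E, fun i => ⟨(hE i).finrank_eq_four, fun F => (hE i).isAtom.le_iff.1⟩,
    fun i j hij => ⟨fun e => hij ?_⟩, fun F hF hprim => ?_⟩
  · exact PrimitiveQuartic.eq_of_isResolventRoot_representative hP hS ((hE i).congr e) (hE j)
  · have hbot : F ≠ ⊥ := by
      rintro rfl
      simp at hF
    obtain ⟨z, hz⟩ := PrimitiveQuartic.exists_isResolventRoot
      ⟨hbot, fun F' hF' => (hprim F' hF'.le).resolve_right hF'.ne⟩ hF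
    obtain ⟨i, hi⟩ := PrimitiveQuartic.exists_representative_isResolventRoot hP hS hz
    exact ⟨i, hi.nonempty_algEquiv (hE i)⟩
end

section
/- Fix a prime p and an integer n ≥ 1, set e_n = p^n − 1, and fix an algebraic closure Ω of ℚ_p. Let K ⊆ Ω be a finite extension of ℚ_p, let K_n = K(ζ) where ζ ∈ Ω is a primitive e_n-th root of unity, and let L_n ⊆ Ω be the field generated over K_n by all x ∈ Ω with x^{e_n} ∈ K_n. Let V be an F_p-vector space of dimension n and ρ : Gal(Ω / K) → GL(V) a group homomorphism that is continuous for the Krull topology on Gal(Ω / K) and the discrete topology on GL(V), and such that V has no ρ-stable subspaces other than 0 and V. Then the subgroup Gal(Ω / L_n) is contained in the kernel of ρ; that is, ρ factors through Gal(L_n / K). -/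
/-!
Replacing `Ω` by a finite Galois extension `M / K` through which `ρ` factors, the Galois group is
the decomposition group of the valuation ring of `M`. Its wild inertia group is a normal `p`-group,
so it acts trivially on the irreducible representation `V`, and the inertia group acts through the
tame character `σ ↦ (x ↦ σ x / x mod 𝔪)`, in particular through an abelian group. By Clifford
theory, a normal subgroup with abelian image is killed by `e = |V| - 1`: `V` is a sum of simple
modules over the commutative algebra it generates, all of the same cardinality `q`, on each of which
it acts through the units of a field with `q` elements, and `q - 1 ∣ e` since `|V|` is a power of
`q`.

If `g` fixes `ζ`, it acts on the residue field as `r ↦ r ^ m` with `m ≡ 1` modulo `e`, hence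
conjugates the tame character to its `m`-th power, and so `ρ g` commutes with the image of
inertia. As the quotient by inertia is cyclic, the stabilizer of `ζ` has abelian image, and by
Clifford theory again this image has exponent dividing `e`. By Kummer theory the corresponding
extension of `K(ζ)` is generated by `e`-th roots of elements of `K(ζ)`.
-/

section SimpleModules

variable {A V : Type*} [CommRing A] [AddCommGroup V] [Module A V]

theorem pow_natCard_sub_one_smul_of_isSimpleModule [IsSimpleModule A V] [Finite V] {a : A}
    (ha : IsUnit a) (v : V) : a ^ (Nat.card V - 1) • v = v := by
  obtain ⟨I, hI, ⟨φ⟩⟩ := isSimpleModule_iff_quot_maximal.mp ‹IsSimpleModule A V›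
  let := Ideal.Quotient.field I
  have : Finite (A ⧸ I) := .of_equiv V φ.toEquiv
  let := Fintype.ofFinite (A ⧸ I)
  have hpow : Ideal.Quotient.mk I (a ^ (Nat.card V - 1)) = 1 := by
    rw [map_pow, Nat.card_congr φ.toEquiv, Nat.card_eq_fintype_card]
    exact FiniteField.pow_card_sub_one_eq_one _ (ha.map (Ideal.Quotient.mk I)).ne_zero
  apply φ.injective
  rw [map_smul, Algebra.smul_def, Ideal.Quotient.algebraMap_eq, hpow, one_mul]

theorem natCard_sup_of_disjoint {U W : Submodule A V} (h : Disjoint U W) :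
    Nat.card ↥(U ⊔ W) = Nat.card U * Nat.card W := by
  have hinj : Function.Injective (U.subtype.coprod W.subtype) := by
    rw [← LinearMap.ker_eq_bot, LinearMap.ker_coprod_of_disjoint_range _ _ (by simpa using h)]
    simp only [Submodule.ker_subtype, Submodule.prod_bot]
  rw [Submodule.sup_eq_range, ← Nat.card_prod]
  exact (Nat.card_congr (LinearEquiv.ofInjective _ hinj).toEquiv).symm

theorem exists_natCard_sSup_eq_pow [Finite V] {q : ℕ} {S : Set (Submodule A V)}
    (hS : ∀ U ∈ S, IsAtom U ∧ Nat.card U = q) : ∃ k, Nat.card ↥(sSup S) = q ^ k := by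
  induction S, S.toFinite using Set.Finite.induction_on with
  | empty => exact ⟨0, by simp⟩
  | @insert U T _ _ ih =>
    obtain ⟨k, hk⟩ := ih fun W hW ↦ hS W (Set.mem_insert_of_mem U hW)
    obtain ⟨hatom, hcard⟩ := hS U (Set.mem_insert U T)
    rw [sSup_insert]
    by_cases hdisj : Disjoint U (sSup T)
    · exact ⟨k + 1, by rw [natCard_sup_of_disjoint hdisj, hcard, hk, pow_succ']⟩
    · exact ⟨k, by rw [sup_eq_right.mpr (hatom.not_disjoint_iff_le.mp hdisj), hk]⟩

theorem pow_natCard_sub_one_smul_of_sSup_isAtom_eq_top [Finite V] {q : ℕ}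
    {S : Set (Submodule A V)} (hS : ∀ U ∈ S, IsAtom U ∧ Nat.card U = q) (htop : sSup S = ⊤)
    {a : A} (ha : IsUnit a) (v : V) : a ^ (Nat.card V - 1) • v = v := by
  obtain ⟨k, hk⟩ := exists_natCard_sSup_eq_pow hS
  rw [htop, Nat.card_congr Submodule.topEquiv.toEquiv] at hk
  obtain ⟨m, hm⟩ : q - 1 ∣ Nat.card V - 1 := hk ▸ Nat.sub_one_dvd_pow_sub_one q k
  have hle : sSup S ≤ LinearMap.eqLocus (LinearMap.lsmul A V (a ^ (q - 1))) LinearMap.id := by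
    refine sSup_le fun U hU u hu ↦ ?_
    obtain ⟨hatom, rfl⟩ := hS U hU
    have := isSimpleModule_iff_isAtom.mpr hatom
    exact congrArg Subtype.val (pow_natCard_sub_one_smul_of_isSimpleModule ha (⟨u, hu⟩ : U))
  have hfix : a ^ (q - 1) • v = v := hle (htop ▸ Submodule.mem_top)
  rw [hm, pow_mul, ← smul_iterate_apply]
  exact Function.iterate_fixed hfix m

end SimpleModules

section Irreducible

variable {𝕜 G H V : Type*} [Field 𝕜] [Group G] [Group H] [AddCommGroup V] [Module 𝕜 V]
  {ρ : Representation 𝕜 G V}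

theorem isIrreducible_iff_forall_stable : ρ.IsIrreducible ↔ Nontrivial V ∧
    ∀ W : Submodule 𝕜 V, (∀ g, ∀ v ∈ W, ρ g v ∈ W) → W = ⊥ ∨ W = ⊤ := by
  constructor
  · intro h
    refine ⟨?_, fun W hW ↦ ?_⟩
    · rw [← Submodule.nontrivial_iff 𝕜]
      exact Subrepresentation.toSubmodule_injective (ρ := ρ) |>.nontrivial
    · exact (eq_bot_or_eq_top (⟨W, hW⟩ : Subrepresentation ρ)).imp
        (congrArg Subrepresentation.toSubmodule) (congrArg Subrepresentation.toSubmodule)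
  · rintro ⟨_, h⟩
    exact
      { exists_pair_ne := ⟨⊥, ⊤, fun e : (⊥ : Subrepresentation ρ) = ⊤ ↦
          bot_ne_top (α := Submodule 𝕜 V) (congrArg Subrepresentation.toSubmodule e)⟩
        eq_bot_or_eq_top := fun W ↦ (h W.toSubmodule W.apply_mem_toSubmodule).imp
          (fun e ↦ Subrepresentation.toSubmodule_injective e)
          (fun e ↦ Subrepresentation.toSubmodule_injective e) }

theorem isIrreducible_of_comp (f : H →* G) (h : Representation.IsIrreducible (ρ.comp f)) :
    ρ.IsIrreducible := by
  rw [isIrreducible_iff_forall_stable] at h ⊢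
  exact ⟨h.1, fun W hW ↦ h.2 W fun g ↦ hW (f g)⟩

end Irreducible

section Clifford

variable {𝕜 G V : Type*} [Field 𝕜] [Group G] [AddCommGroup V] [Module 𝕜 V]
  (ρ : Representation 𝕜 G V) (N : Subgroup G)

/-- The subalgebra of `End V` generated by the operators `ρ h` with `h ∈ N`; its submodules are the
`N`-stable subspaces of `V`. -/
abbrev subgroupAlgebra : Subalgebra 𝕜 (Module.End 𝕜 V) := Algebra.adjoin 𝕜 (ρ '' N)

variable {ρ N}

theorem conj_mem_subgroupAlgebra [N.Normal] (g : G) {a : Module.End 𝕜 V}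
    (ha : a ∈ subgroupAlgebra ρ N) : ρ g * a * ρ g⁻¹ ∈ subgroupAlgebra ρ N := by
  have hinv : ρ g⁻¹ * ρ g = 1 := by rw [← map_mul, inv_mul_cancel, map_one]
  induction ha using Algebra.adjoin_induction with
  | mem x hx =>
    obtain ⟨h, hh, rfl⟩ := hx
    rw [← map_mul, ← map_mul]
    exact Algebra.subset_adjoin ⟨_, ‹N.Normal›.conj_mem h hh g, rfl⟩
  | algebraMap r =>
    rw [← Algebra.commutes, mul_assoc, ← map_mul, mul_inv_cancel, map_one, mul_one]
    exact algebraMap_mem _ r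
  | add x y _ _ hx hy => simpa only [mul_add, add_mul] using add_mem hx hy
  | mul x y _ _ hx hy =>
    convert mul_mem hx hy using 1
    calc ρ g * (x * y) * ρ g⁻¹ = ρ g * x * 1 * y * ρ g⁻¹ := by simp only [mul_assoc, one_mul]
      _ = _ := by simp only [← hinv, mul_assoc]

/-- The translate `g W` of an `N`-stable subspace `W`, again `N`-stable because `N` is normal. -/
def translateSubmodule [N.Normal] (g : G) (W : Submodule (subgroupAlgebra ρ N) V) :
    Submodule (subgroupAlgebra ρ N) V where
  carrier := ρ g⁻¹ ⁻¹' W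
  add_mem' hv hw := by simpa only [Set.mem_preimage, SetLike.mem_coe, map_add] using add_mem hv hw
  zero_mem' := by simp only [Set.mem_preimage, map_zero, SetLike.mem_coe, zero_mem]
  smul_mem' a v hv := by
    have := W.smul_mem ⟨_, conj_mem_subgroupAlgebra g⁻¹ a.2⟩ hv
    simpa [Subalgebra.smul_def] using this

variable [N.Normal]

theorem mem_translateSubmodule {g : G} {W : Submodule (subgroupAlgebra ρ N) V} {v : V} :
    v ∈ translateSubmodule g W ↔ ρ g⁻¹ v ∈ W := Iff.rfl

theorem translateSubmodule_inv_translateSubmodule (g : G) (W : Submodule (subgroupAlgebra ρ N) V) :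
    translateSubmodule g⁻¹ (translateSubmodule g W) = W := by
  ext v
  simp [mem_translateSubmodule]

/-- Translation by `g` as an automorphism of the lattice of `N`-stable subspaces. -/
def translateOrderIso (g : G) :
    Submodule (subgroupAlgebra ρ N) V ≃o Submodule (subgroupAlgebra ρ N) V where
  toFun := translateSubmodule g
  invFun := translateSubmodule g⁻¹
  left_inv := translateSubmodule_inv_translateSubmodule g
  right_inv W := by simpa only [inv_inv] using translateSubmodule_inv_translateSubmodule g⁻¹ W
  map_rel_iff' {U W} := by
    refine ⟨fun h v hv ↦ ?_, fun h v hv ↦ h hv⟩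
    have := @h (ρ g v) (by simpa [mem_translateSubmodule] using hv)
    simpa [mem_translateSubmodule] using this

theorem natCard_translateSubmodule (g : G) (W : Submodule (subgroupAlgebra ρ N) V) :
    Nat.card (translateSubmodule g W) = Nat.card W :=
  Nat.card_congr
    { toFun := fun v ↦ ⟨ρ g⁻¹ v, v.2⟩
      invFun := fun v ↦ ⟨ρ g v, by simp [mem_translateSubmodule]⟩
      left_inv := fun v ↦ by simp
      right_inv := fun v ↦ by simp }

-- `G` permutes the simple `N`-submodules of a given cardinality, so their sum is `G`-stable.
theorem exists_sSup_isAtom_eq_top [Finite V] (hρ : ρ.IsIrreducible) :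
    ∃ q, sSup {U : Submodule (subgroupAlgebra ρ N) V | IsAtom U ∧ Nat.card U = q} = ⊤ := by
  obtain ⟨_, hstable⟩ := isIrreducible_iff_forall_stable.mp hρ
  obtain ⟨U, hU⟩ := IsAtomic.exists_atom (Submodule (subgroupAlgebra ρ N) V)
  refine ⟨Nat.card U, ?_⟩
  set S := {W : Submodule (subgroupAlgebra ρ N) V | IsAtom W ∧ Nat.card W = Nat.card U}
  have hS : sSup S ≠ ⊥ := fun h ↦ hU.1 (le_bot_iff.mp (h ▸ le_sSup ⟨hU, rfl⟩))
  have htranslate (g : G) : sSup S ≤ translateSubmodule g⁻¹ (sSup S) := by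
    refine sSup_le fun W hW v hv ↦ ?_
    have hgW : translateSubmodule g W ∈ S :=
      ⟨((translateOrderIso g).isAtom_iff W).mpr hW.1, (natCard_translateSubmodule g W).trans hW.2⟩
    rw [mem_translateSubmodule, inv_inv]
    exact le_sSup hgW (by simpa [mem_translateSubmodule] using hv)
  have hdichotomy := hstable ((sSup S).restrictScalars 𝕜) fun g v hv ↦ by
    simpa only [Submodule.restrictScalars_mem, mem_translateSubmodule, inv_inv]
      using htranslate g hv
  rw [Submodule.restrictScalars_eq_bot_iff, Submodule.restrictScalars_eq_top_iff] at hdichotomy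
  exact hdichotomy.resolve_left hS

open scoped IsMulCommutative in
theorem map_pow_natCard_sub_one_eq_one [Finite V] (hρ : ρ.IsIrreducible)
    (hcomm : ∀ a ∈ N, ∀ b ∈ N, Commute (ρ a) (ρ b)) {h : G} (hh : h ∈ N) :
    ρ h ^ (Nat.card V - 1) = 1 := by
  have : IsMulCommutative (subgroupAlgebra ρ N) := Algebra.isMulCommutative_adjoin 𝕜 (by
    rintro _ ⟨a, ha, rfl⟩ _ ⟨b, hb, rfl⟩
    exact hcomm a ha b hb)
  obtain ⟨q, hq⟩ := exists_sSup_isAtom_eq_top (N := N) hρ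
  let op (g : N) : subgroupAlgebra ρ N := ⟨ρ g, Algebra.subset_adjoin ⟨g, g.2, rfl⟩⟩
  have hunit : IsUnit (op ⟨h, hh⟩) :=
    .of_mul_eq_one (op ⟨h, hh⟩⁻¹) (Subtype.ext <| by simp [op, ← map_mul])
  ext v
  exact pow_natCard_sub_one_smul_of_sSup_isAtom_eq_top (fun U hU ↦ hU) hq hunit v

end Clifford

section NormalPSubgroup

variable {𝕜 G V : Type*} [Field 𝕜] [Group G] [AddCommGroup V] [Module 𝕜 V]
  {ρ : Representation 𝕜 G V}

theorem prime_dvd_natCard_of_charP (𝕜 : Type*) [Field 𝕜] {V : Type*} [AddCommGroup V] [Module 𝕜 V]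
    [Nontrivial V] (p : ℕ) [Fact p.Prime] [CharP 𝕜 p] : p ∣ Nat.card V := by
  obtain ⟨v, hv⟩ := exists_ne (0 : V)
  have hpv : p • v = 0 := by rw [← Nat.cast_smul_eq_nsmul 𝕜, CharP.cast_eq_zero, zero_smul]
  exact addOrderOf_eq_prime hpv hv ▸ addOrderOf_dvd_natCard v

theorem natCast_natCard_sub_one_ne_zero (p : ℕ) [Fact p.Prime] (𝕜 k V : Type*) [Field 𝕜]
    [CharP 𝕜 p] [Field k] [CharP k p] [AddCommGroup V] [Module 𝕜 V] [Finite V] [Nontrivial V] :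
    ((Nat.card V - 1 : ℕ) : k) ≠ 0 := by
  rw [Nat.cast_sub Nat.card_pos,
    (CharP.cast_eq_zero_iff k p _).mpr (prime_dvd_natCard_of_charP 𝕜 p), Nat.cast_one, zero_sub]
  exact neg_ne_zero.mpr one_ne_zero

theorem map_eq_one_of_isPGroup_of_normal [Finite V] (hρ : ρ.IsIrreducible) (p : ℕ) [Fact p.Prime]
    [CharP 𝕜 p] {P : Subgroup G} [P.Normal] (hP : IsPGroup p P) {σ : G} (hσ : σ ∈ P) :
    ρ σ = 1 := by
  obtain ⟨_, hstable⟩ := isIrreducible_iff_forall_stable.mp hρ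
  let := MulAction.compHom V (ρ.comp P.subtype)
  obtain ⟨v, hv, hv0⟩ := hP.exists_fixed_point_of_prime_dvd_card_of_fixed_point V
    (prime_dvd_natCard_of_charP 𝕜 p) (a := 0) fun τ ↦ map_zero (ρ τ)
  have htop : Representation.invariants (ρ.comp P.subtype) = ⊤ :=
    (hstable _ fun g v hv ↦ Representation.le_comap_invariants ρ P g hv).resolve_left
      fun hbot ↦ hv0 ((Submodule.mem_bot 𝕜).mp (hbot ▸ fun τ ↦ hv τ)).symm
  ext v
  exact (htop ▸ Submodule.mem_top : v ∈ Representation.invariants (ρ.comp P.subtype)) ⟨σ, hσ⟩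

end NormalPSubgroup

theorem commute_map_of_isCyclic {G C H : Type*} [Group G] [Group C] [IsCyclic C] [Monoid H]
    (f : G →* H) (r : G →* C) (hker : ∀ x ∈ r.ker, ∀ y, Commute (f x) (f y)) (x y : G) :
    Commute (f x) (f y) := by
  obtain ⟨⟨_, g, rfl⟩, hg⟩ := IsCyclic.exists_generator (α := r.range)
  have exists_eq_zpow_mul (x : G) : ∃ i : ℤ, ∃ z ∈ r.ker, x = g ^ i * z := by
    obtain ⟨i, hi⟩ := Subgroup.mem_zpowers_iff.mp (hg ⟨r x, x, rfl⟩)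
    have hri : r g ^ i = r x := congrArg Subtype.val hi
    exact ⟨i, (g ^ i)⁻¹ * x, by simp [MonoidHom.mem_ker, hri], by group⟩
  obtain ⟨i, z, hz, rfl⟩ := exists_eq_zpow_mul x
  obtain ⟨j, w, hw, rfl⟩ := exists_eq_zpow_mul y
  have hzpow : Commute (f (g ^ i)) (f (g ^ j)) := ((Commute.refl g).zpow_zpow i j).map f
  rw [map_mul]
  refine .mul_left ?_ (hker z hz _)
  rw [map_mul]
  exact hzpow.mul_right (hker w hw _).symm

section FiniteFieldAut

theorem exists_forall_ringAut_eq_pow (k : Type*) [Field k] [Finite k] (p : ℕ) [Fact p.Prime]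
    [CharP k p] (f : RingAut k) : ∃ a : ℕ, ∀ x, f x = x ^ p ^ a := by
  let := ZMod.algebra k p
  let φ : Gal(k/ZMod p) := AlgEquiv.ofRingEquiv (f := f) fun x ↦
    congrFun (congrArg DFunLike.coe (Subsingleton.elim
      ((f : k →+* k).comp (algebraMap (ZMod p) k)) (algebraMap (ZMod p) k))) x
  obtain ⟨a, ha⟩ := (FiniteField.bijective_frobeniusAlgEquivOfAlgebraic_pow (ZMod p) k).2 φ
  refine ⟨a, fun x ↦ ?_⟩
  calc f x = (FiniteField.frobeniusAlgEquivOfAlgebraic (ZMod p) k ^ (a : ℕ)) x :=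
        (DFunLike.congr_fun ha x).symm
    _ = x ^ p ^ (a : ℕ) := by
        simp only [AlgEquiv.coe_pow, FiniteField.coe_frobeniusAlgEquivOfAlgebraic_iterate,
          ZMod.card]

theorem isCyclic_ringAut (k : Type*) [Field k] [Finite k] : IsCyclic (RingAut k) := by
  obtain ⟨p, _⟩ := CharP.exists k
  have : Fact p.Prime := ⟨CharP.char_is_prime k p⟩
  refine ⟨frobeniusEquiv k p, fun f ↦ ?_⟩
  obtain ⟨a, ha⟩ := exists_forall_ringAut_eq_pow k p f
  exact ⟨a, RingEquiv.ext fun x ↦ by simp [ha, iterate_frobenius]⟩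

end FiniteFieldAut

section RootsOfUnity

variable {G R S : Type*} [CommRing R] [IsDomain R] [CommRing S] [IsDomain S] {n : ℕ} {ζ : R}

theorem isPrimitiveRoot_map_of_natCast_ne_zero (hζ : IsPrimitiveRoot ζ n) (f : R →+* S)
    (hn : (n : S) ≠ 0) : IsPrimitiveRoot (f ζ) n := by
  have : NeZero (n : S) := ⟨hn⟩
  have : NeZero (n : R) := ⟨fun h ↦ hn <| by rw [← map_natCast f, h, map_zero]⟩
  rw [← Polynomial.isRoot_cyclotomic_iff] at hζ ⊢
  rw [← Polynomial.map_cyclotomic n f]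
  exact hζ.map

theorem normal_stabilizer_of_isPrimitiveRoot [Group G] [MulSemiringAction G R] [NeZero n]
    (hζ : IsPrimitiveRoot ζ n) : (MulAction.stabilizer G ζ).Normal where
  conj_mem σ hσ g := by
    obtain ⟨i, -, hi⟩ := hζ.eq_pow_of_pow_eq_one (ξ := g⁻¹ • ζ) <| by
      rw [← smul_pow', hζ.pow_eq_one, smul_one]
    rw [MulAction.mem_stabilizer_iff] at hσ ⊢
    rw [mul_smul, mul_smul, ← hi, smul_pow', hσ, hi, smul_inv_smul]

end RootsOfUnity

section Ramification

open IsLocalRing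

variable {K M : Type*} [Field K] [Field M] [Algebra K M] {A : ValuationSubring M}

theorem mem_inertiaSubgroup_iff {σ : A.decompositionSubgroup K} :
    σ ∈ A.inertiaSubgroup K ↔ ∀ r : ResidueField A, σ • r = r :=
  RingEquiv.ext_iff

theorem valuation_smul_le_valuation_smul (g : A.decompositionSubgroup K) {x y : M}
    (h : A.valuation x ≤ A.valuation y) : A.valuation (g • x) ≤ A.valuation (g • y) := by
  rcases eq_or_ne y 0 with rfl | hy
  · simp_all
  have hy' : 0 < A.valuation (g • y) :=
    zero_lt_iff.mpr <| (map_ne_zero _).mpr <| (smul_ne_zero_iff_ne g).mpr hy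
  rw [← div_le_one₀ (by simpa [zero_lt_iff] using hy), ← map_div₀, A.valuation_le_one_iff] at h
  rw [← div_le_one₀ hy', ← map_div₀, A.valuation_le_one_iff, ← smul_div₀']
  exact (A.subMulAction K).smul_mem g h

theorem val_smul_div (g : A.decompositionSubgroup K) (x y : Mˣ) :
    ((g • x / y : Mˣ) : M) = g • (x : M) / y :=
  Units.val_div_eq_div_val (g • x) y

variable [Finite (A.decompositionSubgroup K)]

-- A monotone self-map of finite order of a linear order is the identity.
theorem valuation_smul (g : A.decompositionSubgroup K) (x : M) :
    A.valuation (g • x) = A.valuation x := by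
  suffices hle : ∀ (h : A.decompositionSubgroup K) (y : M),
      A.valuation (h • y) ≤ A.valuation y from
    (hle g x).antisymm <| by simpa only [inv_smul_smul] using hle g⁻¹ (g • x)
  intro h y
  by_contra! hlt
  have hiterate (i : ℕ) : A.valuation (h • y) ≤ A.valuation (h ^ (i + 1) • y) := by
    induction i with
    | zero => rw [zero_add, pow_one]
    | succ i ih =>
      rw [pow_succ' h (i + 1), mul_smul]
      exact valuation_smul_le_valuation_smul h (hlt.le.trans ih)
  have hperiod := hiterate (orderOf h - 1)
  rw [Nat.sub_add_cancel (orderOf_pos h), pow_orderOf_eq_one, one_smul] at hperiod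
  exact hperiod.not_gt hlt

theorem smul_div_self_mem_unitGroup (g : A.decompositionSubgroup K) (x : Mˣ) :
    g • x / x ∈ A.unitGroup := by
  rw [A.mem_unitGroup_iff, val_smul_div, map_div₀, valuation_smul,
    div_self ((map_ne_zero _).mpr x.ne_zero)]

/-- The crossed homomorphism `g ↦ (x ↦ g x / x mod 𝔪)` of the decomposition group, whose
restriction to the inertia group is the tame character. -/
noncomputable def tameCocycle (g : A.decompositionSubgroup K) : Mˣ →* (ResidueField A)ˣ :=
  A.unitGroupToResidueFieldUnits.comp
    { toFun := fun x ↦ ⟨g • x / x, smul_div_self_mem_unitGroup g x⟩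
      map_one' := Subtype.ext <| by simp
      map_mul' := fun x y ↦ Subtype.ext <| by simp [smul_mul', mul_div_mul_comm] }

theorem tameCocycle_eq_residue {g : A.decompositionSubgroup K} {x : Mˣ} {a : A}
    (ha : g • (x : M) = a * (x : M)) : (tameCocycle g x : ResidueField A) = residue A a := by
  refine congrArg (residue A) (Subtype.ext ?_)
  change ((g • x / x : Mˣ) : M) = a
  rw [val_smul_div, ha, mul_div_cancel_right₀ _ x.ne_zero]

theorem exists_tameCocycle_eq_residue (g : A.decompositionSubgroup K) (x : Mˣ) :
    ∃ a : A, g • (x : M) = a * x ∧ (tameCocycle g x : ResidueField A) = residue A a := by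
  refine ⟨A.unitGroupMulEquiv ⟨g • x / x, smul_div_self_mem_unitGroup g x⟩, ?_, rfl⟩
  rw [A.coe_unitGroupMulEquiv_apply, val_smul_div, div_mul_cancel₀ _ x.ne_zero]

theorem tameCocycle_mul (g h : A.decompositionSubgroup K) (x : Mˣ) :
    (tameCocycle (g * h) x : ResidueField A) =
      g • (tameCocycle h x : ResidueField A) * tameCocycle g x := by
  obtain ⟨a, ha, hga⟩ := exists_tameCocycle_eq_residue g x
  obtain ⟨b, hb, hhb⟩ := exists_tameCocycle_eq_residue h x
  rw [hga, hhb, ← ResidueField.residue_smul, ← map_mul]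
  apply tameCocycle_eq_residue
  calc (g * h) • (x : M) = g • (b : M) * g • (x : M) := by rw [mul_smul, hb, smul_mul']
    _ = ((g • b * a : A) : M) * x := by rw [ha, ← mul_assoc]; rfl

/-- The tame character `σ ↦ (x ↦ σ x / x mod 𝔪)` of the inertia group. -/
noncomputable def tameCharacter :
    A.inertiaSubgroup K →* (Mˣ →* (ResidueField A)ˣ) where
  toFun σ := tameCocycle σ.1
  map_one' := by
    ext x
    rw [tameCocycle_eq_residue (a := 1) (by simp)]
    simp
  map_mul' σ τ := by
    ext x
    change (tameCocycle (σ.1 * τ.1) x : ResidueField A) =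
      tameCocycle σ.1 x * tameCocycle τ.1 x
    rw [tameCocycle_mul, mem_inertiaSubgroup_iff.mp σ.2, mul_comm]

theorem tameCocycle_conj (g : A.decompositionSubgroup K) {σ : A.decompositionSubgroup K}
    (hσ : σ ∈ A.inertiaSubgroup K) (x : Mˣ) :
    (tameCocycle (g * σ * g⁻¹) x : ResidueField A) = g • (tameCocycle σ x : ResidueField A) := by
  have hinv : g • (tameCocycle g⁻¹ x : ResidueField A) * tameCocycle g x = 1 := by
    rw [← tameCocycle_mul, mul_inv_cancel, tameCocycle_eq_residue (a := 1) (by simp), map_one]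
  rw [mul_assoc, tameCocycle_mul, tameCocycle_mul, mem_inertiaSubgroup_iff.mp hσ, smul_mul',
    mul_right_comm, hinv, one_mul]

variable (K A) in
/-- The wild inertia group: the kernel of the tame character, as a subgroup of the decomposition
group. -/
noncomputable def wildInertia : Subgroup (A.decompositionSubgroup K) :=
  tameCharacter.ker.map (A.inertiaSubgroup K).subtype

theorem mem_wildInertia_iff {σ : A.decompositionSubgroup K} :
    σ ∈ wildInertia K A ↔
      σ ∈ A.inertiaSubgroup K ∧ ∀ x, (tameCocycle σ x : ResidueField A) = 1 := by
  constructor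
  · rintro ⟨τ, hτ, rfl⟩
    exact ⟨τ.2, fun x ↦ congrArg Units.val (DFunLike.congr_fun hτ x)⟩
  · rintro ⟨hσ, hσ'⟩
    exact ⟨⟨σ, hσ⟩, MonoidHom.ext fun x ↦ Units.ext (hσ' x), rfl⟩

instance normal_inertiaSubgroup : (A.inertiaSubgroup K).Normal :=
  MonoidHom.normal_ker _

instance normal_wildInertia : (wildInertia K A).Normal where
  conj_mem σ hσ g := by
    rw [mem_wildInertia_iff] at hσ ⊢
    refine ⟨normal_inertiaSubgroup.conj_mem σ hσ.1 g, fun x ↦ ?_⟩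
    rw [tameCocycle_conj g hσ.1, hσ.2, smul_one]

-- The telescoping sum of the `σ ^ i • (σ • x - x)` is `0`, but modulo `𝔪` it is
-- `m • (σ • x - x)`.
theorem eq_one_of_mem_wildInertia_of_pow_eq_one {σ : A.decompositionSubgroup K}
    (hσ : σ ∈ wildInertia K A) {m : ℕ} (hm : (m : ResidueField A) ≠ 0) (hσm : σ ^ m = 1) :
    σ = 1 := by
  refine FaithfulSMul.eq_of_smul_eq_smul (α := M) fun x ↦ ?_
  rw [one_smul, ← sub_eq_zero]
  by_contra hd
  let d : Mˣ := Units.mk0 _ hd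
  choose a ha hres using fun i : ℕ ↦ exists_tameCocycle_eq_residue (σ ^ i) d
  have hsum : (∑ i ∈ Finset.range m, (a i : M)) * d = 0 := by
    calc (∑ i ∈ Finset.range m, (a i : M)) * d
        = ∑ i ∈ Finset.range m, (σ ^ (i + 1) • x - σ ^ i • x) := by
          rw [Finset.sum_mul]
          refine Finset.sum_congr rfl fun i _ ↦ ?_
          rw [← ha, pow_succ, mul_smul, ← smul_sub]
          rfl
      _ = 0 := by rw [Finset.sum_range_sub (fun i ↦ σ ^ i • x), hσm, pow_zero, sub_self]
  have hsumA : ∑ i ∈ Finset.range m, a i = 0 :=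
    Subtype.ext <| by simpa [d.ne_zero] using hsum
  refine hm ?_
  calc (m : ResidueField A) = ∑ i ∈ Finset.range m, residue A (a i) := by
        simp [← hres, (mem_wildInertia_iff.mp (pow_mem hσ _)).2]
    _ = 0 := by rw [← map_sum, hsumA, map_zero]

theorem isPGroup_wildInertia (p : ℕ) [Fact p.Prime] [CharP (ResidueField A) p] :
    IsPGroup p (wildInertia K A) := by
  intro σ
  obtain ⟨k, m, hpm, hm⟩ :=
    Nat.exists_eq_pow_mul_and_not_dvd (orderOf_pos σ).ne' p (Fact.out : p.Prime).ne_one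
  refine ⟨k, Subtype.ext <|
    eq_one_of_mem_wildInertia_of_pow_eq_one (pow_mem σ.2 (p ^ k)) (m := m) ?_ ?_⟩
  · rwa [Ne, CharP.cast_eq_zero_iff (ResidueField A) p]
  · rw [SubgroupClass.coe_pow, ← pow_mul, ← hm, ← SubgroupClass.coe_pow, pow_orderOf_eq_one,
      OneMemClass.coe_one]

end Ramification

section TameRepresentations

open IsLocalRing

variable {K M : Type*} [Field K] [Field M] [Algebra K M] {A : ValuationSubring M}
  {ζ : M} {n : ℕ}

theorem exists_isPrimitiveRoot_residue (hζ : IsPrimitiveRoot ζ n)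
    (hn : (n : ResidueField A) ≠ 0) :
    ∃ a : A, (a : M) = ζ ∧ IsPrimitiveRoot (residue A a) n := by
  have hn0 : n ≠ 0 := fun h ↦ hn (by rw [h, Nat.cast_zero])
  have hζA : ζ ∈ A := (A.valuation_le_one_iff ζ).mp <| le_of_eq <|
    (pow_eq_one_iff_of_nonneg zero_le hn0).mp <| by rw [← map_pow, hζ.pow_eq_one, map_one]
  exact ⟨⟨ζ, hζA⟩, rfl, isPrimitiveRoot_map_of_natCast_ne_zero
    (IsPrimitiveRoot.of_map_of_injective (f := A.subtype) hζ Subtype.val_injective) _ hn⟩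

theorem exists_modEq_one_forall_smul_eq_pow [Finite (ResidueField A)] (hζ : IsPrimitiveRoot ζ n)
    (hn : (n : ResidueField A) ≠ 0) {g : A.decompositionSubgroup K} (hg : g • ζ = ζ) :
    ∃ q : ℕ, q ≡ 1 [MOD n] ∧ ∀ r : ResidueField A, g • r = r ^ q := by
  obtain ⟨p, _⟩ := CharP.exists (ResidueField A)
  have : Fact p.Prime := ⟨CharP.char_is_prime (ResidueField A) p⟩
  obtain ⟨i, hi⟩ : ∃ i, ∀ r : ResidueField A, g • r = r ^ p ^ i :=
    exists_forall_ringAut_eq_pow (ResidueField A) p (MulSemiringAction.toRingAut _ _ g)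
  obtain ⟨a, rfl, ha⟩ := exists_isPrimitiveRoot_residue hζ hn
  have hga : g • a = a := Subtype.ext hg
  have hfix : residue A a ^ p ^ i = residue A a ^ 1 := by
    rw [← hi, pow_one, ← ResidueField.residue_smul, hga]
  have hn0 : n ≠ 0 := fun h ↦ hn (by rw [h, Nat.cast_zero])
  rw [(ha.isOfFinOrder hn0).pow_eq_pow_iff_modEq, ← ha.eq_orderOf] at hfix
  exact ⟨p ^ i, hfix, hi⟩

variable [Finite (A.decompositionSubgroup K)] (p : ℕ) [Fact p.Prime] [CharP (ResidueField A) p]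
  {𝕜 V : Type*} [Field 𝕜] [CharP 𝕜 p] [AddCommGroup V] [Module 𝕜 V] [Finite V]
  {ρ : Representation 𝕜 (A.decompositionSubgroup K) V}

include p

theorem map_eq_map_of_tameCharacter_eq (hρ : ρ.IsIrreducible) {σ τ : A.inertiaSubgroup K}
    (h : tameCharacter σ = tameCharacter τ) : ρ σ = ρ τ := by
  have hmem : ((σ / τ : A.inertiaSubgroup K) : A.decompositionSubgroup K) ∈ wildInertia K A :=
    ⟨σ / τ, by rw [SetLike.mem_coe, MonoidHom.mem_ker, map_div, h, div_self'], rfl⟩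
  calc ρ σ = ρ (σ / τ : A.inertiaSubgroup K) * ρ τ := by
        rw [← map_mul, ← Subgroup.coe_mul, div_mul_cancel]
    _ = ρ τ := by
        rw [map_eq_one_of_isPGroup_of_normal hρ p (isPGroup_wildInertia p) hmem, one_mul]

theorem commute_map_of_mem_inertiaSubgroup (hρ : ρ.IsIrreducible)
    {σ τ : A.decompositionSubgroup K} (hσ : σ ∈ A.inertiaSubgroup K)
    (hτ : τ ∈ A.inertiaSubgroup K) : Commute (ρ σ) (ρ τ) := by
  have h := map_eq_map_of_tameCharacter_eq p hρ
    (σ := ⟨σ, hσ⟩ * ⟨τ, hτ⟩) (τ := ⟨τ, hτ⟩ * ⟨σ, hσ⟩) <| by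
      rw [map_mul, map_mul]
      exact mul_comm (G := Mˣ →* (ResidueField A)ˣ) _ _
  rwa [Subgroup.coe_mul, Subgroup.coe_mul, map_mul, map_mul] at h

variable [Finite (ResidueField A)]

theorem commute_map_of_smul_eq (hρ : ρ.IsIrreducible) (hζ : IsPrimitiveRoot ζ (Nat.card V - 1))
    {g σ : A.decompositionSubgroup K} (hg : g • ζ = ζ) (hσ : σ ∈ A.inertiaSubgroup K) :
    Commute (ρ σ) (ρ g) := by
  have ⟨_, _⟩ := isIrreducible_iff_forall_stable.mp hρ
  obtain ⟨q, hq, hgq⟩ := exists_modEq_one_forall_smul_eq_pow hζ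
    (natCast_natCard_sub_one_ne_zero p 𝕜 (ResidueField A) V) hg
  have hσe : ρ σ ^ (Nat.card V - 1) = 1 := map_pow_natCard_sub_one_eq_one hρ
    (fun _ ha _ hb ↦ commute_map_of_mem_inertiaSubgroup p hρ ha hb) hσ
  have hconj : tameCharacter ⟨g * σ * g⁻¹, normal_inertiaSubgroup.conj_mem σ hσ g⟩ =
      tameCharacter (⟨σ, hσ⟩ ^ q) := by
    ext x
    rw [map_pow]
    exact (tameCocycle_conj g hσ x).trans (hgq _)
  have hρconj : ρ (g * σ * g⁻¹) = ρ σ :=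
    calc ρ (g * σ * g⁻¹) = ρ σ ^ q := by
          rw [← map_pow]
          exact map_eq_map_of_tameCharacter_eq p hρ hconj
      _ = ρ σ := by rw [pow_eq_pow_of_modEq hq hσe, pow_one]
  calc ρ σ * ρ g = ρ (g * σ * g⁻¹) * ρ g := by rw [hρconj]
    _ = ρ g * ρ σ := by rw [← map_mul, inv_mul_cancel_right, map_mul]

theorem commute_map_of_mem_stabilizer (hρ : ρ.IsIrreducible)
    (hζ : IsPrimitiveRoot ζ (Nat.card V - 1)) {g h : A.decompositionSubgroup K}
    (hg : g • ζ = ζ) (hh : h • ζ = ζ) : Commute (ρ g) (ρ h) := by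
  let N := MulAction.stabilizer (A.decompositionSubgroup K) ζ
  let r : N →* RingAut (ResidueField A) :=
    (MulSemiringAction.toRingAut _ (ResidueField A)).comp N.subtype
  have := isCyclic_ringAut (ResidueField A)
  exact commute_map_of_isCyclic (ρ.comp N.subtype) r
    (fun x hx y ↦ commute_map_of_smul_eq p hρ hζ y.2 hx) ⟨g, hg⟩ ⟨h, hh⟩

theorem map_pow_natCard_sub_one_eq_one_of_smul_eq (hρ : ρ.IsIrreducible)
    (hζ : IsPrimitiveRoot ζ (Nat.card V - 1)) {g : A.decompositionSubgroup K} (hg : g • ζ = ζ) :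
    ρ g ^ (Nat.card V - 1) = 1 := by
  have ⟨_, _⟩ := isIrreducible_iff_forall_stable.mp hρ
  have : NeZero (Nat.card V - 1) := ⟨Nat.sub_ne_zero_of_lt Finite.one_lt_card⟩
  have := normal_stabilizer_of_isPrimitiveRoot (G := A.decompositionSubgroup K) hζ
  exact map_pow_natCard_sub_one_eq_one hρ
    (fun _ ha _ hb ↦ commute_map_of_mem_stabilizer p hρ hζ ha hb)
    (MulAction.mem_stabilizer_iff.mpr hg)

end TameRepresentations

section Kummer

theorem exists_monoidHom_units_apply_ne_one {G Γ R : Type*} [Group G] [Finite G] [Monoid Γ]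
    [CommRing R] [IsDomain R] {e : ℕ} [NeZero e] {ζ : R} (hζ : IsPrimitiveRoot ζ e) {f : G →* Γ}
    (hcomm : ∀ g h, Commute (f g) (f h)) (hexp : ∀ g, f g ^ e = 1) {σ : G} (hσ : f σ ≠ 1) :
    ∃ χ : G →* Rˣ, (∀ g, χ g ^ e = 1) ∧ χ σ ≠ 1 := by
  have hcomm_quotient (x y : G ⧸ f.ker) : x * y = y * x := by
    obtain ⟨g, rfl⟩ := QuotientGroup.mk_surjective x
    obtain ⟨h, rfl⟩ := QuotientGroup.mk_surjective y
    rw [← QuotientGroup.mk_mul, ← QuotientGroup.mk_mul, QuotientGroup.eq, MonoidHom.mem_ker,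
      map_mul, map_mul f h g, ← (hcomm g h).eq, ← map_mul, ← map_mul, inv_mul_cancel, map_one]
  let : CommGroup (G ⧸ f.ker) := { mul_comm := hcomm_quotient }
  have hpow (x : G ⧸ f.ker) : x ^ e = 1 := by
    obtain ⟨g, rfl⟩ := QuotientGroup.mk_surjective x
    rw [← QuotientGroup.mk_pow, QuotientGroup.eq_one_iff, MonoidHom.mem_ker, map_pow, hexp]
  have : HasEnoughRootsOfUnity R e := ⟨⟨ζ, hζ⟩, inferInstance⟩
  have : HasEnoughRootsOfUnity R (Monoid.exponent (G ⧸ f.ker)) :=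
    HasEnoughRootsOfUnity.of_dvd R (Monoid.exponent_dvd_of_forall_pow_eq_one hpow)
  obtain ⟨χ, hχ⟩ := CommGroup.exists_apply_ne_one_of_hasEnoughRootsOfUnity (G ⧸ f.ker) R
    (a := (σ : G ⧸ f.ker)) (by rwa [Ne, QuotientGroup.eq_one_iff])
  exact ⟨χ.comp (QuotientGroup.mk' f.ker), fun g ↦ by
    rw [MonoidHom.comp_apply, ← map_pow, hpow, map_one], hχ⟩

-- By Hilbert 90, a character `χ` of the Galois group with values in `E` is of the form
-- `g ↦ g y / y`, and then `y ^ e` is fixed by the Galois group.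
theorem map_eq_one_of_forall_pow_mem_range {E M Γ : Type*} [Field E] [Field M] [Algebra E M]
    [FiniteDimensional E M] [IsGalois E M] [Monoid Γ] {e : ℕ} [NeZero e] {ζ : E}
    (hζ : IsPrimitiveRoot ζ e) {f : Gal(M/E) →* Γ} (hcomm : ∀ g h, Commute (f g) (f h))
    (hexp : ∀ g, f g ^ e = 1) {σ : Gal(M/E)}
    (hσ : ∀ y : M, y ^ e ∈ (algebraMap E M).range → σ y = y) : f σ = 1 := by
  by_contra hne
  obtain ⟨χ, hχe, hχσ⟩ := exists_monoidHom_units_apply_ne_one hζ hcomm hexp hne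
  obtain ⟨y, hy⟩ := groupCohomology.isMulCoboundary₁_of_isMulCocycle₁_of_aut_to_units
    (fun g : Gal(M/E) ↦ Units.map (algebraMap E M : E →* M) (χ g)) <| by
    intro g h
    simp [Units.ext_iff, mul_comm]
  have hgy (g : Gal(M/E)) : g (y : M) = algebraMap E M (χ g) * y := by
    rw [← div_eq_iff y.ne_zero]
    exact (Units.val_div_eq_div_val (g • y) y).symm.trans (congrArg Units.val (hy g))
  have hfix : (y : M) ^ e ∈ (algebraMap E M).range := by
    refine (IsGalois.mem_range_algebraMap_iff_fixed _).mpr fun g ↦ ?_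
    rw [map_pow, hgy, mul_pow, ← map_pow, ← Units.val_pow_eq_pow_val, hχe, Units.val_one,
      map_one, one_mul]
  refine hχσ <| Units.ext <| (algebraMap E M).injective <| mul_right_cancel₀ y.ne_zero ?_
  rw [← hgy, hσ y hfix, Units.val_one, map_one, one_mul]

end Kummer

section TotalDecomposition

open IntermediateField IsLocalRing

variable {K M 𝕜 V : Type*} [Field K] [Field M] [Algebra K M] [FiniteDimensional K M] [Field 𝕜]
  [AddCommGroup V] [Module 𝕜 V] [Finite V] {A : ValuationSubring M} [Finite (ResidueField A)]
  (p : ℕ) [Fact p.Prime] [CharP (ResidueField A) p] [CharP 𝕜 p] {ζ : M}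
  {ρ : Representation 𝕜 Gal(M/K) V}

include p

theorem commute_map_and_map_pow_eq_one_of_decompositionSubgroup_eq_top
    (hA : A.decompositionSubgroup K = ⊤) (hρ : ρ.IsIrreducible)
    (hζ : IsPrimitiveRoot ζ (Nat.card V - 1)) {g : Gal(M/K)} (hg : g ζ = ζ) :
    (∀ h : Gal(M/K), h ζ = ζ → Commute (ρ g) (ρ h)) ∧ ρ g ^ (Nat.card V - 1) = 1 := by
  let ρD : Representation 𝕜 (A.decompositionSubgroup K) V :=
    ρ.comp (A.decompositionSubgroup K).subtype
  let toD : Gal(M/K) →* A.decompositionSubgroup K :=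
    (MonoidHom.id _).codRestrict _ fun g ↦ hA ▸ Subgroup.mem_top g
  have hρD : ρD.IsIrreducible := isIrreducible_of_comp (f := toD) hρ
  exact ⟨fun h hh ↦ commute_map_of_mem_stabilizer p hρD hζ (g := toD g) (h := toD h) hg hh,
    map_pow_natCard_sub_one_eq_one_of_smul_eq p hρD hζ (g := toD g) hg⟩

theorem map_eq_one_of_forall_pow_mem_adjoin [IsGalois K M]
    (hA : A.decompositionSubgroup K = ⊤) (hρ : ρ.IsIrreducible)
    (hζ : IsPrimitiveRoot ζ (Nat.card V - 1)) {σ : Gal(M/K)}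
    (hσ : ∀ y : M, y ^ (Nat.card V - 1) ∈ K⟮ζ⟯ → σ y = y) : ρ σ = 1 := by
  obtain ⟨_, _⟩ := isIrreducible_iff_forall_stable.mp hρ
  have : NeZero (Nat.card V - 1) := ⟨Nat.sub_ne_zero_of_lt Finite.one_lt_card⟩
  have hfix (g : Gal(M/K⟮ζ⟯)) : AlgEquiv.restrictScalarsHom K g ζ = ζ :=
    g.commutes (AdjoinSimple.gen K ζ)
  have himage (g : Gal(M/K⟮ζ⟯)) :=
    commute_map_and_map_pow_eq_one_of_decompositionSubgroup_eq_top p hA hρ hζ (hfix g)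
  have hσK : σ ∈ K⟮ζ⟯.fixingSubgroup :=
    (mem_fixingSubgroup_iff _ σ).mpr fun x hx ↦ hσ x (pow_mem hx _)
  exact map_eq_one_of_forall_pow_mem_range (E := K⟮ζ⟯) (ζ := AdjoinSimple.gen K ζ)
    (IsPrimitiveRoot.of_map_of_injective (f := algebraMap K⟮ζ⟯ M) hζ Subtype.val_injective)
    (f := ρ.comp (AlgEquiv.restrictScalarsHom K)) (fun g h ↦ (himage g).1 _ (hfix h))
    (fun g ↦ (himage g).2) (σ := fixingSubgroupEquiv K⟮ζ⟯ ⟨σ, hσK⟩)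
    (by rintro y ⟨z, hz⟩; exact hσ y (hz ▸ z.2))

end TotalDecomposition

section NormValuationSubring

open IsLocalRing NormedField
open scoped Pointwise

variable {M : Type*} [NormedField M] [IsUltrametricDist M]

theorem mem_maximalIdeal_valuationSubring_iff_norm_lt_one
    {x : (valuation (K := M)).valuationSubring} : x ∈ maximalIdeal _ ↔ ‖(x : M)‖ < 1 :=
  Valuation.mem_maximalIdeal_iff _ _

theorem finite_residueField_valuationSubring [ProperSpace M] :
    Finite (ResidueField (valuation (K := M)).valuationSubring) := by
  let A := (valuation (K := M)).valuationSubring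
  have hA : (A : Set M) = Metric.closedBall 0 1 :=
    Set.ext fun x ↦ mem_closedBall_zero_iff.symm
  have : CompactSpace A :=
    isCompact_iff_compactSpace.mp (hA ▸ isCompact_closedBall (0 : M) 1)
  have hball : ((maximalIdeal A).toAddSubgroup : Set A) = (↑) ⁻¹' Metric.ball (0 : M) 1 :=
    Set.ext fun x ↦ mem_maximalIdeal_valuationSubring_iff_norm_lt_one.trans mem_ball_zero_iff.symm
  have hopen : IsOpen ((maximalIdeal A).toAddSubgroup : Set A) :=
    hball ▸ Metric.isOpen_ball.preimage continuous_subtype_val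
  exact AddSubgroup.quotient_finite_of_isOpen _ hopen

theorem charP_residueField_valuationSubring (p : ℕ) [Fact p.Prime] (hp : ‖(p : M)‖ < 1) :
    CharP (ResidueField (valuation (K := M)).valuationSubring) p := by
  rw [CharP.charP_iff_prime_eq_zero Fact.out, ← map_natCast (residue _), residue_eq_zero_iff,
    mem_maximalIdeal_valuationSubring_iff_norm_lt_one]
  exact hp

theorem decompositionSubgroup_valuationSubring_eq_top {K : Type*} [Field K] [Algebra K M]
    (hiso : ∀ (g : Gal(M/K)) (x : M), ‖g x‖ = ‖x‖) :
    (valuation (K := M)).valuationSubring.decompositionSubgroup K = ⊤ := by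
  refine eq_top_iff.mpr fun g _ ↦ ?_
  rw [MulAction.mem_stabilizer_iff]
  ext x
  rw [ValuationSubring.mem_pointwise_smul_iff_inv_smul_mem]
  change ‖g⁻¹ x‖ ≤ 1 ↔ ‖x‖ ≤ 1
  rw [hiso]

end NormValuationSubring

section LocalFields

open IntermediateField NormedField

theorem map_eq_one_of_forall_pow_mem_adjoin_of_norm_lt_one (F : Type*) {K M 𝕜 V : Type*}
    [NontriviallyNormedField F] [IsUltrametricDist F] [ProperSpace F] [Field K] [Field M]
    [Algebra F K] [Algebra F M] [Algebra K M] [IsScalarTower F K M] [FiniteDimensional F M]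
    [IsGalois K M] (p : ℕ) [Fact p.Prime] (hp : ‖(p : F)‖ < 1) [Field 𝕜] [CharP 𝕜 p]
    [AddCommGroup V] [Module 𝕜 V] [Finite V] {ρ : Representation 𝕜 Gal(M/K) V}
    (hρ : ρ.IsIrreducible) {ζ : M} (hζ : IsPrimitiveRoot ζ (Nat.card V - 1)) {σ : Gal(M/K)}
    (hσ : ∀ y : M, y ^ (Nat.card V - 1) ∈ K⟮ζ⟯ → σ y = y) : ρ σ = 1 := by
  let := spectralNorm.normedField F M
  let := spectralNorm.normedSpace F M
  have : IsUltrametricDist M :=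
    IsUltrametricDist.isUltrametricDist_of_isNonarchimedean_norm isNonarchimedean_spectralNorm
  have : ProperSpace M := FiniteDimensional.proper F M
  have : FiniteDimensional K M := FiniteDimensional.right F K M
  have := finite_residueField_valuationSubring (M := M)
  have := charP_residueField_valuationSubring (M := M) p <| by
    rw [← map_natCast (algebraMap F M)]
    exact (spectralNorm_extends (p : F)).trans_lt hp
  exact map_eq_one_of_forall_pow_mem_adjoin p (decompositionSubgroup_valuationSubring_eq_top
    fun g x ↦ (spectralNorm_eq_of_equiv (g.restrictScalars F) x).symm) hρ hζ hσ

end LocalFields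

section AbsoluteGaloisGroup

open IntermediateField

theorem exists_normal_fixingSubgroup_le_and_mem {K Ω : Type*} [Field K] [Field Ω] [Algebra K Ω]
    [Normal K Ω] {H : Subgroup Gal(Ω/K)} (hH : IsOpen (H : Set Gal(Ω/K))) (x : Ω) :
    ∃ M : IntermediateField K Ω,
      FiniteDimensional K M ∧ Normal K M ∧ M.fixingSubgroup ≤ H ∧ x ∈ M := by
  obtain ⟨E, _, hEH⟩ := (krullTopology_mem_nhds_one_iff K Ω _).mp (hH.mem_nhds (one_mem H))
  have : FiniteDimensional K K⟮x⟯ :=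
    adjoin.finiteDimensional (Algebra.IsIntegral.isIntegral x)
  have hle := (E ⊔ K⟮x⟯).le_normalClosure
  exact ⟨normalClosure K ↥(E ⊔ K⟮x⟯) Ω, inferInstance, inferInstance,
    (fixingSubgroup_antitone (le_sup_left.trans hle)).trans hEH,
    hle (le_sup_right (a := E) (mem_adjoin_simple_self K x))⟩

theorem exists_comp_eq_of_ker_le_ker {G H P : Type*} [Group G] [Group H] [Monoid P] {g : G →* H}
    (hg : Function.Surjective g) {f : G →* P} (hgf : g.ker ≤ f.ker) :
    ∃ f' : H →* P, f'.comp g = f := by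
  let e := QuotientGroup.quotientKerEquivOfSurjective g hg
  refine ⟨(QuotientGroup.lift _ f hgf).comp e.symm.toMonoidHom, MonoidHom.ext fun x ↦ ?_⟩
  exact congrArg (QuotientGroup.lift _ f hgf) (e.symm_apply_apply (x : G ⧸ g.ker))

theorem map_eq_one_of_isOpen_ker_of_forall_pow_mem_adjoin (F : Type*) {K Ω 𝕜 V : Type*}
    [NontriviallyNormedField F] [IsUltrametricDist F] [ProperSpace F] [Field K] [Field Ω]
    [Algebra F K] [Algebra F Ω] [Algebra K Ω] [IsScalarTower F K Ω] [FiniteDimensional F K]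
    [IsGalois K Ω] (p : ℕ) [Fact p.Prime] (hp : ‖(p : F)‖ < 1) [Field 𝕜] [CharP 𝕜 p]
    [AddCommGroup V] [Module 𝕜 V] [Finite V] {ρ : Representation 𝕜 Gal(Ω/K) V}
    (hopen : IsOpen (ρ.ker : Set Gal(Ω/K))) (hρ : ρ.IsIrreducible) {ζ : Ω}
    (hζ : IsPrimitiveRoot ζ (Nat.card V - 1)) {σ : Gal(Ω/K)}
    (hσ : ∀ y : Ω, y ^ (Nat.card V - 1) ∈ K⟮ζ⟯ → σ y = y) : ρ σ = 1 := by
  obtain ⟨M, _, _, hM, hζM⟩ := exists_normal_fixingSubgroup_le_and_mem hopen ζ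
  obtain ⟨ρM, rfl⟩ := exists_comp_eq_of_ker_le_ker
    (AlgEquiv.restrictNormalHom_surjective (F := K) (K₁ := M) Ω)
    ((restrictNormalHom_ker M).trans_le hM)
  have hρM : Representation.IsIrreducible ρM := isIrreducible_of_comp _ hρ
  have : FiniteDimensional F M := .trans F K M
  have : IsGalois K M := ⟨⟩
  have hmap : K⟮(⟨ζ, hζM⟩ : M)⟯.map M.val = K⟮ζ⟯ := by
    rw [adjoin_map, Set.image_singleton, coe_val]
  refine map_eq_one_of_forall_pow_mem_adjoin_of_norm_lt_one F p hp hρM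
    (ζ := ⟨ζ, hζM⟩) (IsPrimitiveRoot.of_map_of_injective (f := algebraMap M Ω) hζ
      Subtype.val_injective) fun y hy ↦ Subtype.ext ?_
  have hyΩ : (y : Ω) ^ (Nat.card V - 1) ∈ K⟮ζ⟯ := hmap ▸ ⟨_, hy, rfl⟩
  exact (AlgEquiv.restrictNormal_commutes σ M y).trans (hσ y hyΩ)

end AbsoluteGaloisGroup

theorem stmt_17_general {F K Ω 𝕜 V : Type*} [NontriviallyNormedField F] [IsUltrametricDist F]
    [ProperSpace F] [Field K] [Field Ω] [Algebra F K] [Algebra F Ω] [Algebra K Ω]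
    [IsScalarTower F K Ω] [FiniteDimensional F K] [IsGalois K Ω] (p : ℕ) [Fact p.Prime]
    (hp : ‖(p : F)‖ < 1) [Field 𝕜] [CharP 𝕜 p] [AddCommGroup V] [Module 𝕜 V] [Finite V]
    [Nontrivial V] {ζ : Ω} (hζ : IsPrimitiveRoot ζ (Nat.card V - 1))
    {Kn : IntermediateField K Ω} (hKn : Kn = IntermediateField.adjoin K {ζ})
    {Ln : IntermediateField K Ω}
    (hLn : Ln = Kn ⊔ IntermediateField.adjoin K {x : Ω | x ^ (Nat.card V - 1) ∈ Kn})
    (ρ : Gal(Ω/K) →* LinearMap.GeneralLinearGroup 𝕜 V)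
    (hcont : @Continuous Gal(Ω/K) (LinearMap.GeneralLinearGroup 𝕜 V) inferInstance ⊥ ρ)
    (hirr : ∀ W : Submodule 𝕜 V,
      (∀ σ : Gal(Ω/K), ∀ x ∈ W, (ρ σ : V →ₗ[𝕜] V) x ∈ W) → W = ⊥ ∨ W = ⊤) :
    Ln.fixingSubgroup ≤ ρ.ker := by
  subst hKn hLn
  let ρV : Representation 𝕜 Gal(Ω/K) V := (Units.coeHom _).comp ρ
  have hker : ρV.ker = ρ.ker := ρ.ker_comp_of_injective _ Units.val_injective
  let : TopologicalSpace (LinearMap.GeneralLinearGroup 𝕜 V) := ⊥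
  have : DiscreteTopology (LinearMap.GeneralLinearGroup 𝕜 V) := ⟨rfl⟩
  have hopen : IsOpen (ρV.ker : Set Gal(Ω/K)) := hker ▸ (isOpen_discrete {1}).preimage hcont
  have hρV : ρV.IsIrreducible := isIrreducible_iff_forall_stable.mpr ⟨inferInstance, hirr⟩
  rw [← hker]
  intro σ hσ
  refine map_eq_one_of_isOpen_ker_of_forall_pow_mem_adjoin F p hp hopen hρV hζ fun y hy ↦ ?_
  exact (IntermediateField.mem_fixingSubgroup_iff _ σ).mp hσ y <|
    SetLike.le_def.mp le_sup_right (IntermediateField.subset_adjoin _ _ hy)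

/-- Every continuous (for the Krull topology on `Gal(Ω / K)` and the discrete topology on
`GL(V)`) irreducible `n`-dimensional `𝔽_p`-representation of the absolute Galois group of
a finite extension `K` of `ℚ_p` factors through `Gal(L_n / K)`, i.e. `Gal(Ω / L_n)` lies
in its kernel. -/
theorem stmt_17 (p : ℕ) [hp : Fact p.Prime] (n : ℕ) (hn : 1 ≤ n)
    (Ω : Type) [Field Ω] [Algebra ℚ_[p] Ω] [IsAlgClosure ℚ_[p] Ω]
    (K : IntermediateField ℚ_[p] Ω) [FiniteDimensional ℚ_[p] ↥K]
    (ζ : Ω) (hζ : IsPrimitiveRoot ζ (p ^ n - 1))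
    (Kn : IntermediateField ↥K Ω) (hKn : Kn = IntermediateField.adjoin ↥K {ζ})
    (Ln : IntermediateField ↥K Ω)
    (hLn : Ln = Kn ⊔ IntermediateField.adjoin ↥K {x : Ω | x ^ (p ^ n - 1) ∈ Kn})
    (V : Type) [AddCommGroup V] [Module (ZMod p) V]
    (hdim : Module.finrank (ZMod p) V = n)
    (ρ : (Ω ≃ₐ[↥K] Ω) →* LinearMap.GeneralLinearGroup (ZMod p) V)
    (hcont : @Continuous (Ω ≃ₐ[↥K] Ω) (LinearMap.GeneralLinearGroup (ZMod p) V)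
      inferInstance ⊥ ρ)
    (hirr : ∀ W : Submodule (ZMod p) V,
      (∀ σ : Ω ≃ₐ[↥K] Ω, ∀ x ∈ W, (ρ σ : V →ₗ[ZMod p] V) x ∈ W) → W = ⊥ ∨ W = ⊤) :
    Ln.fixingSubgroup ≤ ρ.ker := by
  subst hdim
  have : Module.Finite (ZMod p) V := Module.finite_of_finrank_pos hn
  have : Nontrivial V := Module.nontrivial_of_finrank_pos hn
  have : Finite V := Module.finite_of_finite (ZMod p)
  have hcard : p ^ Module.finrank (ZMod p) V = Nat.card V := by
    rw [Module.natCard_eq_pow_finrank (K := ZMod p), Nat.card_zmod]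
  rw [hcard] at hζ hLn
  exact stmt_17_general p Padic.norm_p_lt_one hζ hKn hLn ρ hcont hirr
end
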